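/- Let 𝒜 be a finite set of positive integers with at least two elements, and let F(𝒜) = {x ∈ (0,1) irrational : a_i(x) ∈ 𝒜 for all i ≥ 1}. If the Hausdorff dimension of F(𝒜) is strictly greater than 1/2, then F(𝒜) contains infinitely many numbers that are normal to every integer base q ≥ 2. In particular, there exist infinitely many numbers normal to every base q ≥ 2 all of whose continued fraction partial quotients belong to {1, 2}. -/

import Mathlib

open Filter MeasureTheory Topology
open scoped Classical ENNReal

/-- The `(n+1)`-st digit (i.e. `ε_{n+1}`, `0`-indexed by `n`) of the base-`q` expansion of `x`,
chosen as the greedy expansion (never eventually equal to `q - 1`). -/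
noncomputable def qdigit (q : ℕ) (x : ℝ) (n : ℕ) : ℕ :=
  (⌊x * (q : ℝ) ^ (n + 1)⌋).toNat % q

/-- `x` is normal to base `q`: every word `d` of length `m ≥ 1` over `{0, …, q-1}` occurs in the
base-`q` digit sequence of `x` with frequency `q^{-m}`. -/
def IsNormal (q : ℕ) (x : ℝ) : Prop :=
  ∀ m : ℕ, 0 < m → ∀ d : Fin m → ℕ, (∀ i, d i < q) →
    Tendsto
      (fun N : ℕ =>
        (((Finset.range N).filter fun n =>
          ∀ i : Fin m, qdigit q x (n + (i : ℕ)) = d i).card : ℝ) / N)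
      atTop (𝓝 (((q : ℝ) ^ m)⁻¹))

/-- The Gauss map `T x = 1/x mod 1`. -/
noncomputable def gaussMap (x : ℝ) : ℝ := Int.fract x⁻¹

/-- `cfa n x` is the partial quotient `a_{n+1}(x)` of the regular continued fraction expansion
of `x`, generated by the Gauss map: `a_1(x) = ⌊1/x⌋` and `a_{k+1}(x) = a_k (T x)`. -/
noncomputable def cfa : ℕ → ℝ → ℕ
  | 0, x => ⌊x⁻¹⌋₊
  | n + 1, x => cfa n (gaussMap x)

/-- The set `F(𝒜)` of irrationals in `(0,1)` all of whose partial quotients lie in `𝒜`. -/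
def cfRestricted (A : Set ℕ) : Set ℝ :=
  {x : ℝ | x ∈ Set.Ioo (0 : ℝ) 1 ∧ Irrational x ∧ ∀ i : ℕ, cfa i x ∈ A}

/-!
Cut the continued fraction expansion of a point of `F(𝒜)` into blocks of a fixed even length, and
use only blocks from a set `B`. The resulting points are the limit set of finitely many Möbius maps
of determinant `1`, which carries a self-similar measure `μ`, the law of a sequence of independent
uniform blocks. Dimension greater than `1/2` means that for some `σ > 0` the sums of
`q ^ (-(1 + σ))` over the denominators `q` of long blocks stay bounded below; by pigeonhole over
the scales of `q`, there is a `B` whose denominators are all of size about `X`, up to a factor `Y`,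
and which has at least `X * Y ^ 10` elements.

By self-similarity a Fourier coefficient of `μ` is the integral of an average of `exp (i t g)` over
the compositions `g` of `n` maps. Averaging over the images of `(0, 1)` under these compositions
bounds it by the mean square of that average for Lebesgue measure. There the phase difference of
two compositions is governed by the difference of the ratios of their bottom rows; these ratios are
separated, so van der Corput's estimate bounds most pairs, and the excess of `B` over `X` gives
polynomial decay of the Fourier transform. By the argument of Davenport, Erdős and LeVeque, this
makes the Weyl sums of `q ^ n * x` negligible for `μ`-almost every `x`, for every base `q` at once.
Since `μ` has no atoms, there are infinitely many such `x`.

For `𝒜 = {1, 2}` the lower bound on the sums over denominators comes from an explicit function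
that increases under the transfer operator.
-/

/-! ### Möbius maps and continuants -/

/-- Two-by-two real matrices, acting on the line by Möbius maps. -/
abbrev Mat2 := Matrix (Fin 2) (Fin 2) ℝ

/-- The Möbius action of a matrix on the real line; a zero denominator gives the junk value `0`. -/
noncomputable def moebius (g : Mat2) (y : ℝ) : ℝ := (g 0 0 * y + g 0 1) / (g 1 0 * y + g 1 1)

@[simp]
lemma moebius_one (y : ℝ) : moebius 1 y = y := by
  simp [moebius]

/-- The inequalities satisfied by a matrix of convergents `[[p', p], [q', q]]` of a continued
fraction in `[0, 1]`. They are stable under products and transposition, and make the Möbius map an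
action on `[0, 1]` whose denominator is comparable with `q`. -/
structure IsContinuant (g : Mat2) : Prop where
  nonneg₀₀ : 0 ≤ g 0 0
  nonneg₀₁ : 0 ≤ g 0 1
  nonneg₁₀ : 0 ≤ g 1 0
  one_le₁₁ : 1 ≤ g 1 1
  col_le : g 0 1 ≤ g 1 1
  row_le : g 1 0 ≤ g 1 1
  sum_row_le : g 0 0 + g 0 1 ≤ g 1 0 + g 1 1
  sum_col_le : g 0 0 + g 1 0 ≤ g 0 1 + g 1 1

namespace IsContinuant
variable {g k : Mat2} {y z : ℝ}

lemma one : IsContinuant 1 := by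
  constructor <;> simp

lemma pos₁₁ (hg : IsContinuant g) : 0 < g 1 1 := one_pos.trans_le hg.one_le₁₁

lemma transpose (hg : IsContinuant g) : IsContinuant g.transpose where
  nonneg₀₀ := hg.nonneg₀₀
  nonneg₀₁ := hg.nonneg₁₀
  nonneg₁₀ := hg.nonneg₀₁
  one_le₁₁ := hg.one_le₁₁
  col_le := hg.row_le
  row_le := hg.col_le
  sum_row_le := hg.sum_col_le
  sum_col_le := hg.sum_row_le

lemma mul (hg : IsContinuant g) (hk : IsContinuant k) : IsContinuant (g * k) := by
  have := hg.pos₁₁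
  have := hk.pos₁₁
  obtain ⟨a, b, c, d, e, f, u, v⟩ := hg
  obtain ⟨a', b', c', d', e', f', u', v'⟩ := hk
  constructor <;> simp only [Matrix.mul_apply, Fin.sum_univ_two]
  · positivity
  · positivity
  · positivity
  · nlinarith [mul_nonneg c b']
  · nlinarith [mul_nonneg (sub_nonneg.2 e) (sub_nonneg.2 e'), mul_nonneg (sub_nonneg.2 u) b']
  · nlinarith [mul_nonneg (sub_nonneg.2 f) (sub_nonneg.2 f'), mul_nonneg (sub_nonneg.2 v') c]
  · nlinarith [mul_nonneg (sub_nonneg.2 e) (sub_nonneg.2 u'),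
      mul_nonneg (sub_nonneg.2 u) (add_nonneg a' b')]
  · nlinarith [mul_nonneg (sub_nonneg.2 f') (sub_nonneg.2 v),
      mul_nonneg (sub_nonneg.2 v') (add_nonneg a c)]

lemma le_denom (hg : IsContinuant g) (hy : 0 ≤ y) : g 1 1 ≤ g 1 0 * y + g 1 1 :=
  le_add_of_nonneg_left (mul_nonneg hg.nonneg₁₀ hy)

lemma denom_pos (hg : IsContinuant g) (hy : 0 ≤ y) : 0 < g 1 0 * y + g 1 1 :=
  hg.pos₁₁.trans_le (hg.le_denom hy)

lemma denom_le (hg : IsContinuant g) (hy : 0 ≤ y) (hy1 : y ≤ 1) :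
    g 1 0 * y + g 1 1 ≤ 2 * g 1 1 := by
  linarith [mul_le_mul hg.row_le hy1 hy hg.pos₁₁.le]

lemma moebius_nonneg (hg : IsContinuant g) (hy : 0 ≤ y) : 0 ≤ moebius g y :=
  div_nonneg (add_nonneg (mul_nonneg hg.nonneg₀₀ hy) hg.nonneg₀₁) (hg.denom_pos hy).le

lemma moebius_le_one (hg : IsContinuant g) (hy : 0 ≤ y) (hy1 : y ≤ 1) : moebius g y ≤ 1 := by
  unfold moebius
  rw [div_le_one (hg.denom_pos hy)]
  nlinarith [mul_nonneg (sub_nonneg.2 hg.sum_row_le) hy,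
    mul_nonneg (sub_nonneg.2 hg.col_le) (sub_nonneg.2 hy1)]

lemma moebius_mul (hg : IsContinuant g) (hk : IsContinuant k) (hy : 0 ≤ y) :
    moebius (g * k) y = moebius g (moebius k y) := by
  have hk_pos := hk.denom_pos hy
  have hg_pos := hg.denom_pos (hk.moebius_nonneg hy)
  have hgk_pos := (hg.mul hk).denom_pos hy
  unfold moebius at *
  simp only [Matrix.mul_apply, Fin.sum_univ_two] at *
  rw [div_eq_div_iff hgk_pos.ne' hg_pos.ne']
  field_simp
  ring

lemma moebius_sub (hg : IsContinuant g) (hy : 0 ≤ y) (hz : 0 ≤ z) :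
    moebius g y - moebius g z =
      g.det * (y - z) / ((g 1 0 * y + g 1 1) * (g 1 0 * z + g 1 1)) := by
  unfold moebius
  rw [Matrix.det_fin_two, div_sub_div _ _ (hg.denom_pos hy).ne' (hg.denom_pos hz).ne']
  ring

lemma hasDerivAt_moebius (hg : IsContinuant g) (hy : 0 ≤ y) :
    HasDerivAt (moebius g) (g.det / (g 1 0 * y + g 1 1) ^ 2) y := by
  have hnum : HasDerivAt (fun y ↦ g 0 0 * y + g 0 1) (g 0 0) y := by
    simpa using ((hasDerivAt_id y).const_mul (g 0 0)).add_const (g 0 1)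
  have hden : HasDerivAt (fun y ↦ g 1 0 * y + g 1 1) (g 1 0) y := by
    simpa using ((hasDerivAt_id y).const_mul (g 1 0)).add_const (g 1 1)
  have hdet : g.det = g 0 0 * (g 1 0 * y + g 1 1) - (g 0 0 * y + g 0 1) * g 1 0 := by
    rw [Matrix.det_fin_two]
    ring
  rw [hdet]
  exact hnum.div hden (hg.denom_pos hy).ne'

end IsContinuant

section Words
variable {ι M : Type*} [Monoid M] {n : ℕ}

/-- The product `g (w 0) * g (w 1) * ⋯` along the word `w`. -/
def wordProd (g : ι → M) (w : Fin n → ι) : M := (List.ofFn fun i ↦ g (w i)).prod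

@[simp]
lemma wordProd_zero (g : ι → M) (w : Fin 0 → ι) : wordProd g w = 1 := by
  simp [wordProd]

lemma wordProd_cons (g : ι → M) (i : ι) (w : Fin n → ι) :
    wordProd g (Fin.cons i w : Fin (n + 1) → ι) = g i * wordProd g w := by
  simp [wordProd, List.ofFn_succ]

lemma wordProd_snoc (g : ι → M) (w : Fin n → ι) (i : ι) :
    wordProd g (Fin.snoc w i : Fin (n + 1) → ι) = wordProd g w * g i := by
  rw [wordProd, List.ofFn_succ', List.concat_eq_append, List.prod_append]
  simp [wordProd]

variable {E : Type*} [Fintype ι] [AddCommMonoid E]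

lemma sum_word_cons (φ : (Fin (n + 1) → ι) → E) :
    ∑ w, φ w = ∑ i, ∑ w : Fin n → ι, φ (Fin.cons i w) := by
  rw [← Fintype.sum_prod_type', ← (Fin.consEquiv (fun _ ↦ ι)).sum_comp]
  rfl

lemma sum_word_snoc (φ : (Fin (n + 1) → ι) → E) :
    ∑ w, φ w = ∑ i, ∑ w : Fin n → ι, φ (Fin.snoc w i) := by
  rw [← Fintype.sum_prod_type', ← (Fin.snocEquiv (fun _ ↦ ι)).sum_comp]
  rfl

end Words

section WordBounds
variable {ι : Type*} {g : ι → Mat2} {n : ℕ}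

lemma isContinuant_wordProd (hg : ∀ i, IsContinuant (g i)) (w : Fin n → ι) :
    IsContinuant (wordProd g w) :=
  List.prod_induction _ (fun _ _ ↦ IsContinuant.mul) .one (by simp [List.mem_ofFn, hg])

lemma pow_le_wordProd_one_one {X : ℝ} (hg : ∀ i, IsContinuant (g i)) (hX : 0 ≤ X)
    (hXg : ∀ i, X ≤ g i 1 1) (w : Fin n → ι) : X ^ n ≤ wordProd g w 1 1 := by
  induction n with
  | zero => simp
  | succ n ih =>
    rw [← Fin.cons_self_tail w, wordProd_cons, pow_succ']
    simp only [Matrix.mul_apply, Fin.sum_univ_two]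
    have hoff := mul_nonneg (hg (w 0)).nonneg₁₀ (isContinuant_wordProd hg (Fin.tail w)).nonneg₀₁
    have hdiag := mul_le_mul (hXg (w 0)) (ih (Fin.tail w)) (by positivity) (hg (w 0)).pos₁₁.le
    linarith

lemma wordProd_one_one_le_pow {Z : ℝ} (hg : ∀ i, IsContinuant (g i)) (hgZ : ∀ i, 2 * g i 1 1 ≤ Z)
    (w : Fin n → ι) : wordProd g w 1 1 ≤ Z ^ n := by
  induction n with
  | zero => simp
  | succ n ih =>
    rw [← Fin.cons_self_tail w, wordProd_cons, pow_succ']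
    simp only [Matrix.mul_apply, Fin.sum_univ_two]
    have hhead := hg (w 0)
    have htail := isContinuant_wordProd hg (Fin.tail w)
    have hoff := mul_le_mul hhead.row_le htail.col_le htail.nonneg₀₁ hhead.pos₁₁.le
    have hdiag := mul_le_mul (hgZ (w 0)) (ih (Fin.tail w)) htail.pos₁₁.le
      (by linarith [hgZ (w 0), hhead.pos₁₁])
    linarith

end WordBounds

/-- A finite system of Möbius maps with coefficients `g i`, all of determinant one and size
`X ≤ g i 1 1 ≤ X Y / 2`, with disjoint images of `(0, 1)`. Having at least `X Y ^ 10` letters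
plays the role of a dimension greater than `1 / 2`: the images have length of order `X⁻²`.
The transposed maps, which govern the ratios of consecutive denominators, take values in `[l, 1]`,
and distinct ones take `c`-separated values at points at distance at most `1 - l`. -/
structure IsSeparatedSystem {ι : Type*} [Fintype ι] (g : ι → Mat2) (X Y l c : ℝ) : Prop where
  continuant : ∀ i, IsContinuant (g i)
  det_eq_one : ∀ i, (g i).det = 1
  le_denom : ∀ i, X ≤ g i 1 1
  denom_le : ∀ i, 2 * g i 1 1 ≤ X * Y
  two_le : 2 ≤ Y
  le : Y ≤ X
  le_card : X * Y ^ 10 ≤ Fintype.card ι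
  c_pos : 0 < c
  l_le_one : l ≤ 1
  l_le : ∀ i s, 0 ≤ s → s ≤ 1 → l ≤ moebius (g i).transpose s
  separated : ∀ i j s s', i ≠ j → 0 ≤ s → s ≤ 1 → 0 ≤ s' → s' ≤ 1 → |s - s'| ≤ 1 - l →
    c ≤ |moebius (g i).transpose s - moebius (g j).transpose s'|
  disjoint : ∀ i j y y', i ≠ j → 0 < y → y < 1 → 0 < y' → y' < 1 →
    moebius (g i) y ≠ moebius (g j) y'

namespace IsSeparatedSystem
variable {ι : Type*} [Fintype ι] {g : ι → Mat2} {X Y l c : ℝ} {n : ℕ}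

lemma X_pos (S : IsSeparatedSystem g X Y l c) : 0 < X := by linarith [S.two_le, S.le]

lemma Y_pos (S : IsSeparatedSystem g X Y l c) : 0 < Y := by linarith [S.two_le]

lemma continuant_wordProd (S : IsSeparatedSystem g X Y l c) (w : Fin n → ι) :
    IsContinuant (wordProd g w) :=
  isContinuant_wordProd S.continuant w

lemma det_wordProd (S : IsSeparatedSystem g X Y l c) (w : Fin n → ι) : (wordProd g w).det = 1 :=
  List.prod_induction (fun k : Mat2 ↦ k.det = 1) (fun _ _ ↦ by simp +contextual)
    Matrix.det_one (by simp [List.mem_ofFn, S.det_eq_one])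

lemma pow_le_denom (S : IsSeparatedSystem g X Y l c) (w : Fin n → ι) :
    X ^ n ≤ wordProd g w 1 1 :=
  pow_le_wordProd_one_one S.continuant S.X_pos.le S.le_denom w

lemma denom_le_pow (S : IsSeparatedSystem g X Y l c) (w : Fin n → ι) :
    wordProd g w 1 1 ≤ (X * Y) ^ n :=
  wordProd_one_one_le_pow S.continuant S.denom_le w

end IsSeparatedSystem

/-- The ratio `q' / q` of the last two denominators of the word `w`. -/
noncomputable def denomRatio {ι : Type*} (g : ι → Mat2) {n : ℕ} (w : Fin n → ι) : ℝ :=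
  moebius (wordProd g w).transpose 0

lemma denomRatio_eq {ι : Type*} (g : ι → Mat2) {n : ℕ} (w : Fin n → ι) :
    denomRatio g w = wordProd g w 1 0 / wordProd g w 1 1 := by
  simp [denomRatio, moebius]

/-- The Riesz kernel of exponent `1 / 2` at the denominator ratios of two words. The junk value
`0⁻¹ = 0` removes the diagonal. -/
noncomputable def rieszKernel {ι : Type*} (g : ι → Mat2) {n : ℕ} (v w : Fin n → ι) : ℝ :=
  (√|denomRatio g v - denomRatio g w|)⁻¹

lemma rieszKernel_nonneg {ι : Type*} (g : ι → Mat2) {n : ℕ} (v w : Fin n → ι) :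
    0 ≤ rieszKernel g v w := by
  unfold rieszKernel
  positivity

namespace IsSeparatedSystem
variable {ι : Type*} [Fintype ι] {g : ι → Mat2} {X Y l c : ℝ} {n : ℕ} {i j : ι}

lemma denomRatio_snoc (S : IsSeparatedSystem g X Y l c) (w : Fin n → ι) (i : ι) :
    denomRatio g (Fin.snoc w i : Fin (n + 1) → ι) = moebius (g i).transpose (denomRatio g w) := by
  unfold denomRatio
  rw [wordProd_snoc, Matrix.transpose_mul,
    (S.continuant i).transpose.moebius_mul (S.continuant_wordProd w).transpose le_rfl]

lemma denomRatio_nonneg (S : IsSeparatedSystem g X Y l c) (w : Fin n → ι) : 0 ≤ denomRatio g w :=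
  (S.continuant_wordProd w).transpose.moebius_nonneg le_rfl

lemma denomRatio_le_one (S : IsSeparatedSystem g X Y l c) (w : Fin n → ι) : denomRatio g w ≤ 1 :=
  (S.continuant_wordProd w).transpose.moebius_le_one le_rfl zero_le_one

lemma abs_denomRatio_sub_le (S : IsSeparatedSystem g X Y l c) (v w : Fin n → ι) :
    |denomRatio g v - denomRatio g w| ≤ 1 - l := by
  cases n with
  | zero => simpa [Subsingleton.elim v w] using S.l_le_one
  | succ n =>
    have l_le (u : Fin (n + 1) → ι) : l ≤ denomRatio g u := by
      rw [← Fin.snoc_init_self u, S.denomRatio_snoc]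
      exact S.l_le _ _ (S.denomRatio_nonneg _) (S.denomRatio_le_one _)
    rw [abs_le]
    constructor <;> linarith [l_le v, l_le w, S.denomRatio_le_one v, S.denomRatio_le_one w]

lemma div_le_abs_denomRatio_snoc_sub (S : IsSeparatedSystem g X Y l c) (v w : Fin n → ι) (i : ι) :
    |denomRatio g v - denomRatio g w| / (X * Y) ^ 2 ≤
      |denomRatio g (Fin.snoc v i : Fin (n + 1) → ι) -
        denomRatio g (Fin.snoc w i : Fin (n + 1) → ι)| := by
  have hg := (S.continuant i).transpose
  have hv := hg.denom_pos (S.denomRatio_nonneg v)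
  have hw := hg.denom_pos (S.denomRatio_nonneg w)
  have hv_le := (hg.denom_le (S.denomRatio_nonneg v) (S.denomRatio_le_one v)).trans (S.denom_le i)
  have hw_le := (hg.denom_le (S.denomRatio_nonneg w) (S.denomRatio_le_one w)).trans (S.denom_le i)
  rw [S.denomRatio_snoc, S.denomRatio_snoc,
    hg.moebius_sub (S.denomRatio_nonneg v) (S.denomRatio_nonneg w), Matrix.det_transpose,
    S.det_eq_one, one_mul, abs_div, abs_of_pos (mul_pos hv hw), sq]
  have := mul_pos S.X_pos S.Y_pos
  gcongr

lemma le_abs_denomRatio_snoc_sub (S : IsSeparatedSystem g X Y l c) (v w : Fin n → ι)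
    (hij : i ≠ j) :
    c ≤ |denomRatio g (Fin.snoc v i : Fin (n + 1) → ι) -
      denomRatio g (Fin.snoc w j : Fin (n + 1) → ι)| := by
  rw [S.denomRatio_snoc, S.denomRatio_snoc]
  exact S.separated _ _ _ _ hij (S.denomRatio_nonneg v) (S.denomRatio_le_one v)
    (S.denomRatio_nonneg w) (S.denomRatio_le_one w) (S.abs_denomRatio_sub_le v w)

lemma abs_denomRatio_sub_pos (S : IsSeparatedSystem g X Y l c) {v w : Fin n → ι} (hvw : v ≠ w) :
    0 < |denomRatio g v - denomRatio g w| := by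
  induction n with
  | zero => exact absurd (Subsingleton.elim _ _) hvw
  | succ n ih =>
    revert hvw
    refine Fin.snocCases (fun v a ↦ ?_) v
    refine Fin.snocCases (fun w b ↦ ?_) w
    intro hvw
    obtain rfl | hab := eq_or_ne a b
    · have hne : v ≠ w := by
        rintro rfl
        exact hvw rfl
      have := S.X_pos
      have := S.Y_pos
      exact (div_pos (ih hne) (by positivity)).trans_le (S.div_le_abs_denomRatio_snoc_sub v w a)
    · exact S.c_pos.trans_le (S.le_abs_denomRatio_snoc_sub v w hab)

lemma rieszKernel_snoc_same_le (S : IsSeparatedSystem g X Y l c) (v w : Fin n → ι) (i : ι) :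
    rieszKernel g (Fin.snoc v i : Fin (n + 1) → ι) (Fin.snoc w i) ≤
      X * Y * rieszKernel g v w := by
  have := S.X_pos
  have := S.Y_pos
  obtain rfl | hvw := eq_or_ne v w
  · simp [rieszKernel]
  have hpos := S.abs_denomRatio_sub_pos hvw
  have hle := Real.sqrt_le_sqrt (S.div_le_abs_denomRatio_snoc_sub v w i)
  rw [Real.sqrt_div' _ (by positivity), Real.sqrt_sq (by positivity)] at hle
  refine (inv_anti₀ (by positivity) hle).trans_eq ?_
  rw [rieszKernel, inv_div, div_eq_mul_inv]

lemma rieszKernel_snoc_ne_le (S : IsSeparatedSystem g X Y l c) (v w : Fin n → ι) (hij : i ≠ j) :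
    rieszKernel g (Fin.snoc v i : Fin (n + 1) → ι) (Fin.snoc w j) ≤ (√c)⁻¹ :=
  inv_anti₀ (Real.sqrt_pos.2 S.c_pos) (Real.sqrt_le_sqrt (S.le_abs_denomRatio_snoc_sub v w hij))

lemma two_mul_le_card (S : IsSeparatedSystem g X Y l c) : 2 * (X * Y) ≤ Fintype.card ι := by
  have hY : (2 : ℝ) ^ 9 ≤ Y ^ 9 := pow_le_pow_left₀ zero_le_two S.two_le 9
  refine le_trans ?_ S.le_card
  linarith [mul_le_mul_of_nonneg_left hY (mul_pos S.X_pos S.Y_pos).le,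
    mul_pos S.X_pos S.Y_pos]

lemma card_pos (S : IsSeparatedSystem g X Y l c) : (0 : ℝ) < Fintype.card ι := by
  linarith [S.two_mul_le_card, mul_pos S.X_pos S.Y_pos]

lemma sum_rieszKernel_snoc_le (S : IsSeparatedSystem g X Y l c) (v : Fin n → ι) (i : ι) :
    ∑ w : Fin (n + 1) → ι, rieszKernel g (Fin.snoc v i) w ≤
      X * Y * ∑ w, rieszKernel g v w + Fintype.card ι ^ (n + 1) * (√c)⁻¹ := by
  have term_le (j : ι) : ∑ w : Fin n → ι,
      rieszKernel g (Fin.snoc v i : Fin (n + 1) → ι) (Fin.snoc w j) ≤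
        (if i = j then X * Y * ∑ w, rieszKernel g v w else 0) +
          Fintype.card ι ^ n * (√c)⁻¹ := by
    split_ifs with hij
    · subst hij
      rw [Finset.mul_sum]
      exact le_add_of_le_of_nonneg (Finset.sum_le_sum fun w _ ↦ S.rieszKernel_snoc_same_le v w i)
        (by positivity)
    · rw [zero_add]
      refine (Finset.sum_le_sum fun w _ ↦ S.rieszKernel_snoc_ne_le v w hij).trans_eq ?_
      simp
  rw [sum_word_snoc]
  refine (Finset.sum_le_sum fun j _ ↦ term_le j).trans_eq ?_
  rw [Finset.sum_add_distrib, Finset.sum_ite_eq]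
  simp [pow_succ', mul_assoc]

lemma sum_rieszKernel_succ_le (S : IsSeparatedSystem g X Y l c) (n : ℕ) :
    ∑ v : Fin (n + 1) → ι, ∑ w, rieszKernel g v w ≤
      Fintype.card ι * (X * Y * ∑ v : Fin n → ι, ∑ w, rieszKernel g v w) +
        Fintype.card ι ^ (2 * (n + 1)) * (√c)⁻¹ := by
  rw [sum_word_snoc]
  refine (Finset.sum_le_sum fun i _ ↦ Finset.sum_le_sum fun v _ ↦
    S.sum_rieszKernel_snoc_le v i).trans_eq ?_
  simp only [Finset.sum_add_distrib, ← Finset.mul_sum, Finset.sum_const, Finset.card_univ,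
    nsmul_eq_mul, Fintype.card_pi, Finset.prod_const, Fintype.card_fin, Nat.cast_pow]
  ring

lemma sum_rieszKernel_le (S : IsSeparatedSystem g X Y l c) (n : ℕ) :
    ∑ v : Fin n → ι, ∑ w, rieszKernel g v w ≤ 2 / √c * Fintype.card ι ^ (2 * n) := by
  induction n with
  | zero =>
    have (v w : Fin 0 → ι) : rieszKernel g v w = 0 := by
      simp [rieszKernel, Subsingleton.elim v w]
    simp only [this, Finset.sum_const_zero]
    positivity
  | succ n ih =>
    have hXY : X * Y ≤ Fintype.card ι / 2 := by linarith [S.two_mul_le_card]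
    refine (S.sum_rieszKernel_succ_le n).trans ?_
    calc _ ≤ (Fintype.card ι : ℝ) *
          (Fintype.card ι / 2 * (2 / √c * Fintype.card ι ^ (2 * n))) +
            Fintype.card ι ^ (2 * (n + 1)) * (√c)⁻¹ := by
          have := Finset.sum_nonneg fun v (_ : v ∈ Finset.univ) ↦
            Finset.sum_nonneg fun w (_ : w ∈ (Finset.univ : Finset (Fin n → ι))) ↦
              rieszKernel_nonneg g v w
          gcongr
      _ = 2 / √c * Fintype.card ι ^ (2 * (n + 1)) := by ring

end IsSeparatedSystem

/-! ### Van der Corput's estimate -/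

section VanDerCorput
variable {a b y₀ ρ lam K : ℝ} {Φ Φ' Φ'' : ℝ → ℝ}

lemma hasDerivAt_exp_I_mul {y : ℝ} {Φ : ℝ → ℝ} {d : ℝ} (hΦ : HasDerivAt Φ d y) :
    HasDerivAt (fun y ↦ Complex.exp (Complex.I * Φ y))
      (Complex.exp (Complex.I * Φ y) * (Complex.I * d)) y :=
  (hΦ.ofReal_comp.const_mul Complex.I).cexp

/-- Integration by parts, `e^{iΦ}` being the derivative of itself divided by `iΦ'`. -/
lemma norm_integral_exp_I_mul_le_add_integral (hab : a ≤ b)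
    (hΦ : ∀ y ∈ Set.Icc a b, HasDerivAt Φ (Φ' y) y)
    (hΦ' : ∀ y ∈ Set.Icc a b, HasDerivAt Φ' (Φ'' y) y) (hΦ'' : ContinuousOn Φ'' (Set.Icc a b))
    (hne : ∀ y ∈ Set.Icc a b, Φ' y ≠ 0) :
    ‖∫ y in a..b, Complex.exp (Complex.I * Φ y)‖ ≤
      |Φ' b|⁻¹ + |Φ' a|⁻¹ + ∫ y in a..b, |Φ'' y| / |Φ' y| ^ 2 := by
  have huIcc : Set.uIcc a b = Set.Icc a b := Set.uIcc_of_le hab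
  have hneI (y) (hy : y ∈ Set.Icc a b) : Complex.I * (Φ' y : ℂ) ≠ 0 :=
    mul_ne_zero Complex.I_ne_zero (by exact_mod_cast hne y hy)
  have hderiv (y) (hy : y ∈ Set.Icc a b) := hasDerivAt_exp_I_mul (hΦ y hy)
  have hderiv_inv (y) (hy : y ∈ Set.Icc a b) : HasDerivAt (fun y ↦ (Complex.I * (Φ' y : ℂ))⁻¹)
      (-(Complex.I * Φ'' y) / (Complex.I * (Φ' y : ℂ)) ^ 2) y :=
    ((hΦ' y hy).ofReal_comp.const_mul Complex.I).inv (hneI y hy)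
  have hcontΦ' : ContinuousOn Φ' (Set.Icc a b) := HasDerivAt.continuousOn hΦ'
  have hcontI : ContinuousOn (fun y ↦ Complex.I * (Φ' y : ℂ)) (Set.Icc a b) := by fun_prop
  have hcont_exp := HasDerivAt.continuousOn hderiv
  have hcont_inv : ContinuousOn
      (fun y ↦ -(Complex.I * Φ'' y) / (Complex.I * (Φ' y : ℂ)) ^ 2) (Set.Icc a b) :=
    ContinuousOn.div (by fun_prop) (hcontI.pow 2) fun y hy ↦ pow_ne_zero 2 (hneI y hy)
  have by_parts := intervalIntegral.integral_mul_deriv_eq_deriv_mul (a := a) (b := b)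
    (v := fun y ↦ Complex.exp (Complex.I * Φ y))
    (v' := fun y ↦ Complex.exp (Complex.I * Φ y) * (Complex.I * Φ' y))
    (by rwa [huIcc]) (by rwa [huIcc]) (ContinuousOn.intervalIntegrable (by rwa [huIcc]))
    (ContinuousOn.intervalIntegrable (by rw [huIcc]; exact hcont_exp.mul hcontI))
  have cancel : ∫ y in a..b, (Complex.I * (Φ' y : ℂ))⁻¹ *
      (Complex.exp (Complex.I * Φ y) * (Complex.I * Φ' y)) =
        ∫ y in a..b, Complex.exp (Complex.I * Φ y) := by
    refine intervalIntegral.integral_congr fun y hy ↦ ?_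
    exact (mul_left_comm _ _ _).trans
      (by rw [inv_mul_cancel₀ (hneI y (huIcc ▸ hy)), mul_one])
  have norm_boundary (y) :
      ‖(Complex.I * (Φ' y : ℂ))⁻¹ * Complex.exp (Complex.I * Φ y)‖ = |Φ' y|⁻¹ := by
    simp [Complex.norm_exp_I_mul_ofReal]
  rw [← cancel, by_parts]
  refine (norm_sub_le _ _).trans (add_le_add ((norm_sub_le _ _).trans_eq ?_) ?_)
  · rw [norm_boundary, norm_boundary]
  · refine (intervalIntegral.norm_integral_le_integral_norm hab).trans_eq
      (intervalIntegral.integral_congr fun y _ ↦ ?_)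
    simp [Complex.norm_exp_I_mul_ofReal]

lemma integral_inv_sq_sub_le (hab : a ≤ b) (hρ : 0 < ρ) (hside : ρ ≤ a - y₀ ∨ ρ ≤ y₀ - b) :
    ∫ y in a..b, ((y - y₀) ^ 2)⁻¹ ≤ ρ⁻¹ := by
  have hne (y) (hy : y ∈ Set.uIcc a b) : y - y₀ ≠ 0 := by
    rw [Set.uIcc_of_le hab] at hy
    intro h0
    rcases hside with h | h <;> linarith [hy.1, hy.2]
  have hderiv (y) (hy : y ∈ Set.uIcc a b) :
      HasDerivAt (fun y ↦ -(y - y₀)⁻¹) ((y - y₀) ^ 2)⁻¹ y := by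
    refine (((hasDerivAt_id y).sub_const y₀).fun_inv (hne y hy)).fun_neg.congr_deriv ?_
    simp [neg_div]
  have hcont : ContinuousOn (fun y ↦ ((y - y₀) ^ 2)⁻¹) (Set.uIcc a b) :=
    ContinuousOn.inv₀ (by fun_prop) fun y hy ↦ pow_ne_zero 2 (hne y hy)
  rw [intervalIntegral.integral_eq_sub_of_hasDerivAt hderiv hcont.intervalIntegrable]
  rcases hside with h | h
  · linarith [inv_anti₀ hρ h, inv_pos.2 (show 0 < b - y₀ by linarith)]
  · rw [← inv_neg, ← inv_neg, neg_sub, neg_sub]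
    linarith [inv_anti₀ hρ h, inv_pos.2 (show 0 < y₀ - a by linarith)]

lemma norm_integral_exp_I_mul_le_of_away (hab : a ≤ b) (hρ : 0 < ρ) (hlam : 0 < lam)
    (hΦ : ∀ y ∈ Set.Icc a b, HasDerivAt Φ (Φ' y) y)
    (hΦ' : ∀ y ∈ Set.Icc a b, HasDerivAt Φ' (Φ'' y) y) (hΦ'' : ContinuousOn Φ'' (Set.Icc a b))
    (hlow : ∀ y ∈ Set.Icc a b, lam * |y - y₀| ≤ |Φ' y|)
    (hup : ∀ y ∈ Set.Icc a b, |Φ'' y| ≤ K * lam) (hside : ρ ≤ a - y₀ ∨ ρ ≤ y₀ - b) :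
    ‖∫ y in a..b, Complex.exp (Complex.I * Φ y)‖ ≤ (2 + K) / (lam * ρ) := by
  have hK : 0 ≤ K := nonneg_of_mul_nonneg_left
    ((abs_nonneg _).trans (hup a (Set.left_mem_Icc.2 hab))) hlam
  have hρ_le (y) (hy : y ∈ Set.Icc a b) : ρ ≤ |y - y₀| := by
    rcases hside with h | h
    · exact le_trans (by linarith [hy.1]) (le_abs_self _)
    · exact le_trans (by linarith [hy.2]) (neg_le_abs _)
  have hΦ'_ge (y) (hy : y ∈ Set.Icc a b) : lam * ρ ≤ |Φ' y| :=
    (mul_le_mul_of_nonneg_left (hρ_le y hy) hlam.le).trans (hlow y hy)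
  have hΦ'_ne (y) (hy : y ∈ Set.Icc a b) : Φ' y ≠ 0 :=
    abs_pos.1 ((mul_pos hlam hρ).trans_le (hΦ'_ge y hy))
  have inv_le (y) (hy : y ∈ Set.Icc a b) : |Φ' y|⁻¹ ≤ (lam * ρ)⁻¹ :=
    inv_anti₀ (by positivity) (hΦ'_ge y hy)
  have integrand_le (y) (hy : y ∈ Set.Icc a b) :
      |Φ'' y| / |Φ' y| ^ 2 ≤ K / lam * ((y - y₀) ^ 2)⁻¹ := by
    have hpos : 0 < |y - y₀| := hρ.trans_le (hρ_le y hy)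
    calc |Φ'' y| / |Φ' y| ^ 2 ≤ K * lam / (lam * |y - y₀|) ^ 2 := by
          gcongr
          exacts [hup y hy, hlow y hy]
      _ = K / lam * ((y - y₀) ^ 2)⁻¹ := by
          rw [← sq_abs (y - y₀)]
          field_simp
  have hcont : ContinuousOn (fun y ↦ |Φ'' y| / |Φ' y| ^ 2) (Set.Icc a b) :=
    hΦ''.abs.div ((HasDerivAt.continuousOn hΦ').abs.pow 2) fun y hy ↦
      pow_ne_zero 2 (abs_ne_zero.2 (hΦ'_ne y hy))
  have hcont_inv : ContinuousOn (fun y ↦ K / lam * ((y - y₀) ^ 2)⁻¹) (Set.Icc a b) := by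
    refine continuousOn_const.mul (ContinuousOn.inv₀ (by fun_prop) fun y hy ↦ pow_ne_zero 2 ?_)
    exact abs_pos.1 (hρ.trans_le (hρ_le y hy))
  have integral_le : ∫ y in a..b, |Φ'' y| / |Φ' y| ^ 2 ≤ K / lam * ρ⁻¹ := by
    refine (intervalIntegral.integral_mono_on hab (hcont.intervalIntegrable_of_Icc hab)
      (hcont_inv.intervalIntegrable_of_Icc hab) integrand_le).trans ?_
    rw [intervalIntegral.integral_const_mul]
    exact mul_le_mul_of_nonneg_left (integral_inv_sq_sub_le hab hρ hside) (by positivity)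
  calc _ ≤ _ := norm_integral_exp_I_mul_le_add_integral hab hΦ hΦ' hΦ'' hΦ'_ne
    _ ≤ (lam * ρ)⁻¹ + (lam * ρ)⁻¹ + K / lam * ρ⁻¹ := add_le_add
        (add_le_add (inv_le b (Set.right_mem_Icc.2 hab)) (inv_le a (Set.left_mem_Icc.2 hab)))
        integral_le
    _ = (2 + K) / (lam * ρ) := by field_simp; ring

lemma norm_integral_le_two_mul_add_of_away {f : ℝ → ℂ} {C : ℝ} (hy₀ : y₀ ∈ Set.Icc a b)
    (hρ : 0 ≤ ρ) (hC : 0 ≤ C) (hf : ContinuousOn f (Set.Icc a b)) (hf_le : ∀ y, ‖f y‖ ≤ 1)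
    (away : ∀ ⦃p q⦄, p ≤ q → Set.Icc p q ⊆ Set.Icc a b → ρ ≤ p - y₀ ∨ ρ ≤ y₀ - q →
      ‖∫ y in p..q, f y‖ ≤ C) :
    ‖∫ y in a..b, f y‖ ≤ 2 * (ρ + C) := by
  set p := max a (y₀ - ρ) with hp
  set q := min b (y₀ + ρ) with hq
  have hap : a ≤ p := le_max_left _ _
  have hqb : q ≤ b := min_le_left _ _
  have hpy : p ≤ y₀ := max_le hy₀.1 (by linarith)
  have hyq : y₀ ≤ q := le_min hy₀.2 (by linarith)
  have left_le : ‖∫ y in a..p, f y‖ ≤ C := by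
    rcases max_choice a (y₀ - ρ) with h | h
    · simpa [hp, h] using hC
    · exact away hap (Set.Icc_subset_Icc_right (by linarith)) (.inr (by rw [hp, h]; linarith))
  have right_le : ‖∫ y in q..b, f y‖ ≤ C := by
    rcases min_choice b (y₀ + ρ) with h | h
    · simpa [hq, h] using hC
    · exact away hqb (Set.Icc_subset_Icc_left (by linarith)) (.inl (by rw [hq, h]; linarith))
  have middle_le : ‖∫ y in p..q, f y‖ ≤ 2 * ρ := by
    refine (intervalIntegral.norm_integral_le_of_norm_le_const fun y _ ↦ hf_le y).trans ?_
    rw [one_mul, abs_of_nonneg (by linarith)]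
    linarith [le_max_right a (y₀ - ρ), min_le_right b (y₀ + ρ)]
  have hint {r s : ℝ} (hr : r ∈ Set.Icc a b) (hs : s ∈ Set.Icc a b) :
      IntervalIntegrable f volume r s :=
    (hf.mono (Set.uIcc_subset_Icc hr hs)).intervalIntegrable
  have ha : a ∈ Set.Icc a b := ⟨le_rfl, by linarith⟩
  have hb : b ∈ Set.Icc a b := ⟨by linarith, le_rfl⟩
  have hp_mem : p ∈ Set.Icc a b := ⟨hap, by linarith⟩
  have hq_mem : q ∈ Set.Icc a b := ⟨by linarith, hqb⟩
  rw [← intervalIntegral.integral_add_adjacent_intervals (hint ha hq_mem) (hint hq_mem hb),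
    ← intervalIntegral.integral_add_adjacent_intervals (hint ha hp_mem) (hint hp_mem hq_mem)]
  exact norm_add₃_le.trans (by linarith)

/-- Van der Corput's bound: the interval is cut at distance `√(K / lam)` from `y₀`. -/
lemma norm_integral_exp_I_mul_le (hy₀ : y₀ ∈ Set.Icc a b) (hlam : 0 < lam) (hK : 2 ≤ K)
    (hΦ : ∀ y ∈ Set.Icc a b, HasDerivAt Φ (Φ' y) y)
    (hΦ' : ∀ y ∈ Set.Icc a b, HasDerivAt Φ' (Φ'' y) y) (hΦ'' : ContinuousOn Φ'' (Set.Icc a b))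
    (hlow : ∀ y ∈ Set.Icc a b, lam * |y - y₀| ≤ |Φ' y|)
    (hup : ∀ y ∈ Set.Icc a b, |Φ'' y| ≤ K * lam) :
    ‖∫ y in a..b, Complex.exp (Complex.I * Φ y)‖ ≤ 6 * √(K / lam) := by
  set ρ := √(K / lam)
  have hρ : 0 < ρ := Real.sqrt_pos.2 (by positivity)
  have hρ_sq : lam * (ρ * ρ) = K := by
    rw [Real.mul_self_sqrt (by positivity)]
    field_simp
  have hcont : ContinuousOn (fun y ↦ Complex.exp (Complex.I * Φ y)) (Set.Icc a b) :=
    HasDerivAt.continuousOn fun y hy ↦ hasDerivAt_exp_I_mul (hΦ y hy)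
  refine (norm_integral_le_two_mul_add_of_away (C := 2 * ρ) hy₀ hρ.le (by positivity) hcont
    (fun y ↦ (Complex.norm_exp_I_mul_ofReal _).le) fun p q hpq hsub hside ↦ ?_).trans_eq (by ring)
  refine (norm_integral_exp_I_mul_le_of_away hpq hρ hlam (fun y hy ↦ hΦ y (hsub hy))
    (fun y hy ↦ hΦ' y (hsub hy)) (hΦ''.mono hsub) (fun y hy ↦ hlow y (hsub hy))
    (fun y hy ↦ hup y (hsub hy)) hside).trans ?_
  rw [div_le_iff₀ (by positivity)]
  linarith

end VanDerCorput

section PhaseDifference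

lemma exists_mul_abs_sub_le_abs_affine_of_nonneg {α : ℝ} (hα : 0 ≤ α) (β : ℝ) :
    ∃ y₀ ∈ Set.Icc (0 : ℝ) 1, ∀ y ∈ Set.Icc (0 : ℝ) 1,
      (|α| + |β|) / 2 * |y - y₀| ≤ |α + β * y| := by
  rw [abs_of_nonneg hα]
  rcases le_or_gt 0 β with hβ | hβ
  · refine ⟨0, by simp, fun y ⟨hy, hy1⟩ ↦ ?_⟩
    rw [abs_of_nonneg hβ, sub_zero, abs_of_nonneg hy, abs_of_nonneg (by positivity)]
    nlinarith [mul_nonneg hβ hy, mul_nonneg hα (sub_nonneg.2 hy1), mul_nonneg hα hy]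
  rw [abs_of_neg hβ]
  rcases le_or_gt (-β) α with h | h
  · refine ⟨1, by simp, fun y ⟨hy, hy1⟩ ↦ ?_⟩
    have hpos : 0 ≤ α + β * y := by nlinarith
    rw [abs_of_nonneg hpos, abs_sub_comm, abs_of_nonneg (sub_nonneg.2 hy1)]
    nlinarith [mul_nonneg (sub_nonneg.2 h) hy, mul_nonneg (sub_nonneg.2 h) (sub_nonneg.2 hy1)]
  · refine ⟨α / -β, ⟨div_nonneg hα (by linarith), (div_le_one (by linarith)).2 h.le⟩,
      fun y _ ↦ ?_⟩
    have hfactor : α + β * y = β * (y - α / -β) := by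
      field_simp [hβ.ne]
      ring
    rw [hfactor, abs_mul, abs_of_neg hβ]
    exact mul_le_mul_of_nonneg_right (by linarith) (abs_nonneg _)

lemma exists_mul_abs_sub_le_abs_affine (α β : ℝ) :
    ∃ y₀ ∈ Set.Icc (0 : ℝ) 1, ∀ y ∈ Set.Icc (0 : ℝ) 1,
      (|α| + |β|) / 2 * |y - y₀| ≤ |α + β * y| := by
  rcases le_total 0 α with hα | hα
  · exact exists_mul_abs_sub_le_abs_affine_of_nonneg hα β
  · obtain ⟨y₀, hy₀, h⟩ := exists_mul_abs_sub_le_abs_affine_of_nonneg (neg_nonneg.2 hα) (-β)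
    refine ⟨y₀, hy₀, fun y hy ↦ ?_⟩
    simpa only [abs_neg, neg_mul, ← neg_add] using h y hy

variable {u v a b r R D : ℝ}

lemma abs_sub_div_le_abs_inv_sq_sub_inv_sq (hu : 0 < u) (hv : 0 < v) (huR : u ≤ R) (hvR : v ≤ R) :
    |v - u| / R ^ 3 ≤ |(u ^ 2)⁻¹ - (v ^ 2)⁻¹| := by
  have hR : 0 < R := hu.trans_le huR
  have ordered {a b : ℝ} (ha : 0 < a) (hab : a ≤ b) (hb : b ≤ R) :
      (a * b) ^ 2 ≤ (b + a) * R ^ 3 := by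
    have hb0 : 0 < b := ha.trans_le hab
    calc (a * b) ^ 2 ≤ (b * b) ^ 2 := by gcongr
      _ = b * b ^ 3 := by ring
      _ ≤ (b + a) * R ^ 3 := by gcongr; linarith
  have hfactor : (u ^ 2)⁻¹ - (v ^ 2)⁻¹ = (v - u) * ((v + u) / (u * v) ^ 2) := by
    field_simp
    ring
  rw [hfactor, abs_mul, abs_of_pos (by positivity : 0 < (v + u) / (u * v) ^ 2), div_eq_mul_inv]
  gcongr
  rw [inv_eq_one_div, div_le_div_iff₀ (by positivity) (by positivity), one_mul]
  rcases le_total u v with h | h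
  · exact ordered hu h hvR
  · rw [mul_comm u, add_comm]
    exact ordered hv h huR

lemma abs_div_cube_sub_div_cube_le (hr : 0 < r) (hu : r ≤ u) (hv : r ≤ v) (huR : u ≤ 2 * R)
    (hvR : v ≤ 2 * R) (huv : |v - u| ≤ D) (ha : |a| ≤ R) (hab : |b - a| ≤ D) :
    |b / v ^ 3 - a / u ^ 3| ≤ 20 * R ^ 3 / r ^ 6 * D := by
  have hu0 : 0 < u := by linarith
  have hv0 : 0 < v := by linarith
  have hD : 0 ≤ D := (abs_nonneg _).trans huv
  have hR : 0 ≤ R := (abs_nonneg _).trans ha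
  have hfactor : b / v ^ 3 - a / u ^ 3 =
      ((b - a) * u ^ 3 - a * ((v - u) * (v ^ 2 + v * u + u ^ 2))) / (u * v) ^ 3 := by
    field_simp
    ring
  have hsum : v ^ 2 + v * u + u ^ 2 ≤ 12 * R ^ 2 := by nlinarith
  have hnum : |(b - a) * u ^ 3 - a * ((v - u) * (v ^ 2 + v * u + u ^ 2))| ≤ 20 * R ^ 3 * D := by
    calc _ ≤ |(b - a) * u ^ 3| + |a * ((v - u) * (v ^ 2 + v * u + u ^ 2))| := abs_sub _ _
      _ = |b - a| * u ^ 3 + |a| * (|v - u| * (v ^ 2 + v * u + u ^ 2)) := by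
        rw [abs_mul, abs_mul, abs_mul, abs_of_pos (by positivity : 0 < u ^ 3),
          abs_of_pos (by positivity : 0 < v ^ 2 + v * u + u ^ 2)]
      _ ≤ D * (2 * R) ^ 3 + R * (D * (12 * R ^ 2)) := by gcongr
      _ = 20 * R ^ 3 * D := by ring
  calc |b / v ^ 3 - a / u ^ 3| ≤ 20 * R ^ 3 * D / (r * r) ^ 3 := by
        rw [hfactor, abs_div, abs_of_pos (by positivity : 0 < (u * v) ^ 3)]
        gcongr
    _ = 20 * R ^ 3 / r ^ 6 * D := by ring

lemma hasDerivAt_inv_sq_affine {y : ℝ} (hy : a * y + b ≠ 0) :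
    HasDerivAt (fun y ↦ ((a * y + b) ^ 2)⁻¹) (-(2 * (a / (a * y + b) ^ 3))) y := by
  have haffine : HasDerivAt (fun y ↦ a * y + b) a y := by
    simpa using ((hasDerivAt_id y).const_mul a).add_const b
  refine ((haffine.fun_pow 2).fun_inv (pow_ne_zero 2 hy)).congr_deriv ?_
  push_cast
  field_simp

variable {G H : Mat2} {t : ℝ}

/-- The `ℓ¹` distance between the denominators `q' y + q` of two Möbius maps. -/
def denomDist (G H : Mat2) : ℝ := |H 1 1 - G 1 1| + |H 1 0 - G 1 0|

lemma mul_abs_ratio_sub_le_denomDist (hG : IsContinuant G) (hH : IsContinuant H) (hrH : r ≤ H 1 1) :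
    r * |G 1 0 / G 1 1 - H 1 0 / H 1 1| ≤ denomDist G H := by
  have hG0 := hG.pos₁₁
  have hH0 := hH.pos₁₁
  have hfactor : G 1 0 / G 1 1 - H 1 0 / H 1 1 =
      (G 1 0 * (H 1 1 - G 1 1) - G 1 1 * (H 1 0 - G 1 0)) / (G 1 1 * H 1 1) := by
    field_simp
    ring
  have hnum : |G 1 0 * (H 1 1 - G 1 1) - G 1 1 * (H 1 0 - G 1 0)| ≤ G 1 1 * denomDist G H := by
    refine (abs_sub _ _).trans ?_
    rw [abs_mul, abs_mul, abs_of_nonneg hG.nonneg₁₀, abs_of_pos hG0, denomDist, mul_add]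
    gcongr
    exact hG.row_le
  rw [hfactor, abs_div, abs_of_pos (mul_pos hG0 hH0)]
  calc _ ≤ H 1 1 * (G 1 1 * denomDist G H / (G 1 1 * H 1 1)) := by gcongr
    _ = denomDist G H := by field_simp

lemma abs_denom_sub_le_denomDist {y : ℝ} (hy : 0 ≤ y) (hy1 : y ≤ 1) :
    |(H 1 0 * y + H 1 1) - (G 1 0 * y + G 1 1)| ≤ denomDist G H := by
  calc _ = |(H 1 1 - G 1 1) + (H 1 0 - G 1 0) * y| := by ring_nf
    _ ≤ |H 1 1 - G 1 1| + |H 1 0 - G 1 0| * |y| := (abs_add_le _ _).trans_eq (by rw [abs_mul])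
    _ ≤ denomDist G H := by
      rw [abs_of_nonneg hy]
      exact add_le_add_right (mul_le_of_le_one_right (abs_nonneg _) hy1) _

lemma exists_mul_abs_sub_le_abs_inv_sq_denom_sub (hG : IsContinuant G) (hH : IsContinuant H)
    (hGR : G 1 1 ≤ R) (hHR : H 1 1 ≤ R) :
    ∃ y₀ ∈ Set.Icc (0 : ℝ) 1, ∀ y ∈ Set.Icc (0 : ℝ) 1,
      denomDist G H / (16 * R ^ 3) * |y - y₀| ≤
        |((G 1 0 * y + G 1 1) ^ 2)⁻¹ - ((H 1 0 * y + H 1 1) ^ 2)⁻¹| := by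
  have hR : 0 < R := hG.pos₁₁.trans_le hGR
  obtain ⟨y₀, hy₀, hroot⟩ :=
    exists_mul_abs_sub_le_abs_affine (H 1 1 - G 1 1) (H 1 0 - G 1 0)
  refine ⟨y₀, hy₀, fun y hy ↦ ?_⟩
  calc denomDist G H / (16 * R ^ 3) * |y - y₀|
      = denomDist G H / 2 * |y - y₀| / (2 * R) ^ 3 := by ring
    _ ≤ |(H 1 0 * y + H 1 1) - (G 1 0 * y + G 1 1)| / (2 * R) ^ 3 := by
      gcongr
      refine (hroot y hy).trans_eq ?_
      ring_nf
    _ ≤ |((G 1 0 * y + G 1 1) ^ 2)⁻¹ - ((H 1 0 * y + H 1 1) ^ 2)⁻¹| :=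
      abs_sub_div_le_abs_inv_sq_sub_inv_sq (hG.denom_pos hy.1) (hH.denom_pos hy.1)
        ((hG.denom_le hy.1 hy.2).trans (by linarith)) ((hH.denom_le hy.1 hy.2).trans (by linarith))

lemma abs_div_cube_denom_sub_le (hG : IsContinuant G) (hH : IsContinuant H) (hr : 0 < r)
    (hrG : r ≤ G 1 1) (hrH : r ≤ H 1 1) (hGR : G 1 1 ≤ R) (hHR : H 1 1 ≤ R) {y : ℝ}
    (hy : y ∈ Set.Icc (0 : ℝ) 1) :
    |H 1 0 / (H 1 0 * y + H 1 1) ^ 3 - G 1 0 / (G 1 0 * y + G 1 1) ^ 3| ≤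
      20 * R ^ 3 / r ^ 6 * denomDist G H :=
  abs_div_cube_sub_div_cube_le hr (hrG.trans (hG.le_denom hy.1)) (hrH.trans (hH.le_denom hy.1))
    ((hG.denom_le hy.1 hy.2).trans (by linarith)) ((hH.denom_le hy.1 hy.2).trans (by linarith))
    (abs_denom_sub_le_denomDist hy.1 hy.2)
    ((abs_of_nonneg hG.nonneg₁₀).trans_le (hG.row_le.trans hGR))
    (le_add_of_nonneg_left (abs_nonneg _))

lemma norm_integral_exp_moebius_sub_le_of_denomDist (hG : IsContinuant G) (hH : IsContinuant H)
    (hGdet : G.det = 1) (hHdet : H.det = 1) (hr : 0 < r) (hrG : r ≤ G 1 1) (hrH : r ≤ H 1 1)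
    (hGR : G 1 1 ≤ R) (hHR : H 1 1 ≤ R) (ht : 0 < t) (hD : 0 < denomDist G H) :
    ‖∫ y in (0 : ℝ)..1, Complex.exp (Complex.I * (t * (moebius G y - moebius H y) : ℝ))‖ ≤
      6 * √(640 * R ^ 6 / r ^ 6 / (t * (denomDist G H / (16 * R ^ 3)))) := by
  have hR : 0 < R := hr.trans_le (hrG.trans hGR)
  obtain ⟨y₀, hy₀, hroot⟩ := exists_mul_abs_sub_le_abs_inv_sq_denom_sub hG hH hGR hHR
  have two_le : 2 ≤ 640 * R ^ 6 / r ^ 6 := by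
    rw [le_div_iff₀ (by positivity)]
    linarith [pow_le_pow_left₀ hr.le (hrG.trans hGR) 6, pow_pos hR 6]
  have hG_ne (y) (hy : y ∈ Set.Icc (0 : ℝ) 1) := (hG.denom_pos hy.1).ne'
  have hH_ne (y) (hy : y ∈ Set.Icc (0 : ℝ) 1) := (hH.denom_pos hy.1).ne'
  refine norm_integral_exp_I_mul_le (Φ := fun y ↦ t * (moebius G y - moebius H y))
    (Φ' := fun y ↦ t * (((G 1 0 * y + G 1 1) ^ 2)⁻¹ - ((H 1 0 * y + H 1 1) ^ 2)⁻¹))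
    (Φ'' := fun y ↦ t * (-(2 * (G 1 0 / (G 1 0 * y + G 1 1) ^ 3)) -
      -(2 * (H 1 0 / (H 1 0 * y + H 1 1) ^ 3)))) hy₀ (by positivity) two_le
    (fun y hy ↦ ?_) (fun y hy ↦ ?_) ?_ (fun y hy ↦ ?_) (fun y hy ↦ ?_)
  · have hG' := hG.hasDerivAt_moebius hy.1
    have hH' := hH.hasDerivAt_moebius hy.1
    rw [hGdet, one_div] at hG'
    rw [hHdet, one_div] at hH'
    exact (hG'.sub hH').const_mul t
  · exact ((hasDerivAt_inv_sq_affine (hG_ne y hy)).sub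
      (hasDerivAt_inv_sq_affine (hH_ne y hy))).const_mul t
  · have hG_cont : ContinuousOn (fun y ↦ G 1 0 / (G 1 0 * y + G 1 1) ^ 3) (Set.Icc 0 1) :=
      ContinuousOn.div (by fun_prop) (by fun_prop) fun y hy ↦ pow_ne_zero _ (hG_ne y hy)
    have hH_cont : ContinuousOn (fun y ↦ H 1 0 / (H 1 0 * y + H 1 1) ^ 3) (Set.Icc 0 1) :=
      ContinuousOn.div (by fun_prop) (by fun_prop) fun y hy ↦ pow_ne_zero _ (hH_ne y hy)
    fun_prop
  · rw [abs_mul, abs_of_pos ht, mul_assoc]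
    exact mul_le_mul_of_nonneg_left (hroot y hy) ht.le
  · rw [neg_sub_neg, ← mul_sub, abs_mul, abs_mul, abs_of_pos ht, abs_two]
    calc _ ≤ t * (2 * (20 * R ^ 3 / r ^ 6 * denomDist G H)) := by
          gcongr
          exact abs_div_cube_denom_sub_le hG hH hr hrG hrH hGR hHR hy
      _ = 640 * R ^ 6 / r ^ 6 * (t * (denomDist G H / (16 * R ^ 3))) := by
          field_simp
          ring

lemma norm_integral_exp_moebius_sub_le (hG : IsContinuant G) (hH : IsContinuant H)
    (hGdet : G.det = 1) (hHdet : H.det = 1) (hr : 0 < r) (hrG : r ≤ G 1 1) (hrH : r ≤ H 1 1)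
    (hGR : G 1 1 ≤ R) (hHR : H 1 1 ≤ R) (ht : 0 < t)
    (hGH : 0 < |G 1 0 / G 1 1 - H 1 0 / H 1 1|) :
    ‖∫ y in (0 : ℝ)..1, Complex.exp (Complex.I * (t * (moebius G y - moebius H y) : ℝ))‖ ≤
      608 * √(R ^ 9 / (r ^ 7 * t)) * (√|G 1 0 / G 1 1 - H 1 0 / H 1 1|)⁻¹ := by
  have hR : 0 < R := hr.trans_le (hrG.trans hGR)
  have hδD := mul_abs_ratio_sub_le_denomDist hG hH hrH
  set δ := |G 1 0 / G 1 1 - H 1 0 / H 1 1|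
  have hD : 0 < denomDist G H := (mul_pos hr hGH).trans_le hδD
  have hratio : 640 * R ^ 6 / r ^ 6 / (t * (denomDist G H / (16 * R ^ 3))) ≤
      (304 / 3) ^ 2 * (R ^ 9 / (r ^ 7 * t)) * δ⁻¹ := by
    calc 640 * R ^ 6 / r ^ 6 / (t * (denomDist G H / (16 * R ^ 3)))
        = 10240 * R ^ 9 / (r ^ 6 * t * denomDist G H) := by
          field_simp
          ring
      _ ≤ (304 / 3) ^ 2 * R ^ 9 / (r ^ 6 * t * (r * δ)) := by
          gcongr
          norm_num
      _ = _ := by field_simp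
  calc _ ≤ _ := norm_integral_exp_moebius_sub_le_of_denomDist hG hH hGdet hHdet hr hrG hrH hGR hHR
        ht hD
    _ ≤ 6 * √((304 / 3) ^ 2 * (R ^ 9 / (r ^ 7 * t)) * δ⁻¹) := by gcongr
    _ = 608 * √(R ^ 9 / (r ^ 7 * t)) * (√δ)⁻¹ := by
      rw [Real.sqrt_mul (by positivity), Real.sqrt_mul (by positivity), Real.sqrt_inv,
        Real.sqrt_sq (by norm_num)]
      ring

end PhaseDifference

/-! ### Exponential sums over words -/

section ExponentialSums

lemma norm_exp_I_mul_sub_exp_I_mul_le (a b : ℝ) :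
    ‖Complex.exp (Complex.I * a) - Complex.exp (Complex.I * b)‖ ≤ |a - b| := by
  have hfactor : Complex.exp (Complex.I * a) - Complex.exp (Complex.I * b) =
      Complex.exp (Complex.I * b) * (Complex.exp (Complex.I * (a - b : ℝ)) - 1) := by
    rw [mul_sub, ← Complex.exp_add, mul_one]
    congr 2
    push_cast
    ring
  rw [hfactor, norm_mul, Complex.norm_exp_I_mul_ofReal, one_mul]
  exact Real.norm_exp_I_mul_ofReal_sub_one_le

lemma exp_I_mul_mul_conj (a b : ℝ) :
    Complex.exp (Complex.I * a) * (starRingEnd ℂ) (Complex.exp (Complex.I * b)) =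
      Complex.exp (Complex.I * (a - b : ℝ)) := by
  rw [← Complex.exp_conj, map_mul, Complex.conj_I, Complex.conj_ofReal, ← Complex.exp_add]
  congr 1
  push_cast
  ring

variable {α W : Type*} [MeasurableSpace α] {μ : Measure α} [IsFiniteMeasure μ]

lemma integrable_exp_I_mul {f : α → ℝ} (hf : Measurable f) :
    Integrable (fun x ↦ Complex.exp (Complex.I * f x)) μ :=
  .of_bound (by fun_prop) 1 (.of_forall fun _ ↦ (Complex.norm_exp_I_mul_ofReal _).le)

lemma integral_norm_sum_exp_sq_le (s : Finset W) {f : W → α → ℝ} (hf : ∀ w, Measurable (f w)) :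
    ∫ x, ‖∑ w ∈ s, Complex.exp (Complex.I * f w x)‖ ^ 2 ∂μ ≤
      ∑ v ∈ s, ∑ w ∈ s, ‖∫ x, Complex.exp (Complex.I * (f v x - f w x : ℝ)) ∂μ‖ := by
  have expand (x : α) : ((‖∑ w ∈ s, Complex.exp (Complex.I * f w x)‖ ^ 2 : ℝ) : ℂ) =
      ∑ v ∈ s, ∑ w ∈ s, Complex.exp (Complex.I * (f v x - f w x : ℝ)) := by
    rw [← Complex.normSq_eq_norm_sq, ← Complex.mul_conj, map_sum, Finset.sum_mul_sum]
    simp only [exp_I_mul_mul_conj]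
  have hint (v w : W) :
      Integrable (fun x ↦ Complex.exp (Complex.I * (f v x - f w x : ℝ))) μ :=
    integrable_exp_I_mul ((hf v).sub (hf w))
  have integral_eq : ((∫ x, ‖∑ w ∈ s, Complex.exp (Complex.I * f w x)‖ ^ 2 ∂μ : ℝ) : ℂ) =
      ∑ v ∈ s, ∑ w ∈ s, ∫ x, Complex.exp (Complex.I * (f v x - f w x : ℝ)) ∂μ := by
    rw [← integral_complex_ofReal, integral_congr_ae (.of_forall expand),
      integral_finsetSum _ fun v _ ↦ integrable_finsetSum _ fun w _ ↦ hint v w]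
    exact Finset.sum_congr rfl fun v _ ↦ integral_finsetSum _ fun w _ ↦ hint v w
  calc _ ≤ ‖((∫ x, ‖∑ w ∈ s, Complex.exp (Complex.I * f w x)‖ ^ 2 ∂μ : ℝ) : ℂ)‖ := by
        rw [Complex.norm_real]
        exact le_abs_self _
    _ ≤ _ := by
        rw [integral_eq]
        exact (norm_sum_le _ _).trans (Finset.sum_le_sum fun v _ ↦ norm_sum_le _ _)

end ExponentialSums

lemma measurable_moebius (g : Mat2) : Measurable (moebius g) := by
  unfold moebius
  fun_prop

namespace IsContinuant
variable {g : Mat2}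

lemma strictMonoOn_moebius (hg : IsContinuant g) (hdet : 0 < g.det) :
    StrictMonoOn (moebius g) (Set.Ici 0) := by
  intro y hy z hz hyz
  rw [← sub_pos, hg.moebius_sub hz hy]
  exact div_pos (mul_pos hdet (sub_pos.2 hyz)) (mul_pos (hg.denom_pos hz) (hg.denom_pos hy))

lemma moebius_mem_Ioo (hg : IsContinuant g) (hdet : 0 < g.det) {y : ℝ}
    (hy : y ∈ Set.Ioo (0 : ℝ) 1) : moebius g y ∈ Set.Ioo (0 : ℝ) 1 :=
  ⟨(hg.moebius_nonneg le_rfl).trans_lt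
      (hg.strictMonoOn_moebius hdet Set.self_mem_Ici hy.1.le hy.1),
    (hg.strictMonoOn_moebius hdet hy.1.le (zero_le_one' ℝ) hy.2).trans_le
      (hg.moebius_le_one zero_le_one le_rfl)⟩

lemma Ioo_subset_image_moebius (hg : IsContinuant g) :
    Set.Ioo (moebius g 0) (moebius g 1) ⊆ moebius g '' Set.Ioo 0 1 :=
  intermediate_value_Ioo zero_le_one fun _ hz ↦
    (hg.hasDerivAt_moebius hz.1).continuousAt.continuousWithinAt

end IsContinuant

/-- The average of `exp (i t ·)` over the images of `y` under the words of length `n`. -/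
noncomputable def expAverage {ι : Type*} [Fintype ι] (g : ι → Mat2) (n : ℕ) (t y : ℝ) : ℂ :=
  ((Fintype.card ι : ℂ) ^ n)⁻¹ *
    ∑ w : Fin n → ι, Complex.exp (Complex.I * (t * moebius (wordProd g w) y : ℝ))

lemma measurable_expAverage {ι : Type*} [Fintype ι] (g : ι → Mat2) (n : ℕ) (t : ℝ) :
    Measurable (expAverage g n t) := by
  have (w : Fin n → ι) : Measurable (moebius (wordProd g w)) := measurable_moebius _
  unfold expAverage
  fun_prop

namespace IsSeparatedSystem
variable {ι : Type*} [Fintype ι] {g : ι → Mat2} {X Y l c t : ℝ} {n : ℕ}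

lemma det_wordProd_pos (S : IsSeparatedSystem g X Y l c) (w : Fin n → ι) :
    0 < (wordProd g w).det := by
  simp [S.det_wordProd]

lemma eq_of_moebius_wordProd_eq (S : IsSeparatedSystem g X Y l c) (v w : Fin n → ι) {y z : ℝ}
    (hy : y ∈ Set.Ioo (0 : ℝ) 1) (hz : z ∈ Set.Ioo (0 : ℝ) 1)
    (h : moebius (wordProd g v) y = moebius (wordProd g w) z) : v = w := by
  induction n with
  | zero => exact Subsingleton.elim _ _
  | succ n ih =>
    induction v using Fin.consCases with | _ i v
    induction w using Fin.consCases with | _ j w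
    have hvy := (S.continuant_wordProd v).moebius_mem_Ioo (S.det_wordProd_pos v) hy
    have hwz := (S.continuant_wordProd w).moebius_mem_Ioo (S.det_wordProd_pos w) hz
    rw [wordProd_cons, wordProd_cons,
      (S.continuant i).moebius_mul (S.continuant_wordProd v) hy.1.le,
      (S.continuant j).moebius_mul (S.continuant_wordProd w) hz.1.le] at h
    obtain rfl : i = j := by
      by_contra hij
      exact S.disjoint i j _ _ hij hvy.1 hvy.2 hwz.1 hwz.2 h
    have hdet : 0 < (g i).det := by simp [S.det_eq_one]
    rw [ih v w (((S.continuant i).strictMonoOn_moebius hdet).injOn hvy.1.le hwz.1.le h)]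

lemma norm_expAverage_le_one (S : IsSeparatedSystem g X Y l c) (n : ℕ) (t y : ℝ) :
    ‖expAverage g n t y‖ ≤ 1 := by
  have hM := S.card_pos
  rw [expAverage, norm_mul, norm_inv, norm_pow, Complex.norm_natCast,
    inv_mul_le_iff₀ (by positivity), mul_one]
  refine (norm_sum_le _ _).trans_eq ?_
  simp [Complex.norm_exp_I_mul_ofReal, -Complex.ofReal_mul]

lemma abs_moebius_wordProd_sub_le (S : IsSeparatedSystem g X Y l c) (w : Fin n → ι) {y z : ℝ}
    (hy : 0 ≤ y) (hz : 0 ≤ z) :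
    |moebius (wordProd g w) y - moebius (wordProd g w) z| ≤ |y - z| / X ^ (2 * n) := by
  have hw := S.continuant_wordProd w
  have hX := S.X_pos
  rw [hw.moebius_sub hy hz, S.det_wordProd, one_mul, abs_div,
    abs_of_pos (mul_pos (hw.denom_pos hy) (hw.denom_pos hz)), two_mul, pow_add]
  gcongr
  · exact (hw.denom_pos hy).le
  · exact (S.pow_le_denom w).trans (hw.le_denom hy)
  · exact (S.pow_le_denom w).trans (hw.le_denom hz)

lemma norm_expAverage_sub_le (S : IsSeparatedSystem g X Y l c) (n : ℕ) (t : ℝ) {y z : ℝ}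
    (hy : 0 ≤ y) (hz : 0 ≤ z) :
    ‖expAverage g n t y - expAverage g n t z‖ ≤ |t| * (|y - z| / X ^ (2 * n)) := by
  have hM := S.card_pos
  have term_le (w : Fin n → ι) :
      ‖Complex.exp (Complex.I * (t * moebius (wordProd g w) y : ℝ)) -
        Complex.exp (Complex.I * (t * moebius (wordProd g w) z : ℝ))‖ ≤
          |t| * (|y - z| / X ^ (2 * n)) := by
    refine (norm_exp_I_mul_sub_exp_I_mul_le _ _).trans ?_
    rw [← mul_sub, abs_mul]
    exact mul_le_mul_of_nonneg_left (S.abs_moebius_wordProd_sub_le w hy hz) (abs_nonneg t)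
  rw [expAverage, expAverage, ← mul_sub, ← Finset.sum_sub_distrib, norm_mul, norm_inv, norm_pow,
    Complex.norm_natCast, inv_mul_le_iff₀ (by positivity)]
  refine (norm_sum_le_of_le _ fun w _ ↦ term_le w).trans_eq ?_
  simp

lemma norm_integral_exp_moebius_wordProd_sub_le (S : IsSeparatedSystem g X Y l c)
    (v w : Fin n → ι) (ht : 0 < t) :
    ‖∫ y in (0 : ℝ)..1, Complex.exp (Complex.I *
      (t * (moebius (wordProd g v) y - moebius (wordProd g w) y) : ℝ))‖ ≤
      (if v = w then 1 else 0) +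
        608 * √(((X * Y) ^ n) ^ 9 / ((X ^ n) ^ 7 * t)) * rieszKernel g v w := by
  split_ifs with hvw
  · simp [hvw, rieszKernel]
  · rw [zero_add, rieszKernel, denomRatio_eq, denomRatio_eq]
    refine norm_integral_exp_moebius_sub_le (S.continuant_wordProd v) (S.continuant_wordProd w)
      (S.det_wordProd v) (S.det_wordProd w) (pow_pos S.X_pos n) (S.pow_le_denom v)
      (S.pow_le_denom w) (S.denom_le_pow v) (S.denom_le_pow w) ht ?_
    simpa only [denomRatio_eq] using S.abs_denomRatio_sub_pos hvw

lemma integral_norm_expAverage_sq_le (S : IsSeparatedSystem g X Y l c) (n : ℕ) (ht : 0 < t) :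
    ∫ y in (0 : ℝ)..1, ‖expAverage g n t y‖ ^ 2 ≤ ((Fintype.card ι : ℝ) ^ n)⁻¹ +
      608 * √(((X * Y) ^ n) ^ 9 / ((X ^ n) ^ 7 * t)) * (2 / √c) := by
  have hM := S.card_pos
  set M : ℝ := (Fintype.card ι : ℝ)
  set B := 608 * √(((X * Y) ^ n) ^ 9 / ((X ^ n) ^ 7 * t))
  have hB : 0 ≤ B := by positivity
  have sum_le : ∫ y in (0 : ℝ)..1, ‖∑ w : Fin n → ι,
      Complex.exp (Complex.I * (t * moebius (wordProd g w) y : ℝ))‖ ^ 2 ≤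
        M ^ n + B * (2 / √c * M ^ (2 * n)) := by
    rw [intervalIntegral.integral_of_le zero_le_one]
    refine (integral_norm_sum_exp_sq_le _ fun w ↦
      (measurable_moebius (wordProd g w)).const_mul t).trans ?_
    simp only [← mul_sub, ← intervalIntegral.integral_of_le (zero_le_one' ℝ)]
    refine (Finset.sum_le_sum fun v _ ↦ Finset.sum_le_sum fun w _ ↦
      S.norm_integral_exp_moebius_wordProd_sub_le v w ht).trans ?_
    simp only [Finset.sum_add_distrib, ← Finset.mul_sum, Finset.sum_ite_eq, Finset.mem_univ,
      if_true]
    gcongr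
    · simp [M]
    · exact S.sum_rieszKernel_le n
  simp only [expAverage, norm_mul, mul_pow, norm_inv, norm_pow, Complex.norm_natCast,
    intervalIntegral.integral_const_mul]
  calc _ ≤ (M ^ n)⁻¹ ^ 2 * (M ^ n + B * (2 / √c * M ^ (2 * n))) := by gcongr
    _ = _ := by
      rw [two_mul, pow_add]
      field_simp

end IsSeparatedSystem

/-- A probability measure on `(0, 1)` that is the average of its images under the maps `g i`. -/
structure IsSelfSimilarMeasure {ι : Type*} [Fintype ι] (g : ι → Mat2) (μ : Measure ℝ) : Prop where
  isProbabilityMeasure : IsProbabilityMeasure μ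
  ae_mem_Ioo : ∀ᵐ x ∂μ, x ∈ Set.Ioo (0 : ℝ) 1
  eq_average : μ = (Fintype.card ι : ℝ≥0∞)⁻¹ • ∑ i, μ.map (moebius (g i))

namespace IsSelfSimilarMeasure
variable {ι : Type*} [Fintype ι] {g : ι → Mat2} {μ : Measure ℝ} {φ : ℝ → ℂ}

lemma integral_eq_average (hμ : IsSelfSimilarMeasure g μ) (hφ : Measurable φ)
    (hbdd : ∀ x, ‖φ x‖ ≤ 1) :
    ∫ x, φ x ∂μ = (Fintype.card ι : ℂ)⁻¹ * ∑ i, ∫ y, φ (moebius (g i) y) ∂μ := by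
  have := hμ.isProbabilityMeasure
  have hint (i : ι) : Integrable φ (μ.map (moebius (g i))) :=
    .of_bound hφ.aestronglyMeasurable 1 (.of_forall hbdd)
  have integral_comp (i : ι) : ∫ y, φ (moebius (g i) y) ∂μ = ∫ x, φ x ∂μ.map (moebius (g i)) :=
    (integral_map (measurable_moebius _).aemeasurable hφ.aestronglyMeasurable).symm
  simp only [integral_comp]
  rw [← integral_finsetSum_measure fun i _ ↦ hint i]
  conv_lhs => rw [hμ.eq_average, integral_smul_measure]
  simp

lemma integral_eq_average_wordProd (hμ : IsSelfSimilarMeasure g μ)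
    (hg : ∀ i, IsContinuant (g i)) (n : ℕ) (hφ : Measurable φ) (hbdd : ∀ x, ‖φ x‖ ≤ 1) :
    ∫ x, φ x ∂μ = ((Fintype.card ι : ℂ) ^ n)⁻¹ *
      ∑ w : Fin n → ι, ∫ y, φ (moebius (wordProd g w) y) ∂μ := by
  induction n generalizing φ with
  | zero => simp
  | succ n ih =>
    rw [hμ.integral_eq_average hφ hbdd, sum_word_cons, pow_succ', mul_inv, mul_assoc,
      Finset.mul_sum _ _ ((_ : ℂ) ^ n)⁻¹]
    congr 1
    refine Finset.sum_congr rfl fun i _ ↦ ?_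
    rw [ih (φ := fun y ↦ φ (moebius (g i) y)) (hφ.comp (measurable_moebius _)) fun _ ↦ hbdd _]
    congr 1
    refine Finset.sum_congr rfl fun w _ ↦ integral_congr_ae ?_
    filter_upwards [hμ.ae_mem_Ioo] with y hy
    rw [wordProd_cons, (hg i).moebius_mul (isContinuant_wordProd hg w) hy.1.le]

end IsSelfSimilarMeasure

/-! ### Fourier decay of self-similar measures -/

/-- The image of `(0, 1)` under an increasing Möbius map. -/
def cell (g : Mat2) : Set ℝ := Set.Ioo (moebius g 0) (moebius g 1)

/-- The characteristic function of `μ` decays at least like a power of the frequency. -/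
def HasPolynomialFourierDecay (μ : Measure ℝ) : Prop :=
  ∃ C η : ℝ, 0 < η ∧ ∀ t : ℝ, 1 ≤ t → ‖charFun μ t‖ ≤ C * t ^ (-η)

lemma measurableSet_cell (g : Mat2) : MeasurableSet (cell g) := measurableSet_Ioo

lemma volume_cell_ne_top (g : Mat2) : volume (cell g) ≠ ⊤ := measure_Ioo_lt_top.ne

lemma charFun_eq_integral_exp_I_mul (μ : Measure ℝ) (t : ℝ) :
    charFun μ t = ∫ x, Complex.exp (Complex.I * (t * x : ℝ)) ∂μ := by
  rw [charFun_apply_real]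
  congr with x
  rw [mul_comm, Complex.ofReal_mul]

namespace IsSeparatedSystem
variable {ι : Type*} [Fintype ι] {g : ι → Mat2} {X Y l c t : ℝ} {n : ℕ} {μ : Measure ℝ}

lemma le_length_cell (S : IsSeparatedSystem g X Y l c) (w : Fin n → ι) :
    (2 * ((X * Y) ^ n) ^ 2)⁻¹ ≤ moebius (wordProd g w) 1 - moebius (wordProd g w) 0 := by
  have hw := S.continuant_wordProd w
  have hle := S.denom_le_pow w
  rw [hw.moebius_sub zero_le_one le_rfl, S.det_wordProd, one_mul, sub_zero, inv_eq_one_div]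
  refine div_le_div_of_nonneg_left zero_le_one
    (mul_pos (hw.denom_pos zero_le_one) (hw.denom_pos le_rfl)) ?_
  calc _ ≤ (2 * (X * Y) ^ n) * (X * Y) ^ n :=
        mul_le_mul ((hw.denom_le zero_le_one le_rfl).trans (by gcongr)) (by simpa using hle)
          (hw.denom_pos le_rfl).le (by linarith [hw.pos₁₁])
    _ = 2 * ((X * Y) ^ n) ^ 2 := by ring

lemma disjoint_cell (S : IsSeparatedSystem g X Y l c) {v w : Fin n → ι} (hvw : v ≠ w) :
    Disjoint (cell (wordProd g v)) (cell (wordProd g w)) := by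
  rw [Set.disjoint_left]
  intro x hxv hxw
  obtain ⟨y, hy, hyx⟩ := (S.continuant_wordProd v).Ioo_subset_image_moebius hxv
  obtain ⟨z, hz, hzx⟩ := (S.continuant_wordProd w).Ioo_subset_image_moebius hxw
  exact hvw (S.eq_of_moebius_wordProd_eq v w hy hz (hyx.trans hzx.symm))

lemma integrableOn_norm_expAverage_sq (S : IsSeparatedSystem g X Y l c) (n : ℕ) (t : ℝ)
    {s : Set ℝ} (hs : volume s ≠ ⊤) : IntegrableOn (fun y ↦ ‖expAverage g n t y‖ ^ 2) s := by
  refine Measure.integrableOn_of_bounded (M := 1) hs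
    ((measurable_expAverage g n t).norm.pow_const 2).aestronglyMeasurable (.of_forall fun y ↦ ?_)
  rw [Real.norm_of_nonneg (by positivity)]
  exact pow_le_one₀ (norm_nonneg _) (S.norm_expAverage_le_one n t y)

lemma sum_setIntegral_cell_le (S : IsSeparatedSystem g X Y l c) (n : ℕ) (t : ℝ) :
    ∑ w : Fin n → ι, ∫ y in cell (wordProd g w), ‖expAverage g n t y‖ ^ 2 ≤
      ∫ y in (0 : ℝ)..1, ‖expAverage g n t y‖ ^ 2 := by
  have subset (w : Fin n → ι) : cell (wordProd g w) ⊆ Set.Ioc 0 1 := fun y hy ↦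
    ⟨((S.continuant_wordProd w).moebius_nonneg le_rfl).trans_lt hy.1,
      hy.2.le.trans ((S.continuant_wordProd w).moebius_le_one zero_le_one le_rfl)⟩
  rw [intervalIntegral.integral_of_le zero_le_one, ← integral_iUnion_fintype
    (fun _ ↦ measurableSet_cell _) (fun _ _ hvw ↦ S.disjoint_cell hvw)
    fun _ ↦ S.integrableOn_norm_expAverage_sq n t (volume_cell_ne_top _)]
  exact setIntegral_mono_set (S.integrableOn_norm_expAverage_sq n t (by simp))
    (.of_forall fun y ↦ by positivity) (Set.iUnion_subset subset).eventuallyLE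

lemma norm_integral_expAverage_moebius_sub_le (S : IsSeparatedSystem g X Y l c)
    (hμ : IsSelfSimilarMeasure g μ) (w : Fin n → ι) (ht : 0 < t) {y : ℝ}
    (hy : y ∈ cell (wordProd g w)) :
    ‖∫ z, expAverage g n t (moebius (wordProd g w) z) ∂μ - expAverage g n t y‖ ≤
      t / X ^ (4 * n) := by
  have := hμ.isProbabilityMeasure
  have hX := S.X_pos
  have hw := S.continuant_wordProd w
  obtain ⟨u, hu, rfl⟩ := hw.Ioo_subset_image_moebius hy
  have hint : Integrable (fun z ↦ expAverage g n t (moebius (wordProd g w) z)) μ :=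
    .of_bound ((measurable_expAverage g n t).comp (measurable_moebius _)).aestronglyMeasurable 1
      (.of_forall fun z ↦ S.norm_expAverage_le_one n t _)
  have close : ∀ᵐ z ∂μ, ‖expAverage g n t (moebius (wordProd g w) z) -
      expAverage g n t (moebius (wordProd g w) u)‖ ≤ t / X ^ (4 * n) := by
    filter_upwards [hμ.ae_mem_Ioo] with z hz
    calc _ ≤ t * (|moebius (wordProd g w) z - moebius (wordProd g w) u| / X ^ (2 * n)) := by
          simpa only [abs_of_pos ht] using S.norm_expAverage_sub_le n t
            (hw.moebius_nonneg hz.1.le) (hw.moebius_nonneg hu.1.le)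
      _ ≤ t * (|z - u| / X ^ (2 * n) / X ^ (2 * n)) := by
          gcongr
          exact S.abs_moebius_wordProd_sub_le w hz.1.le hu.1.le
      _ ≤ t * (1 / X ^ (2 * n) / X ^ (2 * n)) := by
          gcongr
          rw [abs_le]
          constructor <;> linarith [hz.1, hz.2, hu.1, hu.2]
      _ = t / X ^ (4 * n) := by
          rw [div_div, ← pow_add, mul_one_div]
          ring_nf
  calc _ = ‖∫ z, (expAverage g n t (moebius (wordProd g w) z) -
          expAverage g n t (moebius (wordProd g w) u)) ∂μ‖ := by
        rw [integral_sub hint (integrable_const _)]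
        simp
    _ ≤ _ := by simpa using norm_integral_le_of_norm_le_const close

/-- Averaging over the cell the value of the transform, nearly constant there. -/
lemma norm_integral_expAverage_moebius_sq_le (S : IsSeparatedSystem g X Y l c)
    (hμ : IsSelfSimilarMeasure g μ) (w : Fin n → ι) (ht : 0 < t) :
    ‖∫ z, expAverage g n t (moebius (wordProd g w) z) ∂μ‖ ^ 2 ≤ 2 * (t / X ^ (4 * n)) ^ 2 +
      4 * ((X * Y) ^ n) ^ 2 * ∫ y in cell (wordProd g w), ‖expAverage g n t y‖ ^ 2 := by
  have hX := S.X_pos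
  have hY := S.Y_pos
  have hlength := S.le_length_cell w
  set a := ∫ z, expAverage g n t (moebius (wordProd g w) z) ∂μ
  set ε := t / X ^ (4 * n)
  set L := moebius (wordProd g w) 1 - moebius (wordProd g w) 0
  set J := ∫ y in cell (wordProd g w), ‖expAverage g n t y‖ ^ 2
  have hL : 0 < L := lt_of_lt_of_le (by positivity) hlength
  have : 0 ≤ J := setIntegral_nonneg (measurableSet_cell _) fun y _ ↦ by positivity
  have hvolume : volume.real (cell (wordProd g w)) = L :=
    Real.volume_real_Ioo_of_le (sub_nonneg.1 hL.le)
  have pointwise (y) (hy : y ∈ cell (wordProd g w)) :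
      ‖a‖ ^ 2 ≤ 2 * ε ^ 2 + 2 * ‖expAverage g n t y‖ ^ 2 := by
    have : ‖a‖ ≤ ε + ‖expAverage g n t y‖ := (norm_le_norm_sub_add _ _).trans
      (add_le_add_left (S.norm_integral_expAverage_moebius_sub_le hμ w ht hy) _)
    nlinarith [sq_nonneg (ε - ‖expAverage g n t y‖), norm_nonneg a]
  have hF := (S.integrableOn_norm_expAverage_sq n t
    (volume_cell_ne_top (wordProd g w))).const_mul 2
  have hconst (r : ℝ) : IntegrableOn (fun _ ↦ r) (cell (wordProd g w)) :=
    integrableOn_const (volume_cell_ne_top _)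
  have averaged : L * ‖a‖ ^ 2 ≤ L * (2 * ε ^ 2) + 2 * J := by
    have := setIntegral_mono_on (hconst _) ((hconst _).add hF) (measurableSet_cell _) pointwise
    rwa [integral_add' (hconst _) hF, setIntegral_const, setIntegral_const, integral_const_mul,
      hvolume, smul_eq_mul, smul_eq_mul] at this
  calc ‖a‖ ^ 2 ≤ 2 * ε ^ 2 + 2 * J * L⁻¹ := by
        rw [← div_eq_mul_inv, ← sub_le_iff_le_add', le_div_iff₀ hL]
        linarith
    _ ≤ 2 * ε ^ 2 + 2 * J * (2 * ((X * Y) ^ n) ^ 2) := by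
        gcongr
        exact inv_le_of_inv_le₀ (by positivity) hlength
    _ = _ := by ring

lemma charFun_eq_integral_expAverage (S : IsSeparatedSystem g X Y l c)
    (hμ : IsSelfSimilarMeasure g μ) (n : ℕ) (t : ℝ) :
    charFun μ t = ∫ y, expAverage g n t y ∂μ := by
  have := hμ.isProbabilityMeasure
  unfold expAverage
  rw [charFun_eq_integral_exp_I_mul, integral_const_mul, integral_finsetSum _ fun w _ ↦
      integrable_exp_I_mul ((measurable_moebius (wordProd g w)).const_mul t),
    hμ.integral_eq_average_wordProd S.continuant n (by fun_prop)
      fun x ↦ (Complex.norm_exp_I_mul_ofReal _).le]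

lemma norm_charFun_sq_le (S : IsSeparatedSystem g X Y l c) (hμ : IsSelfSimilarMeasure g μ) (n : ℕ)
    (ht : 0 < t) :
    ‖charFun μ t‖ ^ 2 ≤ 2 * (t / X ^ (4 * n)) ^ 2 + 4 * ((X * Y) ^ n) ^ 2 *
      ((Fintype.card ι : ℝ) ^ n)⁻¹ * ∫ y in (0 : ℝ)..1, ‖expAverage g n t y‖ ^ 2 := by
  have hM := S.card_pos
  have hX := S.X_pos
  have hY := S.Y_pos
  rw [S.charFun_eq_integral_expAverage hμ n t, hμ.integral_eq_average_wordProd S.continuant n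
    (measurable_expAverage g n t) (S.norm_expAverage_le_one n t), norm_mul, mul_pow, norm_inv,
    norm_pow, Complex.norm_natCast]
  set M : ℝ := (Fintype.card ι : ℝ)
  set J := ∫ y in (0 : ℝ)..1, ‖expAverage g n t y‖ ^ 2
  set a := fun w : Fin n → ι ↦ ∫ y, expAverage g n t (moebius (wordProd g w) y) ∂μ
  have cauchy_schwarz : ‖∑ w, a w‖ ^ 2 ≤ M ^ n * ∑ w, ‖a w‖ ^ 2 := by
    refine (pow_le_pow_left₀ (norm_nonneg _) (norm_sum_le _ _) 2).trans
      (sq_sum_le_card_mul_sum_sq.trans_eq ?_)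
    simp [M]
  have sum_le : ∑ w, ‖a w‖ ^ 2 ≤
      M ^ n * (2 * (t / X ^ (4 * n)) ^ 2) + 4 * ((X * Y) ^ n) ^ 2 * J := by
    refine (Finset.sum_le_sum fun w _ ↦ S.norm_integral_expAverage_moebius_sq_le hμ w ht).trans ?_
    rw [Finset.sum_add_distrib]
    refine add_le_add (by simp [M]) ?_
    rw [← Finset.mul_sum]
    gcongr
    exact S.sum_setIntegral_cell_le n t
  calc _ ≤ (M ^ n)⁻¹ ^ 2 * (M ^ n * (M ^ n * (2 * (t / X ^ (4 * n)) ^ 2) +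
          4 * ((X * Y) ^ n) ^ 2 * J)) := by
        gcongr
        exact cauchy_schwarz.trans (by gcongr)
    _ = _ := by field_simp

lemma sqrt_le_of_pow_le (S : IsSeparatedSystem g X Y l c) (ht : (X ^ 4 / Y ^ 2) ^ n ≤ t) :
    √(((X * Y) ^ n) ^ 9 / ((X ^ n) ^ 7 * t)) ≤ (Y ^ n) ^ 6 / X ^ n := by
  have hX := S.X_pos
  have hY := S.Y_pos
  have ht0 : 0 < t := lt_of_lt_of_le (by positivity) ht
  have hy : 1 ≤ Y ^ n := one_le_pow₀ (by linarith [S.two_le])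
  rw [div_pow, pow_right_comm, pow_right_comm Y] at ht
  rw [mul_pow]
  refine Real.sqrt_le_iff.2 ⟨by positivity, ?_⟩
  rw [div_le_iff₀ (by positivity)]
  calc (X ^ n * Y ^ n) ^ 9 ≤ (X ^ n * Y ^ n) ^ 9 * Y ^ n :=
        le_mul_of_one_le_right (by positivity) hy
    _ = ((Y ^ n) ^ 6 / X ^ n) ^ 2 * ((X ^ n) ^ 7 * ((X ^ n) ^ 4 / (Y ^ n) ^ 2)) := by field_simp
    _ ≤ _ := by gcongr

lemma mul_integral_norm_expAverage_sq_le (S : IsSeparatedSystem g X Y l c)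
    (ht : (X ^ 4 / Y ^ 2) ^ n ≤ t) :
    4 * ((X * Y) ^ n) ^ 2 * ((Fintype.card ι : ℝ) ^ n)⁻¹ *
        ∫ y in (0 : ℝ)..1, ‖expAverage g n t y‖ ^ 2 ≤
      (4 + 4 * (608 * (2 / √c))) * (Y ^ n)⁻¹ ^ 2 := by
  have hX := S.X_pos
  have hY := S.Y_pos
  have ht0 : 0 < t := lt_of_lt_of_le (by positivity) ht
  have hy : 1 ≤ Y ^ n := one_le_pow₀ (by linarith [S.two_le])
  have hcard : ((Fintype.card ι : ℝ) ^ n)⁻¹ ≤ (X ^ n * (Y ^ n) ^ 10)⁻¹ := by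
    refine inv_anti₀ (by positivity) ?_
    rw [pow_right_comm, ← mul_pow]
    exact pow_le_pow_left₀ (by positivity) S.le_card n
  have hnonneg : 0 ≤ ∫ y in (0 : ℝ)..1, ‖expAverage g n t y‖ ^ 2 :=
    intervalIntegral.integral_nonneg zero_le_one fun y _ ↦ by positivity
  calc _ ≤ 4 * ((X * Y) ^ n) ^ 2 * (X ^ n * (Y ^ n) ^ 10)⁻¹ * ((X ^ n * (Y ^ n) ^ 10)⁻¹ +
          608 * ((Y ^ n) ^ 6 / X ^ n) * (2 / √c)) := by
        gcongr
        refine (S.integral_norm_expAverage_sq_le n ht0).trans ?_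
        gcongr
        exact S.sqrt_le_of_pow_le ht
    _ = 4 * (((Y ^ n) ^ 16)⁻¹ * (Y ^ n)⁻¹ ^ 2) + 4 * (608 * (2 / √c)) * (Y ^ n)⁻¹ ^ 2 := by
        rw [mul_pow]
        field_simp
    _ ≤ 4 * (1 * (Y ^ n)⁻¹ ^ 2) + 4 * (608 * (2 / √c)) * (Y ^ n)⁻¹ ^ 2 := by
        gcongr
        exact inv_le_one_of_one_le₀ (one_le_pow₀ hy)
    _ = _ := by ring

lemma norm_charFun_sq_le_of_mem_Ico (S : IsSeparatedSystem g X Y l c)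
    (hμ : IsSelfSimilarMeasure g μ)
    (ht : t ∈ Set.Ico ((X ^ 4 / Y ^ 2) ^ n) ((X ^ 4 / Y ^ 2) ^ (n + 1))) :
    ‖charFun μ t‖ ^ 2 ≤ (2 * X ^ 8 + 4 + 4 * (608 * (2 / √c))) * (Y ^ n)⁻¹ ^ 2 := by
  have hX := S.X_pos
  have hY := S.Y_pos
  have ht0 : 0 < t := lt_of_lt_of_le (by positivity) ht.1
  have hY1 : 1 ≤ Y := by linarith [S.two_le]
  have frequency_le : t / X ^ (4 * n) ≤ X ^ 4 * (Y ^ n)⁻¹ := by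
    calc t / X ^ (4 * n) ≤ (X ^ 4 / Y ^ 2) ^ (n + 1) / X ^ (4 * n) := by
          gcongr
          exact ht.2.le
      _ = X ^ 4 * (Y ^ (n + (n + 2)))⁻¹ := by
          rw [div_pow, ← pow_mul, ← pow_mul]
          field_simp
          ring
      _ ≤ X ^ 4 * (Y ^ n)⁻¹ := by
          gcongr
          omega
  calc ‖charFun μ t‖ ^ 2 ≤ 2 * (X ^ 4 * (Y ^ n)⁻¹) ^ 2 +
        (4 + 4 * (608 * (2 / √c))) * (Y ^ n)⁻¹ ^ 2 := by
        refine (S.norm_charFun_sq_le hμ n ht0).trans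
          (add_le_add ?_ (S.mul_integral_norm_expAverage_sq_le ht.1))
        gcongr
    _ = _ := by ring

lemma hasPolynomialFourierDecay (S : IsSeparatedSystem g X Y l c)
    (hμ : IsSelfSimilarMeasure g μ) : HasPolynomialFourierDecay μ := by
  have hX := S.X_pos
  have hY := S.Y_pos
  have hY1 : 1 < Y := by linarith [S.two_le]
  set D := X ^ 4 / Y ^ 2 with hD_def
  have hD1 : 1 < D := by
    rw [hD_def, one_lt_div (by positivity)]
    calc Y ^ 2 < Y ^ 4 := pow_lt_pow_right₀ hY1 (by norm_num)
      _ ≤ X ^ 4 := pow_le_pow_left₀ hY.le S.le 4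
  have hD : 0 < D := one_pos.trans hD1
  set K := 2 * X ^ 8 + 4 + 4 * (608 * (2 / √c))
  have hK : 0 ≤ K := by positivity
  set η := Real.logb D Y
  have hη : 0 < η := Real.logb_pos hD1 hY1
  have hDη (n : ℕ) : (D ^ n) ^ (-η) = (Y ^ n)⁻¹ := by
    rw [Real.rpow_neg (by positivity), ← Real.rpow_pow_comm hD.le, Real.rpow_logb hD hD1.ne' hY]
  refine ⟨√K * Y, η, hη, fun t ht ↦ ?_⟩
  obtain ⟨n, hn, hn_succ⟩ := exists_nat_pow_near ht hD1
  have hsq := S.norm_charFun_sq_le_of_mem_Ico hμ ⟨hn, hn_succ⟩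
  calc ‖charFun μ t‖ ≤ √K * (Y ^ n)⁻¹ := by
        refine le_of_sq_le_sq ?_ (by positivity)
        rwa [mul_pow, Real.sq_sqrt hK]
    _ = √K * Y * (Y ^ (n + 1))⁻¹ := by
        rw [pow_succ]
        field_simp
    _ ≤ √K * Y * t ^ (-η) := by
        rw [← hDη (n + 1)]
        gcongr ?_ * ?_
        exact Real.rpow_le_rpow_of_nonpos (one_pos.trans_le ht) hn_succ.le (by linarith)

end IsSeparatedSystem

/-! ### Weyl sums of a measure with Fourier decay -/

lemma tendsto_norm_sum_range_div_of_sq {e : ℕ → ℂ} (he : ∀ j, ‖e j‖ ≤ 1)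
    (hsq : Tendsto (fun m : ℕ ↦ ‖∑ j ∈ Finset.range (m ^ 2), e j‖ / (m : ℝ) ^ 2) atTop (𝓝 0)) :
    Tendsto (fun N : ℕ ↦ ‖∑ j ∈ Finset.range N, e j‖ / (N : ℝ)) atTop (𝓝 0) := by
  have sqrt_tendsto : Tendsto Nat.sqrt atTop atTop :=
    tendsto_atTop_atTop.2 fun b ↦ ⟨b ^ 2, fun _ ha ↦ Nat.le_sqrt'.2 ha⟩
  have majorant : Tendsto (fun m : ℕ ↦ ‖∑ j ∈ Finset.range (m ^ 2), e j‖ / (m : ℝ) ^ 2 +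
      2 / (m : ℝ)) atTop (𝓝 0) := by
    simpa using hsq.add (tendsto_const_div_atTop_nhds_zero_nat (2 : ℝ))
  refine squeeze_zero' (.of_forall fun N ↦ by positivity) ?_ (majorant.comp sqrt_tendsto)
  filter_upwards [eventually_ge_atTop 1] with N hN
  rw [Function.comp_apply]
  set m := N.sqrt
  have hm : (0 : ℝ) < m := by exact_mod_cast Nat.sqrt_pos.2 hN
  have sq_le : m ^ 2 ≤ N := Nat.sqrt_le' N
  obtain ⟨k, hk⟩ := Nat.exists_eq_add_of_le sq_le
  have hk_le : k ≤ 2 * m := by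
    have : N ≤ m * m + m + m := Nat.sqrt_le_add N
    rw [pow_two] at hk
    omega
  have sum_le : ‖∑ j ∈ Finset.range N, e j‖ ≤ ‖∑ j ∈ Finset.range (m ^ 2), e j‖ + 2 * m := by
    rw [hk, Finset.sum_range_add]
    refine (norm_add_le _ _).trans ?_
    gcongr
    calc ‖∑ j ∈ Finset.range k, e (m ^ 2 + j)‖ ≤ ∑ _j ∈ Finset.range k, (1 : ℝ) :=
          norm_sum_le_of_le _ fun _ _ ↦ he _
      _ ≤ 2 * m := by simpa using mod_cast hk_le
  calc _ ≤ (‖∑ j ∈ Finset.range (m ^ 2), e j‖ + 2 * m) / (m : ℝ) ^ 2 :=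
        div_le_div₀ (by positivity) sum_le (by positivity) (mod_cast sq_le)
    _ = _ := by field_simp

lemma ae_tendsto_zero_of_summable_integral_sq {Ω : Type*} [MeasurableSpace Ω] {μ : Measure Ω}
    {f : ℕ → Ω → ℝ} (hf : ∀ m, 0 ≤ f m) (hmeas : ∀ m, Measurable (f m))
    (hint : ∀ m, Integrable (fun x ↦ f m x ^ 2) μ)
    (hsum : Summable fun m ↦ ∫ x, f m x ^ 2 ∂μ) :
    ∀ᵐ x ∂μ, Tendsto (fun m ↦ f m x) atTop (𝓝 0) := by
  have measurable_sq (m : ℕ) : Measurable fun x ↦ ENNReal.ofReal (f m x ^ 2) :=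
    ((hmeas m).pow_const 2).ennreal_ofReal
  have tsum_ne_top : ∫⁻ x, ∑' m, ENNReal.ofReal (f m x ^ 2) ∂μ ≠ ⊤ := by
    rw [lintegral_tsum fun m ↦ (measurable_sq m).aemeasurable]
    simp_rw [← ofReal_integral_eq_lintegral_ofReal (hint _) (.of_forall fun _ ↦ sq_nonneg _)]
    rw [← ENNReal.ofReal_tsum_of_nonneg (fun m ↦ integral_nonneg fun _ ↦ sq_nonneg _) hsum]
    exact ENNReal.ofReal_ne_top
  filter_upwards [ae_lt_top (Measurable.tsum measurable_sq) tsum_ne_top] with x hx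
  have sq_tendsto : Tendsto (fun m ↦ f m x ^ 2) atTop (𝓝 0) := by
    refine ((ENNReal.tendsto_toReal ENNReal.zero_ne_top).comp
      (ENNReal.tendsto_atTop_zero_of_tsum_ne_top hx.ne)).congr fun m ↦ ?_
    exact ENNReal.toReal_ofReal (sq_nonneg _)
  simpa only [Function.comp_def, Real.sqrt_zero, Real.sqrt_sq (hf _ x)] using
    (Real.continuous_sqrt.tendsto 0).comp sq_tendsto

lemma ae_tendsto_norm_sum_range_div {Ω : Type*} [MeasurableSpace Ω] {μ : Measure Ω}
    [IsFiniteMeasure μ] {e : ℕ → Ω → ℂ} (hmeas : ∀ j, Measurable (e j))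
    (he : ∀ j x, ‖e j x‖ ≤ 1) {K : ℝ}
    (hK : ∀ N : ℕ, ∫ x, ‖∑ j ∈ Finset.range N, e j x‖ ^ 2 ∂μ ≤ K * N) :
    ∀ᵐ x ∂μ, Tendsto (fun N : ℕ ↦ ‖∑ j ∈ Finset.range N, e j x‖ / (N : ℝ)) atTop (𝓝 0) := by
  set f : ℕ → Ω → ℝ := fun m x ↦ ‖∑ j ∈ Finset.range (m ^ 2), e j x‖ / (m : ℝ) ^ 2
  have hf_nonneg (m : ℕ) : 0 ≤ f m := fun x ↦ by positivity
  have hf_meas (m : ℕ) : Measurable (f m) :=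
    (Finset.measurable_fun_sum _ fun j _ ↦ hmeas j).norm.div_const _
  have hf_le_one (m : ℕ) (x : Ω) : f m x ≤ 1 := by
    refine div_le_one_of_le₀ ((norm_sum_le_of_le _ fun j _ ↦ he j x).trans ?_) (by positivity)
    simp
  have hf_int (m : ℕ) : Integrable (fun x ↦ f m x ^ 2) μ := by
    refine .of_bound ((hf_meas m).pow_const 2).aestronglyMeasurable 1 (.of_forall fun x ↦ ?_)
    rw [Real.norm_of_nonneg (sq_nonneg _)]
    exact pow_le_one₀ (hf_nonneg m x) (hf_le_one m x)
  have integral_le (m : ℕ) : ∫ x, f m x ^ 2 ∂μ ≤ K * (1 / (m : ℝ) ^ 2) := by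
    obtain rfl | hm := m.eq_zero_or_pos
    · simp [f]
    have : (0 : ℝ) < m := by exact_mod_cast hm
    simp only [f, div_pow]
    rw [integral_div, div_le_iff₀ (by positivity)]
    refine (hK (m ^ 2)).trans_eq ?_
    push_cast
    field_simp
  have summable : Summable fun m ↦ ∫ x, f m x ^ 2 ∂μ :=
    .of_nonneg_of_le (fun m ↦ integral_nonneg fun x ↦ sq_nonneg _) integral_le
      ((Real.summable_one_div_nat_pow.2 one_lt_two).mul_left K)
  filter_upwards [ae_tendsto_zero_of_summable_integral_sq hf_nonneg hf_meas hf_int summable]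
    with x hx
  exact tendsto_norm_sum_range_div_of_sq (fun j ↦ he j x) hx

/-- The `j`-th term `exp (2 π i k q ^ j x)` of the Weyl sums of the sequence `q ^ j * x`. -/
noncomputable def weylExp (k q : ℕ) (x : ℝ) (j : ℕ) : ℂ :=
  Complex.exp (Complex.I * (2 * Real.pi * k * q ^ j * x : ℝ))

lemma norm_weylExp (k q : ℕ) (x : ℝ) (j : ℕ) : ‖weylExp k q x j‖ = 1 :=
  Complex.norm_exp_I_mul_ofReal _

lemma measurable_weylExp (k q j : ℕ) : Measurable fun x ↦ weylExp k q x j := by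
  unfold weylExp
  fun_prop

lemma two_pow_le_frequency_sub {k q i j : ℕ} (hk : 1 ≤ k) (hq : 2 ≤ q) (hji : j < i) :
    (2 : ℝ) ^ i ≤ 2 * Real.pi * k * q ^ i - 2 * Real.pi * k * q ^ j := by
  have hq' : (2 : ℝ) ≤ q := by exact_mod_cast hq
  have hk' : (1 : ℝ) ≤ k := by exact_mod_cast hk
  have double_le : (2 : ℝ) * q ^ j ≤ q ^ i := by
    calc (2 : ℝ) * q ^ j ≤ q * q ^ j := by gcongr
      _ = (q : ℝ) ^ (j + 1) := by ring
      _ ≤ _ := pow_le_pow_right₀ (by linarith) hji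
  have hnonneg : (0 : ℝ) ≤ q ^ i - q ^ j := by
    have : (0 : ℝ) ≤ q ^ j := by positivity
    linarith
  have one_le : (1 : ℝ) ≤ Real.pi * k := by nlinarith [Real.pi_gt_three]
  calc (2 : ℝ) ^ i ≤ q ^ i := by gcongr
    _ ≤ 2 * (1 * (q ^ i - q ^ j)) := by linarith
    _ ≤ 2 * (Real.pi * k * (q ^ i - q ^ j)) := by gcongr
    _ = _ := by ring

section FourierDecay
variable {μ : Measure ℝ} [IsProbabilityMeasure μ] {C η : ℝ} {k q : ℕ}

lemma norm_charFun_frequency_sub_le (hη : 0 < η)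
    (hdecay : ∀ t : ℝ, 1 ≤ t → ‖charFun μ t‖ ≤ C * t ^ (-η)) (hk : 1 ≤ k) (hq : 2 ≤ q) (i j : ℕ) :
    ‖charFun μ (2 * Real.pi * k * q ^ i - 2 * Real.pi * k * q ^ j)‖ ≤
      (if i = j then 1 else 0) + C * (((2 : ℝ) ^ (-η / 2)) ^ i * ((2 : ℝ) ^ (-η / 2)) ^ j) := by
  have hC : 0 ≤ C := (norm_nonneg _).trans (by simpa using hdecay 1 le_rfl)
  wlog hji : j ≤ i generalizing i j
  · rw [← neg_sub, charFun_neg, RCLike.norm_conj, mul_comm (_ ^ i)]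
    simpa only [eq_comm (a := i)] using this j i (by omega)
  obtain rfl | hji := hji.eq_or_lt
  · rw [if_pos rfl]
    exact (norm_charFun_le_one _).trans (le_add_of_nonneg_right (by positivity))
  rw [if_neg hji.ne', zero_add]
  set ρ : ℝ := (2 : ℝ) ^ (-η / 2) with hρ_def
  have hρ : 0 < ρ := by positivity
  have hρ_le : ρ ≤ 1 := Real.rpow_le_one_of_one_le_of_nonpos one_le_two (by linarith)
  have two_pow_le := two_pow_le_frequency_sub hk hq hji
  refine (hdecay _ ((one_le_pow₀ one_le_two).trans two_pow_le)).trans ?_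
  gcongr
  calc _ ≤ ((2 : ℝ) ^ i) ^ (-η) :=
        Real.rpow_le_rpow_of_nonpos (by positivity) two_pow_le (by linarith)
    _ = ρ ^ i * ρ ^ i := by
        rw [← mul_pow, hρ_def, ← Real.rpow_add two_pos, add_halves, Real.rpow_pow_comm two_pos.le]
    _ ≤ ρ ^ i * ρ ^ j := by
        gcongr ?_ * ?_
        exact pow_le_pow_of_le_one hρ.le hρ_le hji.le

lemma sum_norm_charFun_frequency_sub_le (hη : 0 < η)
    (hdecay : ∀ t : ℝ, 1 ≤ t → ‖charFun μ t‖ ≤ C * t ^ (-η)) (hk : 1 ≤ k) (hq : 2 ≤ q) (N : ℕ) :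
    ∑ i ∈ Finset.range N, ∑ j ∈ Finset.range N,
        ‖charFun μ (2 * Real.pi * k * q ^ i - 2 * Real.pi * k * q ^ j)‖ ≤
      N + C * ((1 - (2 : ℝ) ^ (-η / 2))⁻¹ * (1 - (2 : ℝ) ^ (-η / 2))⁻¹) := by
  have hC : 0 ≤ C := (norm_nonneg _).trans (by simpa using hdecay 1 le_rfl)
  refine (Finset.sum_le_sum fun i _ ↦ Finset.sum_le_sum fun j _ ↦
    norm_charFun_frequency_sub_le hη hdecay hk hq i j).trans ?_
  set ρ : ℝ := (2 : ℝ) ^ (-η / 2)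
  have hρ : 0 < ρ := by positivity
  have hρ_lt : ρ < 1 := Real.rpow_lt_one_of_one_lt_of_neg one_lt_two (by linarith)
  have geom_le : ∑ i ∈ Finset.range N, ρ ^ i ≤ (1 - ρ)⁻¹ := by
    rw [← tsum_geometric_of_lt_one hρ.le hρ_lt]
    exact (summable_geometric_of_lt_one hρ.le hρ_lt).sum_le_tsum _ fun _ _ ↦ by positivity
  have geom_nonneg : 0 ≤ ∑ i ∈ Finset.range N, ρ ^ i := by positivity
  simp only [Finset.sum_add_distrib]
  refine add_le_add (le_of_eq ?_) ?_
  · rw [Finset.sum_congr rfl fun i hi ↦ by rw [Finset.sum_ite_eq, if_pos hi]]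
    simp
  · simp only [← Finset.mul_sum, ← Finset.sum_mul]
    gcongr

end FourierDecay

namespace HasPolynomialFourierDecay
variable {μ : Measure ℝ} [IsProbabilityMeasure μ] {k q : ℕ}

lemma exists_integral_norm_sum_weylExp_sq_le (h : HasPolynomialFourierDecay μ) (hk : 1 ≤ k)
    (hq : 2 ≤ q) :
    ∃ K : ℝ, ∀ N : ℕ, ∫ x, ‖∑ j ∈ Finset.range N, weylExp k q x j‖ ^ 2 ∂μ ≤ K * N := by
  obtain ⟨C, η, hη, hdecay⟩ := h
  have hC : 0 ≤ C := (norm_nonneg _).trans (by simpa using hdecay 1 le_rfl)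
  set r := (1 - (2 : ℝ) ^ (-η / 2))⁻¹
  refine ⟨1 + C * (r * r), fun N ↦ ?_⟩
  obtain rfl | hN := N.eq_zero_or_pos
  · simp
  have hN : (1 : ℝ) ≤ N := by exact_mod_cast hN
  calc _ ≤ ∑ i ∈ Finset.range N, ∑ j ∈ Finset.range N,
        ‖charFun μ (2 * Real.pi * k * q ^ i - 2 * Real.pi * k * q ^ j)‖ := by
        simp only [charFun_eq_integral_exp_I_mul, sub_mul]
        exact integral_norm_sum_exp_sq_le _ fun j ↦ by fun_prop
    _ ≤ N + C * (r * r) := sum_norm_charFun_frequency_sub_le hη hdecay hk hq N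
    _ ≤ N + C * (r * r) * N := by
        have := mul_self_nonneg r
        exact add_le_add_right (le_mul_of_one_le_right (by positivity) hN) _
    _ = _ := by ring

lemma ae_tendsto_weylSum (h : HasPolynomialFourierDecay μ) (hk : 1 ≤ k) (hq : 2 ≤ q) :
    ∀ᵐ x ∂μ,
      Tendsto (fun N : ℕ ↦ ‖∑ j ∈ Finset.range N, weylExp k q x j‖ / (N : ℝ)) atTop (𝓝 0) := by
  obtain ⟨K, hK⟩ := h.exists_integral_norm_sum_weylExp_sq_le hk hq
  exact ae_tendsto_norm_sum_range_div (measurable_weylExp k q)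
    (fun j x ↦ (norm_weylExp k q x j).le) hK

end HasPolynomialFourierDecay

/-! ### Weyl's criterion -/

lemma norm_sum_fourier_natAbs {ι : Type*} {T : ℝ} (s : Finset ι) (z : ι → AddCircle T) (k : ℤ) :
    ‖∑ j ∈ s, fourier (k.natAbs : ℤ) (z j)‖ = ‖∑ j ∈ s, fourier k (z j)‖ := by
  obtain h | h := k.natAbs_eq
  · rw [← h]
  · rw [h, Int.natAbs_neg, Int.natAbs_natCast]
    simp only [fourier_neg, ← map_sum, RCLike.norm_conj]

section WeakConvergence
variable {ι : Type*} {L : Filter ι} {T : ℝ} [hT : Fact (0 < T)]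

lemma integral_fourier_eq_zero {n : ℤ} (hn : n ≠ 0) :
    ∫ z : AddCircle T, fourier n z ∂AddCircle.haarAddCircle = 0 :=
  integral_eq_zero_of_add_right_eq_neg (fourier_add_half_inv_index hn hT.out)

lemma dist_integral_le_dist {X : Type*} [TopologicalSpace X] [CompactSpace X] [MeasurableSpace X]
    [OpensMeasurableSpace X] (P : Measure X) [IsProbabilityMeasure P] (f g : C(X, ℂ)) :
    dist (∫ z, f z ∂P) (∫ z, g z ∂P) ≤ dist f g := by
  have integrable (h : C(X, ℂ)) : Integrable h P :=
    (BoundedContinuousFunction.mkOfCompact h).integrable P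
  rw [dist_eq_norm, ← integral_sub (integrable f) (integrable g)]
  simpa using norm_integral_le_of_norm_le_const (μ := P) (C := dist f g)
    (.of_forall fun z ↦ by rw [← dist_eq_norm]; exact ContinuousMap.dist_apply_le_dist z)

lemma tendsto_probabilityMeasure_of_tendsto_fourier {P : ι → ProbabilityMeasure (AddCircle T)}
    {Q : ProbabilityMeasure (AddCircle T)}
    (h : ∀ k : ℤ, Tendsto (fun i ↦ ∫ z, fourier k z ∂(P i : Measure (AddCircle T))) L
      (𝓝 (∫ z, fourier k z ∂(Q : Measure (AddCircle T))))) :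
    Tendsto P L (𝓝 Q) := by
  have integrable (f : C(AddCircle T, ℂ)) (R : ProbabilityMeasure (AddCircle T)) :
      Integrable f (R : Measure (AddCircle T)) :=
    (BoundedContinuousFunction.mkOfCompact f).integrable (R : Measure (AddCircle T))
  have on_span : ∀ f ∈ Submodule.span ℂ (Set.range (fourier (T := T))),
      Tendsto (fun i ↦ ∫ z, f z ∂(P i : Measure (AddCircle T))) L
        (𝓝 (∫ z, f z ∂(Q : Measure (AddCircle T)))) := by
    intro f hf
    induction hf using Submodule.span_induction with
    | mem f hf =>
      obtain ⟨k, rfl⟩ := hf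
      exact h k
    | zero => simpa using tendsto_const_nhds
    | add f g _ _ hf hg =>
      simpa only [ContinuousMap.add_apply, integral_add (integrable f _) (integrable g _)]
        using hf.add hg
    | smul a f _ hf =>
      simpa only [ContinuousMap.smul_apply, integral_smul] using hf.const_smul a
  have lipschitz (R : ProbabilityMeasure (AddCircle T)) :
      LipschitzWith 1 fun f : C(AddCircle T, ℂ) ↦ ∫ z, f z ∂(R : Measure (AddCircle T)) :=
    .mk_one fun f g ↦ dist_integral_le_dist _ f g
  have on_all (f : C(AddCircle T, ℂ)) :
      Tendsto (fun i ↦ ∫ z, f z ∂(P i : Measure (AddCircle T))) L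
        (𝓝 (∫ z, f z ∂(Q : Measure (AddCircle T)))) := by
    have equicontinuous := LipschitzWith.uniformEquicontinuous
      (fun i (f : C(AddCircle T, ℂ)) ↦ ∫ z, f z ∂(P i : Measure (AddCircle T))) 1
      fun i ↦ lipschitz (P i)
    refine (equicontinuous.equicontinuous f).tendsto_of_mem_closure
      (lipschitz Q).continuous.continuousWithinAt on_span ?_
    rw [← Submodule.topologicalClosure_coe, span_fourier_closure_eq_top]
    trivial
  exact (ProbabilityMeasure.tendsto_iff_forall_integral_rclike_tendsto ℂ).2
    fun f ↦ on_all f.toContinuousMap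

end WeakConvergence

section EmpiricalMeasure
variable {α : Type*} [MeasurableSpace α]

/-- The empirical measure of the points `u 0, …, u N`. There are `N + 1` of them, so that this is
a probability measure for every `N`. -/
noncomputable def empiricalMeasure (u : ℕ → α) (N : ℕ) : ProbabilityMeasure α :=
  ⟨((N + 1 : ℕ) : ℝ≥0∞)⁻¹ • ∑ n ∈ Finset.range (N + 1), Measure.dirac (u n), ⟨by
    simpa using ENNReal.inv_mul_cancel (by simp) (by simp)⟩⟩

lemma integral_empiricalMeasure {E : Type*} [NormedAddCommGroup E] [NormedSpace ℝ E]
    [CompleteSpace E] (u : ℕ → α) (N : ℕ) {f : α → E} (hf : StronglyMeasurable f) :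
    ∫ z, f z ∂(empiricalMeasure u N : Measure α) =
      ((N + 1 : ℕ) : ℝ)⁻¹ • ∑ n ∈ Finset.range (N + 1), f (u n) := by
  simp only [empiricalMeasure, ProbabilityMeasure.coe_mk, integral_smul_measure,
    ENNReal.toReal_inv, ENNReal.toReal_natCast]
  rw [integral_finsetSum_measure fun n _ ↦ integrable_dirac' hf (by simp)]
  simp only [integral_dirac' _ _ hf]

lemma empiricalMeasure_real (u : ℕ → α) (N : ℕ) {s : Set α} (hs : MeasurableSet s) :
    (empiricalMeasure u N : Measure α).real s =
      ((Finset.range (N + 1)).filter (u · ∈ s)).card / ((N + 1 : ℕ) : ℝ) := by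
  rw [← integral_indicator_one hs,
    integral_empiricalMeasure u N (stronglyMeasurable_one.indicator hs), smul_eq_mul,
    div_eq_inv_mul]
  simp [Set.indicator_apply]

end EmpiricalMeasure

section EquidistributedModOne

/-- Equidistribution modulo one of a sequence of real numbers. -/
def IsEquidistributedModOne (u : ℕ → ℝ) : Prop :=
  ∀ a b : ℝ, 0 ≤ a → a ≤ b → b ≤ 1 →
    Tendsto (fun N : ℕ ↦
        (((Finset.range N).filter fun n ↦ Int.fract (u n) ∈ Set.Ico a b).card : ℝ) / N)
      atTop (𝓝 (b - a))

/-- The image of `[a, b)` in the circle, for `0 ≤ a ≤ b ≤ 1`. -/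
def circleArc (a b : ℝ) : Set UnitAddCircle := {z | (AddCircle.equivIco 1 0 z : ℝ) ∈ Set.Ico a b}

lemma coe_mem_circleArc_iff {a b x : ℝ} :
    (x : UnitAddCircle) ∈ circleArc a b ↔ Int.fract x ∈ Set.Ico a b := by
  simp [circleArc, AddCircle.coe_equivIco_mk_apply]

lemma measurableSet_circleArc (a b : ℝ) : MeasurableSet (circleArc a b) :=
  (measurable_subtype_coe.comp (AddCircle.measurableEquivIco 1 0).measurable) measurableSet_Ico

lemma haarAddCircle_circleArc {a b : ℝ} (ha : 0 ≤ a) (hb : b ≤ 1) :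
    AddCircle.haarAddCircle (circleArc a b) = ENNReal.ofReal (b - a) := by
  have volume_eq : (volume : Measure UnitAddCircle) = AddCircle.haarAddCircle := by
    simp [AddCircle.volume_eq_smul_haarAddCircle]
  have preimage_inter : (fun x : ℝ ↦ (x : UnitAddCircle)) ⁻¹' circleArc a b ∩ Set.Ico 0 1 =
      Set.Ico a b := by
    ext x
    simp only [Set.mem_inter_iff, Set.mem_preimage, coe_mem_circleArc_iff]
    constructor
    · rintro ⟨hx, hx_mem⟩
      rwa [Int.fract_eq_self.2 hx_mem] at hx
    · intro hx
      have hx_mem : 0 ≤ x ∧ x < 1 := ⟨ha.trans hx.1, hx.2.trans_le hb⟩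
      exact ⟨by rwa [Int.fract_eq_self.2 hx_mem], hx_mem⟩
  rw [← volume_eq, ← (AddCircle.measurePreserving_mk 1 0).measure_preimage
    (measurableSet_circleArc a b).nullMeasurableSet,
    ← Measure.restrict_congr_set Ico_ae_eq_Ioc, Measure.restrict_apply' measurableSet_Ico,
    zero_add, ← Real.volume_Ico]
  exact congrArg volume preimage_inter

lemma frontier_circleArc_subset (a b : ℝ) :
    frontier (circleArc a b) ⊆ {(0 : UnitAddCircle), (a : UnitAddCircle), (b : UnitAddCircle)} := by
  intro z hz
  by_cases hz_zero : z = 0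
  · exact .inl hz_zero
  have continuousAt : ContinuousAt (fun z : UnitAddCircle ↦ (AddCircle.equivIco 1 0 z : ℝ)) z :=
    continuousAt_subtype_val.comp (AddCircle.continuousAt_equivIco 1 0 hz_zero)
  rw [frontier_eq_closure_inter_closure] at hz
  have mem_frontier : (AddCircle.equivIco 1 0 z : ℝ) ∈ frontier (Set.Ico a b) := by
    rw [frontier_eq_closure_inter_closure]
    exact ⟨continuousAt.continuousWithinAt.mem_closure hz.1 fun _ h ↦ h,
      continuousAt.continuousWithinAt.mem_closure hz.2 fun _ h ↦ h⟩
  obtain hab | hab := le_or_gt b a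
  · simp [Set.Ico_eq_empty hab.not_gt] at mem_frontier
  rw [frontier_Ico hab] at mem_frontier
  rw [← AddCircle.coe_equivIco (p := 1) (a := 0) (y := z)]
  exact .inr (mem_frontier.imp (congrArg _) (congrArg _))

lemma haarAddCircle_frontier_circleArc (a b : ℝ) :
    AddCircle.haarAddCircle (frontier (circleArc a b)) = 0 := by
  have : Infinite (Set.Ico (0 : ℝ) (0 + 1)) := Set.Ico.infinite (by norm_num)
  have : Nontrivial UnitAddCircle := (AddCircle.equivIco 1 0).nontrivial
  exact ((Set.toFinite _).subset (frontier_circleArc_subset a b)).measure_zero _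

lemma isEquidistributedModOne_of_tendsto_empiricalMeasure {u : ℕ → ℝ}
    (h : Tendsto (empiricalMeasure fun n ↦ (u n : UnitAddCircle)) atTop
      (𝓝 ⟨AddCircle.haarAddCircle, inferInstance⟩)) :
    IsEquidistributedModOne u := by
  intro a b ha hab hb
  have tendsto_arc := ProbabilityMeasure.tendsto_measure_of_null_frontier_of_tendsto' h
    (haarAddCircle_frontier_circleArc a b)
  rw [ProbabilityMeasure.coe_mk, haarAddCircle_circleArc ha hb] at tendsto_arc
  have tendsto_real := (ENNReal.tendsto_toReal ENNReal.ofReal_ne_top).comp tendsto_arc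
  rw [ENNReal.toReal_ofReal (sub_nonneg.2 hab)] at tendsto_real
  rw [← tendsto_add_atTop_iff_nat 1]
  refine tendsto_real.congr fun N ↦ ?_
  simp only [← coe_mem_circleArc_iff]
  exact empiricalMeasure_real (fun n ↦ (u n : UnitAddCircle)) N (measurableSet_circleArc a b)

theorem isEquidistributedModOne_of_weyl {u : ℕ → ℝ}
    (h : ∀ k : ℕ, 1 ≤ k → Tendsto (fun N : ℕ ↦
      ‖∑ j ∈ Finset.range N, Complex.exp (Complex.I * (2 * Real.pi * k * u j : ℝ))‖ / (N : ℝ))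
      atTop (𝓝 0)) :
    IsEquidistributedModOne u := by
  refine isEquidistributedModOne_of_tendsto_empiricalMeasure
    (tendsto_probabilityMeasure_of_tendsto_fourier fun k ↦ ?_)
  obtain rfl | hk := eq_or_ne k 0
  · simp
  have fourier_eq (m : ℕ) (x : ℝ) : fourier (m : ℤ) (x : UnitAddCircle) =
      Complex.exp (Complex.I * (2 * Real.pi * m * x : ℝ)) := by
    rw [fourier_coe_apply]
    push_cast
    ring_nf
  rw [ProbabilityMeasure.coe_mk, integral_fourier_eq_zero hk, tendsto_zero_iff_norm_tendsto_zero]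
  refine ((tendsto_add_atTop_iff_nat 1).2 (h k.natAbs (Int.natAbs_pos.2 hk))).congr fun N ↦ ?_
  rw [integral_empiricalMeasure _ _ (fourier k).continuous.stronglyMeasurable, norm_smul,
    div_eq_inv_mul, norm_inv, Real.norm_natCast, ← norm_sum_fourier_natAbs]
  simp only [fourier_eq]

end EquidistributedModOne

section Normality
variable {q : ℕ} {x : ℝ}

lemma qdigit_add (hx : 0 ≤ x) (n i : ℕ) :
    qdigit q x (n + i) = qdigit q (Int.fract ((q : ℝ) ^ n * x)) i := by
  simp only [qdigit, Int.floor_toNat]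
  set z := (q : ℝ) ^ n * x with hz
  have fract_add_floor : z = Int.fract z + (⌊z⌋₊ : ℝ) := by
    rw [natCast_floor_eq_intCast_floor (by positivity), Int.fract_add_floor]
  have mul_pow_eq : x * (q : ℝ) ^ (n + i + 1) =
      Int.fract z * (q : ℝ) ^ (i + 1) + (⌊z⌋₊ * q ^ i * q : ℕ) := by
    calc x * (q : ℝ) ^ (n + i + 1) = z * (q : ℝ) ^ (i + 1) := by rw [hz]; ring
      _ = (Int.fract z + ⌊z⌋₊) * (q : ℝ) ^ (i + 1) := by rw [← fract_add_floor]
      _ = _ := by push_cast; ring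
  have := Int.fract_nonneg z
  rw [mul_pow_eq, Nat.floor_add_natCast (by positivity), Nat.add_mul_mod_self_right]

lemma qdigit_eq_floor_div (hq : q ≠ 0) (i j : ℕ) :
    qdigit q x i = ⌊x * (q : ℝ) ^ (i + 1 + j)⌋₊ / q ^ j % q := by
  rw [qdigit, Int.floor_toNat, ← Nat.floor_div_natCast]
  push_cast
  rw [pow_add _ (i + 1), ← mul_assoc, mul_div_cancel_right₀ _
    (pow_ne_zero _ (Nat.cast_ne_zero.2 hq))]

lemma exists_forall_qdigit_eq_iff (hq : q ≠ 0) {m : ℕ} (d : Fin m → Fin q) :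
    ∃ D < q ^ m, ∀ y ∈ Set.Ico (0 : ℝ) 1, (∀ i : Fin m, qdigit q y i = d i) ↔
      y ∈ Set.Ico ((D : ℝ) / (q : ℝ) ^ m) ((D + 1 : ℝ) / (q : ℝ) ^ m) := by
  have pow_pos : (0 : ℝ) < (q : ℝ) ^ m := by positivity
  refine ⟨finFunctionFinEquiv (d ∘ Fin.rev), Fin.isLt _, fun y hy ↦ ?_⟩
  have floor_lt : ⌊y * (q : ℝ) ^ m⌋₊ < q ^ m := by
    rw [Nat.floor_lt (by have := hy.1; positivity)]
    simpa using mul_lt_of_lt_one_left pow_pos hy.2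
  have qdigit_eq (i : Fin m) : qdigit q y i =
      finFunctionFinEquiv.symm (⟨⌊y * (q : ℝ) ^ m⌋₊, floor_lt⟩ : Fin (q ^ m)) i.rev := by
    rw [finFunctionFinEquiv_symm_apply_val, qdigit_eq_floor_div hq i i.rev, Fin.val_rev,
      Nat.add_sub_cancel' i.isLt]
  calc (∀ i : Fin m, qdigit q y i = d i)
      ↔ finFunctionFinEquiv.symm (⟨⌊y * (q : ℝ) ^ m⌋₊, floor_lt⟩ : Fin (q ^ m)) =
        d ∘ Fin.rev := by
        simp only [qdigit_eq, Fin.val_inj, funext_iff, Function.comp]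
        exact Fin.rev_surjective.forall.trans (by simp)
    _ ↔ ⌊y * (q : ℝ) ^ m⌋₊ = finFunctionFinEquiv (d ∘ Fin.rev) := by
        rw [Equiv.symm_apply_eq, Fin.ext_iff]
    _ ↔ _ := by
        rw [Nat.floor_eq_iff (by have := hy.1; positivity), Set.mem_Ico, div_le_iff₀ pow_pos,
          lt_div_iff₀ pow_pos]

lemma isNormal_of_isEquidistributedModOne (hq : q ≠ 0) (hx : 0 ≤ x)
    (h : IsEquidistributedModOne fun n ↦ (q : ℝ) ^ n * x) : IsNormal q x := by
  intro m _ d hd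
  obtain ⟨D, hD, qdigit_iff⟩ := exists_forall_qdigit_eq_iff hq fun i ↦ ⟨d i, hd i⟩
  have frequency := h (D / (q : ℝ) ^ m) ((D + 1) / (q : ℝ) ^ m) (by positivity) (by gcongr; simp)
    (div_le_one_of_le₀ (mod_cast hD) (by positivity))
  have word_iff (n : ℕ) : (∀ i : Fin m, qdigit q x (n + i) = d i) ↔ Int.fract ((q : ℝ) ^ n * x) ∈
      Set.Ico (D / (q : ℝ) ^ m) ((D + 1) / (q : ℝ) ^ m) := by
    rw [← qdigit_iff _ ⟨Int.fract_nonneg _, Int.fract_lt_one _⟩]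
    simp only [qdigit_add hx]
  simp only [word_iff]
  convert frequency using 2
  ring

lemma isNormal_of_weyl (hq : q ≠ 0) (hx : 0 ≤ x)
    (h : ∀ k : ℕ, 1 ≤ k → Tendsto (fun N : ℕ ↦
      ‖∑ j ∈ Finset.range N, weylExp k q x j‖ / (N : ℝ)) atTop (𝓝 0)) :
    IsNormal q x := by
  refine isNormal_of_isEquidistributedModOne hq hx (isEquidistributedModOne_of_weyl fun k hk ↦ ?_)
  simpa only [weylExp, mul_assoc] using h k hk

lemma irrational_of_weyl
    (h : ∀ k : ℕ, 1 ≤ k → Tendsto (fun N : ℕ ↦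
      ‖∑ j ∈ Finset.range N, weylExp k q x j‖ / (N : ℝ)) atTop (𝓝 0)) :
    Irrational x := by
  rintro ⟨r, rfl⟩
  have weylExp_eq_one (j : ℕ) : weylExp r.den q r j = 1 := by
    rw [weylExp, Complex.exp_eq_one_iff]
    refine ⟨r.num * q ^ j, ?_⟩
    have num_eq : (r.num : ℂ) = r.den * (r : ℂ) := mod_cast (Rat.den_mul_eq_num r).symm
    push_cast
    rw [num_eq]
    ring
  have tendsto_one : Tendsto (fun N : ℕ ↦
      ‖∑ j ∈ Finset.range N, weylExp r.den q r j‖ / (N : ℝ)) atTop (𝓝 1) := by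
    refine tendsto_const_nhds.congr' ?_
    filter_upwards [eventually_ne_atTop 0] with N hN
    simp [weylExp_eq_one, hN]
  exact zero_ne_one (tendsto_nhds_unique (h r.den r.den_pos) tendsto_one)

end Normality

/-! ### Existence of the self-similar measure -/

/-- The sequence `i, b 0, b 1, …`. -/
def seqCons {ι : Type*} (i : ι) (b : ℕ → ι) : ℕ → ι
  | 0 => i
  | n + 1 => b n

lemma seqCons_eta {ι : Type*} (b : ℕ → ι) : seqCons (b 0) (fun n ↦ b (n + 1)) = b := by
  ext n
  cases n <;> rfl

lemma preimage_seqCons_pi {ι : Type*} (s : Finset ℕ) (t : ℕ → Set ι) :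
    (fun p : ι × (ℕ → ι) ↦ seqCons p.1 p.2) ⁻¹' (s : Set ℕ).pi t =
      (if 0 ∈ s then t 0 else Set.univ) ×ˢ
        (s.preimage Nat.succ Nat.succ_injective.injOn : Set ℕ).pi fun n ↦ t (n + 1) := by
  ext ⟨i, b⟩
  have forall_iff (p : ℕ → Prop) : (∀ n, p n) ↔ p 0 ∧ ∀ n, p (n + 1) := Nat.and_forall_add_one.symm
  simp only [Set.mem_preimage, Set.mem_pi, Finset.mem_coe, Set.mem_prod, Finset.mem_preimage]
  rw [forall_iff]
  refine and_congr ?_ .rfl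
  split_ifs with h <;> simp [h, seqCons]

section Bernoulli
variable {ι : Type*} [MeasurableSpace ι]

lemma measurable_seqCons : Measurable fun p : ι × (ℕ → ι) ↦ seqCons p.1 p.2 := by
  rw [measurable_pi_iff]
  rintro (_ | n)
  · exact measurable_fst
  · exact (measurable_pi_apply n).comp measurable_snd

lemma measurable_seqCons_right (i : ι) : Measurable (seqCons i) :=
  measurable_seqCons.comp measurable_prodMk_left

lemma map_seqCons_prod_infinitePi (μ : Measure ι) [IsProbabilityMeasure μ] :
    (μ.prod (Measure.infinitePi fun _ : ℕ ↦ μ)).map (fun p ↦ seqCons p.1 p.2) =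
      Measure.infinitePi fun _ : ℕ ↦ μ := by
  refine Measure.eq_infinitePi _ fun s t ht ↦ ?_
  rw [Measure.map_apply measurable_seqCons (.pi s.countable_toSet fun n _ ↦ ht n),
    preimage_seqCons_pi, Measure.prod_prod, Measure.infinitePi_pi _ fun n _ ↦ ht (n + 1)]
  have prod_succ : ∏ n ∈ s.preimage Nat.succ Nat.succ_injective.injOn, μ (t (n + 1)) =
      ∏ n ∈ s.erase 0, μ (t n) := by
    rw [Finset.prod_preimage' _ _ _ fun n ↦ μ (t n)]
    congr 1
    ext n
    cases n <;> simp
  rw [prod_succ]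
  split_ifs with h
  · exact Finset.mul_prod_erase s (fun n ↦ μ (t n)) h
  · rw [measure_univ, one_mul, Finset.erase_eq_of_notMem h]

lemma uniformOn_univ_eq_sum_dirac [Fintype ι] :
    ProbabilityTheory.uniformOn (Set.univ : Set ι) =
      (Fintype.card ι : ℝ≥0∞)⁻¹ • ∑ i, Measure.dirac i := by
  simp [ProbabilityTheory.uniformOn, ProbabilityTheory.cond, Measure.count]

variable (ι) in
/-- The law of an infinite sequence of independent uniformly distributed letters. -/
noncomputable def bernoulliMeasure : Measure (ℕ → ι) :=
  Measure.infinitePi fun _ ↦ ProbabilityTheory.uniformOn Set.univ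

variable [Nonempty ι] [MeasurableSingletonClass ι]

instance [Finite ι] : IsProbabilityMeasure (ProbabilityTheory.uniformOn (Set.univ : Set ι)) :=
  ProbabilityTheory.isProbabilityMeasure_uniformOn Set.finite_univ Set.univ_nonempty

instance [Finite ι] : IsProbabilityMeasure (bernoulliMeasure ι) := by
  unfold bernoulliMeasure
  infer_instance

variable [Fintype ι]

lemma bernoulliMeasure_eq_average :
    bernoulliMeasure ι =
      (Fintype.card ι : ℝ≥0∞)⁻¹ • ∑ i, (bernoulliMeasure ι).map (seqCons i) := by
  have map_dirac_prod (i : ι) : ((Measure.dirac i).prod (bernoulliMeasure ι)).map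
      (fun p ↦ seqCons p.1 p.2) = (bernoulliMeasure ι).map (seqCons i) := by
    rw [Measure.dirac_prod, Measure.map_map measurable_seqCons measurable_prodMk_left]
    rfl
  conv_lhs => rw [bernoulliMeasure, ← map_seqCons_prod_infinitePi, ← bernoulliMeasure,
    uniformOn_univ_eq_sum_dirac, Measure.prod_smul_left, Measure.map_smul, ← Measure.sum_fintype,
    Measure.prod_sum_left, Measure.map_sum measurable_seqCons.aemeasurable, Measure.sum_fintype]
  simp only [map_dirac_prod]

lemma map_bernoulliMeasure_eq_average {E : Type*} [MeasurableSpace E] {f : ι → E → E}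
    (hf : ∀ i, Measurable (f i)) {P : (ℕ → ι) → E} (hP : Measurable P)
    (hPf : ∀ i b, P (seqCons i b) = f i (P b)) :
    (bernoulliMeasure ι).map P =
      (Fintype.card ι : ℝ≥0∞)⁻¹ • ∑ i, ((bernoulliMeasure ι).map P).map (f i) := by
  have map_comp (i : ι) : ((bernoulliMeasure ι).map (seqCons i)).map P =
      ((bernoulliMeasure ι).map P).map (f i) := by
    rw [Measure.map_map hP (measurable_seqCons_right i),
      Measure.map_map (hf i) hP]
    exact congrArg (Measure.map · _) (funext (hPf i))
  conv_lhs => rw [bernoulliMeasure_eq_average, Measure.map_smul, ← Measure.sum_fintype,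
    Measure.map_sum hP.aemeasurable, Measure.sum_fintype]
  simp only [map_comp]

end Bernoulli

section CodingMap
variable {ι : Type*} [Fintype ι] {g : ι → Mat2} {X Y l c : ℝ}

/-- The `n`-th approximation of the point coded by a sequence of letters. -/
noncomputable def codingApprox (g : ι → Mat2) (n : ℕ) (b : ℕ → ι) : ℝ :=
  moebius (wordProd g fun j : Fin n ↦ b j) 0

/-- The point `g (b 0) (g (b 1) (⋯))` coded by the sequence of letters `b`. -/
noncomputable def codingMap (g : ι → Mat2) (b : ℕ → ι) : ℝ :=
  limUnder atTop fun n ↦ codingApprox g n b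

namespace IsSeparatedSystem

lemma codingApprox_mem_Icc (S : IsSeparatedSystem g X Y l c) (n : ℕ) (b : ℕ → ι) :
    codingApprox g n b ∈ Set.Icc (0 : ℝ) 1 :=
  ⟨(S.continuant_wordProd _).moebius_nonneg le_rfl,
    (S.continuant_wordProd _).moebius_le_one le_rfl zero_le_one⟩

lemma codingApprox_seqCons (S : IsSeparatedSystem g X Y l c) (n : ℕ) (i : ι) (b : ℕ → ι) :
    codingApprox g (n + 1) (seqCons i b) = moebius (g i) (codingApprox g n b) := by
  rw [codingApprox, codingApprox,
    ← (S.continuant i).moebius_mul (S.continuant_wordProd _) le_rfl, ← wordProd_cons]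
  congr 2
  ext j
  cases j using Fin.cases <;> rfl

lemma codingApprox_succ (S : IsSeparatedSystem g X Y l c) (n : ℕ) (b : ℕ → ι) :
    codingApprox g (n + 1) b = moebius (wordProd g fun j : Fin n ↦ b j) (moebius (g (b n)) 0) := by
  rw [codingApprox, ← (S.continuant_wordProd _).moebius_mul (S.continuant _) le_rfl,
    ← wordProd_snoc]
  congr 2
  ext j
  cases j using Fin.lastCases <;> simp

lemma dist_codingApprox_succ_le (S : IsSeparatedSystem g X Y l c) (n : ℕ) (b : ℕ → ι) :
    dist (codingApprox g n b) (codingApprox g (n + 1) b) ≤ 1 * (1 / 4) ^ n := by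
  have nonneg := (S.continuant (b n)).moebius_nonneg le_rfl
  have le_one := (S.continuant (b n)).moebius_le_one le_rfl zero_le_one
  have four_le : 4 ≤ X ^ 2 := by nlinarith [S.two_le.trans S.le]
  rw [S.codingApprox_succ, codingApprox, Real.dist_eq]
  calc _ ≤ |0 - moebius (g (b n)) 0| / X ^ (2 * n) :=
        S.abs_moebius_wordProd_sub_le _ le_rfl nonneg
    _ ≤ 1 / 4 ^ n := by
        rw [zero_sub, abs_neg, abs_of_nonneg nonneg, pow_mul]
        gcongr
    _ = _ := by simp

lemma tendsto_codingApprox (S : IsSeparatedSystem g X Y l c) (b : ℕ → ι) :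
    Tendsto (fun n ↦ codingApprox g n b) atTop (𝓝 (codingMap g b)) :=
  (cauchySeq_of_le_geometric (1 / 4) 1 (by norm_num)
    (S.dist_codingApprox_succ_le · b)).tendsto_limUnder

lemma codingMap_mem_Icc (S : IsSeparatedSystem g X Y l c) (b : ℕ → ι) :
    codingMap g b ∈ Set.Icc (0 : ℝ) 1 :=
  isClosed_Icc.mem_of_tendsto (S.tendsto_codingApprox b)
    (.of_forall (S.codingApprox_mem_Icc · b))

lemma codingMap_seqCons (S : IsSeparatedSystem g X Y l c) (i : ι) (b : ℕ → ι) :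
    codingMap g (seqCons i b) = moebius (g i) (codingMap g b) := by
  refine tendsto_nhds_unique ((tendsto_add_atTop_iff_nat 1).2 (S.tendsto_codingApprox _)) ?_
  simp only [S.codingApprox_seqCons]
  exact ((S.continuant i).hasDerivAt_moebius (S.codingMap_mem_Icc b).1).continuousAt.tendsto.comp
    (S.tendsto_codingApprox b)

lemma measurable_codingMap [MeasurableSpace ι] [DiscreteMeasurableSpace ι]
    (S : IsSeparatedSystem g X Y l c) : Measurable (codingMap g) := by
  refine measurable_of_tendsto_metrizable (fun n ↦ ?_) (tendsto_pi_nhds.2 S.tendsto_codingApprox)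
  have restrict_measurable : Measurable fun (b : ℕ → ι) (j : Fin n) ↦ b j :=
    measurable_pi_lambda _ fun j ↦ measurable_pi_apply _
  exact (measurable_of_countable fun w : Fin n → ι ↦ moebius (wordProd g w) 0).comp
    restrict_measurable

lemma exists_isSelfSimilarMeasure (S : IsSeparatedSystem g X Y l c)
    (hg : ∀ i, Set.MapsTo (moebius (g i)) (Set.Icc 0 1) (Set.Ioo 0 1)) :
    ∃ μ : Measure ℝ, IsSelfSimilarMeasure g μ := by
  let _ : MeasurableSpace ι := ⊤
  have : Nonempty ι := Fintype.card_pos_iff.1 (mod_cast S.card_pos)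
  have measurable := S.measurable_codingMap
  refine ⟨(bernoulliMeasure ι).map (codingMap g),
    Measure.isProbabilityMeasure_map measurable.aemeasurable, ?_,
    map_bernoulliMeasure_eq_average (fun i ↦ measurable_moebius (g i)) measurable
      S.codingMap_seqCons⟩
  refine (ae_map_iff measurable.aemeasurable measurableSet_Ioo).2 (.of_forall fun b ↦ ?_)
  rw [← seqCons_eta b, S.codingMap_seqCons]
  exact hg _ (S.codingMap_mem_Icc _)

end IsSeparatedSystem

end CodingMap

/-- `x` lies in `(0, 1)` and its first `n` partial quotients lie in `A`. -/
def HasPrefixIn (A : Set ℕ) (n : ℕ) (x : ℝ) : Prop :=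
  x ∈ Set.Ioo (0 : ℝ) 1 ∧ ∀ j < n, cfa j x ∈ A

lemma measurable_cfa (n : ℕ) : Measurable (cfa n) := by
  induction n with
  | zero => exact Nat.measurable_floor.comp measurable_inv
  | succ n ih => exact ih.comp (measurable_fract.comp measurable_inv)

lemma measurableSet_hasPrefixIn (A : Set ℕ) (n : ℕ) : MeasurableSet {x | HasPrefixIn A n x} := by
  have prefix_eq : {x | HasPrefixIn A n x} = Set.Ioo 0 1 ∩ ⋂ j, ⋂ (_ : j < n), cfa j ⁻¹' A := by
    ext x
    simp [HasPrefixIn]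
  rw [prefix_eq]
  exact measurableSet_Ioo.inter <| .iInter fun j ↦ .iInter fun _ ↦
    measurable_cfa j (Set.to_countable A).measurableSet

namespace IsSelfSimilarMeasure
variable {ι : Type*} [Fintype ι] {g : ι → Mat2} {μ : Measure ℝ}

lemma measure_eq_average (hμ : IsSelfSimilarMeasure g μ) {s : Set ℝ} (hs : MeasurableSet s) :
    μ s = (Fintype.card ι : ℝ≥0∞)⁻¹ * ∑ i, μ (moebius (g i) ⁻¹' s) := by
  conv_lhs => rw [hμ.eq_average]
  simp [Measure.map_apply (measurable_moebius _) hs]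

lemma ae_of_forall_moebius (hμ : IsSelfSimilarMeasure g μ) {P Q : ℝ → Prop}
    (hP : ∀ᵐ x ∂μ, P x) (hQ : MeasurableSet {x | Q x})
    (h : ∀ i y, P y → Q (moebius (g i) y)) : ∀ᵐ x ∂μ, Q x := by
  have preimage_null (i : ι) : μ (moebius (g i) ⁻¹' {x | Q x}ᶜ) = 0 :=
    hP.mono fun y hy ↦ h i y hy
  rw [ae_iff, ← Set.compl_ofPred, hμ.measure_eq_average hQ.compl]
  simp only [preimage_null, Finset.sum_const_zero, mul_zero]

lemma ae_hasPrefixIn (hμ : IsSelfSimilarMeasure g μ) {A : Set ℕ}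
    (hA : ∀ i n y, HasPrefixIn A n y → HasPrefixIn A (n + 1) (moebius (g i) y)) (n : ℕ) :
    ∀ᵐ x ∂μ, HasPrefixIn A n x := by
  induction n with
  | zero => exact hμ.ae_mem_Ioo.mono fun x hx ↦ ⟨hx, by simp⟩
  | succ n ih => exact hμ.ae_of_forall_moebius ih (measurableSet_hasPrefixIn A _) (hA · n)

end IsSelfSimilarMeasure

namespace IsSeparatedSystem
variable {ι : Type*} [Fintype ι] {g : ι → Mat2} {X Y l c : ℝ} {μ : Measure ℝ}

lemma eq_of_moebius_eq (S : IsSeparatedSystem g X Y l c) {i j : ι} {y z : ℝ}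
    (hy : y ∈ Set.Ioo (0 : ℝ) 1) (hz : z ∈ Set.Ioo (0 : ℝ) 1)
    (h : moebius (g i) y = moebius (g j) z) : i = j ∧ y = z := by
  obtain rfl : i = j := by
    by_contra hij
    exact S.disjoint i j y z hij hy.1 hy.2 hz.1 hz.2 h
  have hdet : 0 < (g i).det := by simp [S.det_eq_one]
  exact ⟨rfl, ((S.continuant i).strictMonoOn_moebius hdet).injOn hy.1.le hz.1.le h⟩

lemma sum_measure_preimage_singleton_le (S : IsSeparatedSystem g X Y l c)
    (hμ : IsSelfSimilarMeasure g μ) {r : ℝ≥0∞} (hr : ∀ x, μ {x} ≤ r) (x : ℝ) :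
    ∑ i, μ (moebius (g i) ⁻¹' {x}) ≤ r := by
  have measure_inter (s : Set ℝ) : μ s = μ (s ∩ Set.Ioo 0 1) :=
    (measure_inter_conull hμ.ae_mem_Ioo).symm
  simp only [measure_inter (moebius _ ⁻¹' {x})]
  by_cases hx : ∃ i, ∃ y ∈ Set.Ioo (0 : ℝ) 1, moebius (g i) y = x
  · obtain ⟨i, y, hy, rfl⟩ := hx
    rw [Finset.sum_eq_single i]
    · exact (measure_mono fun z hz ↦ (S.eq_of_moebius_eq hz.2 hy hz.1).2).trans (hr y)
    · intro j _ hji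
      refine measure_mono_null (fun z hz ↦ ?_) measure_empty
      exact hji (S.eq_of_moebius_eq hz.2 hy hz.1).1
    · simp
  · rw [Finset.sum_eq_zero]
    · exact bot_le
    · intro i _
      exact measure_mono_null (fun z hz ↦ hx ⟨i, z, hz.2, hz.1⟩) measure_empty

lemma measure_singleton_le_pow (S : IsSeparatedSystem g X Y l c) (hμ : IsSelfSimilarMeasure g μ)
    (n : ℕ) (x : ℝ) : μ {x} ≤ (Fintype.card ι : ℝ≥0∞)⁻¹ ^ n := by
  have := hμ.isProbabilityMeasure
  induction n generalizing x with
  | zero => simpa using prob_le_one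
  | succ n ih =>
    rw [hμ.measure_eq_average (measurableSet_singleton x), pow_succ']
    gcongr
    exact S.sum_measure_preimage_singleton_le hμ ih x

lemma one_lt_card (S : IsSeparatedSystem g X Y l c) : 1 < Fintype.card ι := by
  have : 1 * 1 ^ 10 < X * Y ^ 10 := by
    have := S.two_le
    have := S.le
    gcongr <;> linarith
  exact_mod_cast (by linarith [S.le_card] : (1 : ℝ) < Fintype.card ι)

lemma nullSingletonClass (S : IsSeparatedSystem g X Y l c) (hμ : IsSelfSimilarMeasure g μ) :
    NullSingletonClass μ where
  measure_singleton x := by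
    have hcard : (Fintype.card ι : ℝ≥0∞)⁻¹ < 1 := ENNReal.inv_lt_one.2 (mod_cast S.one_lt_card)
    exact le_bot_iff.1 (ge_of_tendsto' (ENNReal.tendsto_pow_atTop_nhds_zero_of_lt_one hcard)
      (S.measure_singleton_le_pow hμ · x))

lemma infinite_setOf_isNormal (S : IsSeparatedSystem g X Y l c)
    (hg : ∀ i, Set.MapsTo (moebius (g i)) (Set.Icc 0 1) (Set.Ioo 0 1)) {A : Set ℕ}
    (hA : ∀ i n y, HasPrefixIn A n y → HasPrefixIn A (n + 1) (moebius (g i) y)) :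
    {x : ℝ | x ∈ cfRestricted A ∧ ∀ q : ℕ, 2 ≤ q → IsNormal q x}.Infinite := by
  obtain ⟨μ, hμ⟩ := S.exists_isSelfSimilarMeasure hg
  have := hμ.isProbabilityMeasure
  have := S.nullSingletonClass hμ
  have ae_weyl : ∀ᵐ x ∂μ, ∀ k ≥ 1, ∀ q ≥ 2, Tendsto
      (fun N : ℕ ↦ ‖∑ j ∈ Finset.range N, weylExp k q x j‖ / (N : ℝ)) atTop (𝓝 0) := by
    simp only [ae_all_iff]
    exact fun k hk q hq ↦ (S.hasPolynomialFourierDecay hμ).ae_tendsto_weylSum hk hq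
  have ae_normal : ∀ᵐ x ∂μ, x ∈ cfRestricted A ∧ ∀ q : ℕ, 2 ≤ q → IsNormal q x := by
    filter_upwards [ae_weyl, ae_all_iff.2 (hμ.ae_hasPrefixIn hA)] with x hweyl hprefix
    refine ⟨⟨(hprefix 0).1, irrational_of_weyl fun k hk ↦ hweyl k hk 2 le_rfl,
      fun i ↦ (hprefix (i + 1)).2 i i.lt_succ_self⟩, fun q hq ↦ ?_⟩
    exact isNormal_of_weyl (by omega) (hprefix 0).1.1.le fun k hk ↦ hweyl k hk q hq
  intro hfinite
  have ae_not_normal := measure_eq_zero_iff_ae_notMem.1 (hfinite.measure_zero μ)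
  obtain ⟨x, hnormal, hnot⟩ := (ae_normal.and ae_not_normal).exists
  exact hnot hnormal

end IsSeparatedSystem

/-! ### Matrices of continued fractions -/

/-- The matrix of the inverse branch `y ↦ 1 / (a + y)` of the Gauss map. -/
noncomputable def digitMatrix (a : ℕ) : Mat2 := !![0, 1; 1, a]

section DigitMatrix
variable {a b K : ℕ} {l x y z : ℝ}

lemma isContinuant_digitMatrix (ha : 1 ≤ a) : IsContinuant (digitMatrix a) := by
  have : (1 : ℝ) ≤ a := mod_cast ha
  constructor <;> simp [digitMatrix] <;> linarith

lemma moebius_digitMatrix (a : ℕ) (y : ℝ) : moebius (digitMatrix a) y = 1 / (a + y) := by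
  simp [moebius, digitMatrix, add_comm]

lemma transpose_digitMatrix (a : ℕ) : (digitMatrix a).transpose = digitMatrix a := by
  ext i j
  fin_cases i <;> fin_cases j <;> simp [digitMatrix]

lemma one_div_natCast_add_mem_Ioo (ha : 1 ≤ a) (hy : 0 < y) :
    1 / (a + y) ∈ Set.Ioo (0 : ℝ) 1 := by
  have : (1 : ℝ) ≤ a := mod_cast ha
  refine ⟨by positivity, ?_⟩
  rw [div_lt_one] <;> linarith

lemma one_div_le_one_div_natCast_add (ha : 1 ≤ a) (haK : a ≤ K) (hy : y ∈ Set.Icc (0 : ℝ) 1) :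
    1 / ((K : ℝ) + 1) ≤ 1 / (a + y) := by
  have : (1 : ℝ) ≤ a := mod_cast ha
  have : (a : ℝ) ≤ K := mod_cast haK
  exact one_div_le_one_div_of_le (by linarith [hy.1]) (by linarith [hy.2])

lemma sq_mul_abs_sub_le_abs_one_div_sub (hl : 0 ≤ l) (hx : 0 < x) (hy : 0 < y)
    (hlx : l ≤ 1 / x) (hly : l ≤ 1 / y) : l ^ 2 * |x - y| ≤ |1 / x - 1 / y| := by
  have sub_eq : 1 / x - 1 / y = 1 / x * (1 / y) * (y - x) := by
    field_simp
  rw [sub_eq, abs_mul, abs_of_pos (by positivity : 0 < 1 / x * (1 / y)), abs_sub_comm x, sq]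
  gcongr

lemma le_abs_natCast_add_sub_of_ne (hab : a ≠ b) (hyz : |y - z| ≤ 1 - l) :
    l ≤ |a + y - (b + z)| := by
  have one_le : (1 : ℝ) ≤ |(a : ℝ) - b| := by
    have : 1 ≤ |(a : ℤ) - b| := Int.one_le_abs (by omega)
    exact_mod_cast this
  have triangle : |(a : ℝ) - b| ≤ |a + y - (b + z)| + |y - z| := by
    have sub_eq : (a : ℝ) - b = a + y - (b + z) - (y - z) := by ring
    rw [sub_eq]
    exact abs_sub _ _
  linarith

lemma natCast_add_inj (hy : y ∈ Set.Ico (0 : ℝ) 1) (hz : z ∈ Set.Ico (0 : ℝ) 1)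
    (h : (a : ℝ) + y = b + z) : a = b ∧ y = z := by
  have hfract := congrArg Int.fract h
  rw [Int.fract_natCast_add, Int.fract_natCast_add, Int.fract_eq_self.2 hy,
    Int.fract_eq_self.2 hz] at hfract
  exact ⟨mod_cast (by linarith : (a : ℝ) = b), hfract⟩

lemma cfa_zero_one_div_natCast_add (a : ℕ) (hy : y ∈ Set.Ico (0 : ℝ) 1) :
    cfa 0 (1 / (a + y)) = a := by
  rw [cfa, one_div, inv_inv, add_comm, Nat.floor_add_natCast hy.1, Nat.floor_eq_zero.2 hy.2,
    zero_add]

lemma gaussMap_one_div_natCast_add (a : ℕ) (hy : y ∈ Set.Ico (0 : ℝ) 1) :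
    gaussMap (1 / (a + y)) = y := by
  rw [gaussMap, one_div, inv_inv, Int.fract_natCast_add, Int.fract_eq_self.2 hy]

end DigitMatrix

namespace HasPrefixIn
variable {A : Set ℕ} {a m n : ℕ} {y : ℝ}

lemma mono (h : HasPrefixIn A n y) (hmn : m ≤ n) : HasPrefixIn A m y :=
  ⟨h.1, fun j hj ↦ h.2 j (hj.trans_le hmn)⟩

lemma one_div_add (h : HasPrefixIn A n y) (ha : 1 ≤ a) (haA : a ∈ A) :
    HasPrefixIn A (n + 1) (1 / (a + y)) := by
  have hy : y ∈ Set.Ico (0 : ℝ) 1 := Set.Ioo_subset_Ico_self h.1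
  refine ⟨one_div_natCast_add_mem_Ioo ha h.1.1, fun j hj ↦ ?_⟩
  cases j with
  | zero => rwa [cfa_zero_one_div_natCast_add a hy]
  | succ j =>
    rw [cfa, gaussMap_one_div_natCast_add a hy]
    exact h.2 j (by omega)

end HasPrefixIn

/-- The matrix `[[p', p], [q', q]]` of the last two convergents of `[0; w 0, w 1, …]`. -/
noncomputable def cfMatrix {A : Finset ℕ} {N : ℕ} (w : Fin N → A) : Mat2 :=
  wordProd (fun a : A ↦ digitMatrix a) w

section CfMatrix
variable {A : Finset ℕ} {N : ℕ} {y z : ℝ}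

lemma cfMatrix_cons (a : A) (w : Fin N → A) :
    cfMatrix (Fin.cons a w : Fin (N + 1) → A) = digitMatrix a * cfMatrix w :=
  wordProd_cons _ a w

lemma cfMatrix_snoc (w : Fin N → A) (a : A) :
    cfMatrix (Fin.snoc w a : Fin (N + 1) → A) = cfMatrix w * digitMatrix a :=
  wordProd_snoc _ w a

@[simp]
lemma cfMatrix_zero (w : Fin 0 → A) : cfMatrix w = 1 := wordProd_zero _ w

lemma isContinuant_cfMatrix (hA : ∀ a ∈ A, 1 ≤ a) (w : Fin N → A) : IsContinuant (cfMatrix w) :=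
  isContinuant_wordProd (fun a : A ↦ isContinuant_digitMatrix (hA a a.2)) w

lemma det_cfMatrix (w : Fin N → A) : (cfMatrix w).det = (-1) ^ N := by
  induction N with
  | zero => simp
  | succ N ih =>
    induction w using Fin.consCases with | _ a w
    rw [cfMatrix_cons, Matrix.det_mul, ih w, pow_succ']
    simp [digitMatrix, Matrix.det_fin_two]

lemma moebius_cfMatrix_cons (hA : ∀ a ∈ A, 1 ≤ a) (a : A) (w : Fin N → A) (hy : 0 ≤ y) :
    moebius (cfMatrix (Fin.cons a w : Fin (N + 1) → A)) y =
      1 / ((a : ℕ) + moebius (cfMatrix w) y) := by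
  rw [cfMatrix_cons, (isContinuant_digitMatrix (hA a a.2)).moebius_mul
    (isContinuant_cfMatrix hA w) hy, moebius_digitMatrix]

lemma moebius_cfMatrix_snoc (hA : ∀ a ∈ A, 1 ≤ a) (w : Fin N → A) (a : A) (hy : 0 ≤ y) :
    moebius (cfMatrix (Fin.snoc w a : Fin (N + 1) → A)) y =
      moebius (cfMatrix w) (1 / ((a : ℕ) + y)) := by
  rw [cfMatrix_snoc, (isContinuant_cfMatrix hA w).moebius_mul
    (isContinuant_digitMatrix (hA a a.2)) hy, moebius_digitMatrix]

lemma moebius_transpose_cfMatrix_snoc (hA : ∀ a ∈ A, 1 ≤ a) (w : Fin N → A) (a : A)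
    (hy : 0 ≤ y) : moebius (cfMatrix (Fin.snoc w a : Fin (N + 1) → A)).transpose y =
      1 / ((a : ℕ) + moebius (cfMatrix w).transpose y) := by
  rw [cfMatrix_snoc, Matrix.transpose_mul, transpose_digitMatrix,
    (isContinuant_digitMatrix (hA a a.2)).moebius_mul (isContinuant_cfMatrix hA w).transpose hy,
    moebius_digitMatrix]

lemma moebius_cfMatrix_mem_Icc (hA : ∀ a ∈ A, 1 ≤ a) (w : Fin N → A)
    (hy : y ∈ Set.Icc (0 : ℝ) 1) : moebius (cfMatrix w) y ∈ Set.Icc (0 : ℝ) 1 :=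
  ⟨(isContinuant_cfMatrix hA w).moebius_nonneg hy.1,
    (isContinuant_cfMatrix hA w).moebius_le_one hy.1 hy.2⟩

lemma moebius_transpose_cfMatrix_mem_Icc (hA : ∀ a ∈ A, 1 ≤ a) (w : Fin N → A)
    (hy : y ∈ Set.Icc (0 : ℝ) 1) : moebius (cfMatrix w).transpose y ∈ Set.Icc (0 : ℝ) 1 :=
  ⟨(isContinuant_cfMatrix hA w).transpose.moebius_nonneg hy.1,
    (isContinuant_cfMatrix hA w).transpose.moebius_le_one hy.1 hy.2⟩

lemma moebius_cfMatrix_mem_Ioo (hA : ∀ a ∈ A, 1 ≤ a) (w : Fin N → A)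
    (hy : y ∈ Set.Ioo (0 : ℝ) 1) : moebius (cfMatrix w) y ∈ Set.Ioo (0 : ℝ) 1 := by
  induction N with
  | zero => simpa using hy
  | succ N ih =>
    induction w using Fin.consCases with | _ a w
    rw [moebius_cfMatrix_cons hA _ _ hy.1.le]
    exact one_div_natCast_add_mem_Ioo (hA a a.2) (ih w).1

lemma mapsTo_moebius_cfMatrix (hA : ∀ a ∈ A, 1 ≤ a) (hN : 2 ≤ N) (w : Fin N → A) :
    Set.MapsTo (moebius (cfMatrix w)) (Set.Icc 0 1) (Set.Ioo 0 1) := by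
  intro y hy
  obtain ⟨N, rfl⟩ := Nat.exists_eq_add_of_le' hN
  induction w using Fin.consCases with | _ a w
  induction w using Fin.consCases with | _ b w
  rw [moebius_cfMatrix_cons hA _ _ hy.1, moebius_cfMatrix_cons hA _ _ hy.1]
  have hb : (1 : ℝ) ≤ (b : ℕ) := mod_cast hA b b.2
  have hw := (moebius_cfMatrix_mem_Icc hA w hy).1
  exact one_div_natCast_add_mem_Ioo (hA a a.2) (by positivity)

lemma eq_of_moebius_cfMatrix_eq (hA : ∀ a ∈ A, 1 ≤ a) (v w : Fin N → A)
    (hy : y ∈ Set.Ioo (0 : ℝ) 1) (hz : z ∈ Set.Ioo (0 : ℝ) 1)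
    (h : moebius (cfMatrix v) y = moebius (cfMatrix w) z) : v = w := by
  induction N with
  | zero => exact Subsingleton.elim v w
  | succ N ih =>
    induction v using Fin.consCases with | _ a v
    induction w using Fin.consCases with | _ b w
    rw [moebius_cfMatrix_cons hA _ _ hy.1.le, moebius_cfMatrix_cons hA _ _ hz.1.le, one_div,
      one_div, inv_inj] at h
    obtain ⟨hab, h⟩ := natCast_add_inj
      (Set.Ioo_subset_Ico_self (moebius_cfMatrix_mem_Ioo hA v hy))
      (Set.Ioo_subset_Ico_self (moebius_cfMatrix_mem_Ioo hA w hz)) h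
    rw [Subtype.ext hab, ih v w h]

lemma HasPrefixIn.moebius_cfMatrix (hA : ∀ a ∈ A, 1 ≤ a) (w : Fin N → A) {n : ℕ}
    (h : HasPrefixIn (A : Set ℕ) n y) :
    HasPrefixIn (A : Set ℕ) (n + N) (moebius (cfMatrix w) y) := by
  induction N with
  | zero => simpa using h
  | succ N ih =>
    induction w using Fin.consCases with | _ a w
    rw [moebius_cfMatrix_cons hA _ _ h.1.1.le]
    exact (ih w).one_div_add (hA a a.2) a.2

lemma two_pow_le_cfMatrix_one_one (hA : ∀ a ∈ A, 1 ≤ a) {m : ℕ} (w : Fin (2 * m) → A) :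
    2 ^ m ≤ cfMatrix w 1 1 := by
  induction m with
  | zero => simp
  | succ m ih =>
    change Fin (2 * m + 1 + 1) → A at w
    change 2 ^ (m + 1) ≤ cfMatrix (N := 2 * m + 1 + 1) w 1 1
    induction w using Fin.consCases with | _ a w
    induction w using Fin.consCases with | _ b w
    have ha : (1 : ℝ) ≤ (a : ℕ) := mod_cast hA a a.2
    have hb : (1 : ℝ) ≤ (b : ℕ) := mod_cast hA b b.2
    have hw := isContinuant_cfMatrix hA w
    calc (2 : ℝ) ^ (m + 1) = 2 * 2 ^ m := pow_succ' 2 m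
      _ ≤ 2 * cfMatrix w 1 1 := by gcongr; exact ih w
      _ ≤ (1 + (a : ℕ) * (b : ℕ)) * cfMatrix w 1 1 := by
        have := hw.pos₁₁
        gcongr
        nlinarith
      _ ≤ (a : ℕ) * cfMatrix w 0 1 + (1 + (a : ℕ) * (b : ℕ)) * cfMatrix w 1 1 :=
        le_add_of_nonneg_left (mul_nonneg (by positivity) hw.nonneg₀₁)
      _ = _ := by
        rw [cfMatrix_cons, cfMatrix_cons, ← mul_assoc]
        simp [digitMatrix, Matrix.mul_apply, Fin.sum_univ_two]

variable {K : ℕ}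

lemma cfMatrix_one_one_le_pow (hA : ∀ a ∈ A, 1 ≤ a) (hK : ∀ a ∈ A, a ≤ K) (w : Fin N → A) :
    cfMatrix w 1 1 ≤ (2 ^ K) ^ N := by
  refine wordProd_one_one_le_pow (fun a : A ↦ isContinuant_digitMatrix (hA a a.2)) (fun a ↦ ?_) w
  have : 2 * (a : ℕ) ≤ 2 ^ K := by
    obtain ⟨b, hb⟩ := Nat.exists_eq_add_of_le' (hA a a.2)
    calc 2 * (a : ℕ) ≤ 2 * 2 ^ b := by
          rw [hb]
          exact Nat.mul_le_mul_left 2 Nat.lt_two_pow_self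
      _ = 2 ^ (a : ℕ) := by rw [hb, pow_succ']
      _ ≤ 2 ^ K := Nat.pow_le_pow_right two_pos (hK a a.2)
  simpa [digitMatrix] using (mod_cast this : 2 * ((a : ℕ) : ℝ) ≤ 2 ^ K)

lemma one_div_le_moebius_transpose_cfMatrix (hA : ∀ a ∈ A, 1 ≤ a) (hK : ∀ a ∈ A, a ≤ K)
    (hN : 1 ≤ N) (w : Fin N → A) (hy : y ∈ Set.Icc (0 : ℝ) 1) :
    1 / ((K : ℝ) + 1) ≤ moebius (cfMatrix w).transpose y := by
  obtain ⟨N, rfl⟩ := Nat.exists_eq_add_of_le' hN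
  induction w using Fin.snocCases with | _ w a
  rw [moebius_transpose_cfMatrix_snoc hA _ _ hy.1]
  exact one_div_le_one_div_natCast_add (hA a a.2) (hK a a.2)
    (moebius_transpose_cfMatrix_mem_Icc hA w hy)

lemma abs_moebius_transpose_cfMatrix_sub_le (hA : ∀ a ∈ A, 1 ≤ a) (hK : ∀ a ∈ A, a ≤ K)
    (v w : Fin N → A) (hy : y ∈ Set.Icc (0 : ℝ) 1) (hz : z ∈ Set.Icc (0 : ℝ) 1)
    (hyz : |y - z| ≤ 1 - 1 / ((K : ℝ) + 1)) :
    |moebius (cfMatrix v).transpose y - moebius (cfMatrix w).transpose z| ≤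
      1 - 1 / ((K : ℝ) + 1) := by
  obtain rfl | hN := Nat.eq_zero_or_pos N
  · simpa using hyz
  · have hv := one_div_le_moebius_transpose_cfMatrix hA hK hN v hy
    have hw := one_div_le_moebius_transpose_cfMatrix hA hK hN w hz
    have hv' := (moebius_transpose_cfMatrix_mem_Icc hA v hy).2
    have hw' := (moebius_transpose_cfMatrix_mem_Icc hA w hz).2
    rw [abs_le]
    constructor <;> linarith

lemma pow_le_abs_moebius_transpose_cfMatrix_sub (hA : ∀ a ∈ A, 1 ≤ a) (hK : ∀ a ∈ A, a ≤ K)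
    {v w : Fin N → A} (hvw : v ≠ w) (hy : y ∈ Set.Icc (0 : ℝ) 1) (hz : z ∈ Set.Icc (0 : ℝ) 1)
    (hyz : |y - z| ≤ 1 - 1 / ((K : ℝ) + 1)) :
    (1 / ((K : ℝ) + 1)) ^ (2 * N + 1) ≤
      |moebius (cfMatrix v).transpose y - moebius (cfMatrix w).transpose z| := by
  induction N with
  | zero => exact absurd (Subsingleton.elim v w) hvw
  | succ N ih =>
    induction v using Fin.snocCases with | _ v a
    induction w using Fin.snocCases with | _ w b
    rw [moebius_transpose_cfMatrix_snoc hA _ _ hy.1, moebius_transpose_cfMatrix_snoc hA _ _ hz.1]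
    have hv := moebius_transpose_cfMatrix_mem_Icc hA v hy
    have hw := moebius_transpose_cfMatrix_mem_Icc hA w hz
    have hdist := abs_moebius_transpose_cfMatrix_sub_le hA hK v w hy hz hyz
    have ha : (1 : ℝ) ≤ (a : ℕ) := mod_cast hA a a.2
    have hb : (1 : ℝ) ≤ (b : ℕ) := mod_cast hA b b.2
    have denom_sub_ge : (1 / ((K : ℝ) + 1)) ^ (2 * N + 1) ≤
        |(a : ℕ) + moebius (cfMatrix v).transpose y -
          ((b : ℕ) + moebius (cfMatrix w).transpose z)| := by
      by_cases hab : a = b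
      · subst hab
        rw [add_sub_add_left_eq_sub]
        exact ih fun h ↦ hvw (by rw [h])
      · refine le_trans ?_ (le_abs_natCast_add_sub_of_ne (Subtype.coe_ne_coe.2 hab) hdist)
        refine pow_le_of_le_one (by positivity) ?_ (by omega)
        exact (div_le_one (by positivity)).2 (by simp)
    calc (1 / ((K : ℝ) + 1)) ^ (2 * (N + 1) + 1)
        = (1 / ((K : ℝ) + 1)) ^ 2 * (1 / ((K : ℝ) + 1)) ^ (2 * N + 1) := by ring
      _ ≤ _ := by
        refine (mul_le_mul_of_nonneg_left denom_sub_ge (by positivity)).trans ?_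
        exact sq_mul_abs_sub_le_abs_one_div_sub (by positivity) (by linarith [hv.1])
          (by linarith [hw.1]) (one_div_le_one_div_natCast_add (hA a a.2) (hK a a.2) hv)
          (one_div_le_one_div_natCast_add (hA b b.2) (hK b b.2) hw)

end CfMatrix

section Pigeonhole
variable {W : Type*} {q f : W → ℝ} {R c σ : ℝ} {r j L : ℕ}

lemma mul_pow_le_card_of_le_sum_rpow {B : Finset W} (hR : 1 ≤ R) (hσ : 0 < σ)
    (hrσ : 11 ≤ r * σ) (hrj : r ≤ j) (hRc : 2 ^ 10 * (L + 1) ≤ c * R) (hB : ∀ w ∈ B, R ^ j ≤ q w)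
    (h : c / (L + 1) ≤ ∑ w ∈ B, q w ^ (-(1 + σ))) : R ^ j * (2 * R) ^ 10 ≤ B.card := by
  have R_pos : 0 < R := one_pos.trans_le hR
  have sum_le : ∑ w ∈ B, q w ^ (-(1 + σ)) ≤ B.card * (R ^ j) ^ (-(1 + σ)) := by
    rw [← nsmul_eq_mul]
    exact Finset.sum_le_card_nsmul _ _ _ fun w hw ↦
      Real.rpow_le_rpow_of_nonpos (by positivity) (hB w hw) (by linarith)
  have pow_le_rpow : R ^ 11 ≤ (R ^ j) ^ σ := by
    rw [← Real.rpow_natCast, ← Real.rpow_natCast, ← Real.rpow_mul R_pos.le]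
    refine Real.rpow_le_rpow_of_exponent_le hR (hrσ.trans ?_)
    gcongr
  have rpow_neg_eq : (R ^ j) ^ (-(1 + σ)) * (R ^ j * (R ^ j) ^ σ) = 1 := by
    rw [Real.rpow_neg (by positivity), Real.rpow_one_add' (by positivity) (by positivity)]
    field_simp
  have two_pow_le : 2 ^ 10 ≤ c / (L + 1) * R := by
    rw [div_mul_eq_mul_div, le_div_iff₀ (by positivity)]
    exact hRc
  have : 0 ≤ c / (L + 1) := by
    by_contra! hneg
    nlinarith
  calc R ^ j * (2 * R) ^ 10 = 2 ^ 10 * (R ^ j * R ^ 10) := by ring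
    _ ≤ c / (L + 1) * R * (R ^ j * R ^ 10) := by gcongr
    _ = c / (L + 1) * (R ^ j * R ^ 11) := by ring
    _ ≤ B.card * (R ^ j) ^ (-(1 + σ)) * (R ^ j * (R ^ j) ^ σ) := by
      gcongr
      exact h.trans sum_le
    _ = B.card := by rw [mul_assoc, rpow_neg_eq, mul_one]

variable [Fintype W]

lemma exists_le_sum_filter_pow (hR : 1 < R) (hq : ∀ w, 1 ≤ q w) (hqL : ∀ w, q w ≤ R ^ L)
    (hf : c ≤ ∑ w, f w) :
    ∃ j : ℕ, c / (L + 1) ≤ ∑ w with R ^ j ≤ q w ∧ q w < R ^ (j + 1), f w := by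
  choose level level_le lt_level using fun w ↦ exists_nat_pow_near (hq w) hR
  have level_mem (w : W) : level w ∈ Finset.range (L + 1) :=
    Finset.mem_range_succ_iff.2 ((pow_le_pow_iff_right₀ hR).1 ((level_le w).trans (hqL w)))
  obtain ⟨j, -, hj⟩ := Finset.exists_le_sum_fiber_of_maps_to_of_nsmul_le_sum (b := c / (L + 1))
    (fun w _ ↦ level_mem w) Finset.nonempty_range_add_one (by
      rw [Finset.card_range, nsmul_eq_mul, Nat.cast_add_one]
      exact (mul_div_cancel₀ c (by positivity)).trans_le hf)
  have level_eq_iff (w : W) : level w = j ↔ R ^ j ≤ q w ∧ q w < R ^ (j + 1) := by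
    refine ⟨fun h ↦ h ▸ ⟨level_le w, lt_level w⟩, fun h ↦ ?_⟩
    have h₁ := (pow_lt_pow_iff_right₀ hR).1 ((level_le w).trans_lt h.2)
    have h₂ := (pow_lt_pow_iff_right₀ hR).1 (h.1.trans_lt (lt_level w))
    omega
  simp only [level_eq_iff] at hj
  exact ⟨j, hj⟩

lemma exists_finset_mul_pow_le_card (hR : 1 < R) (hσ : 0 < σ) (hrσ : 11 ≤ r * σ) (hc : 0 < c)
    (hRc : 2 ^ 10 * (L + 1) ≤ c * R) (hqr : ∀ w, R ^ r ≤ q w) (hqL : ∀ w, q w ≤ R ^ L)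
    (h : c ≤ ∑ w, q w ^ (-(1 + σ))) :
    ∃ j ≥ r, ∃ B : Finset W, (∀ w ∈ B, R ^ j ≤ q w ∧ q w < R ^ (j + 1)) ∧
      R ^ j * (2 * R) ^ 10 ≤ B.card := by
  obtain ⟨j, hj⟩ := exists_le_sum_filter_pow hR
    (fun w ↦ (one_le_pow₀ hR.le).trans (hqr w)) hqL h
  obtain ⟨w, hw⟩ := Finset.nonempty_of_sum_ne_zero
    (lt_of_lt_of_le (by positivity : 0 < c / (L + 1)) hj).ne'
  rw [Finset.mem_filter_univ] at hw
  have hrj : r ≤ j := Nat.lt_succ_iff.1 ((pow_lt_pow_iff_right₀ hR).1 ((hqr w).trans_lt hw.2))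
  exact ⟨j, hrj, _, fun w hw ↦ (Finset.mem_filter_univ w).1 hw, mul_pow_le_card_of_le_sum_rpow
    hR.le hσ hrσ hrj hRc (fun w hw ↦ ((Finset.mem_filter_univ w).1 hw).1) hj⟩

end Pigeonhole

section SeparatedWords
variable {A : Finset ℕ} {N : ℕ} {X Y : ℝ}

lemma isSeparatedSystem_cfMatrix (hA : ∀ a ∈ A, 1 ≤ a) {K : ℕ} (hK : ∀ a ∈ A, a ≤ K)
    (hN : 1 ≤ N) (hN_even : Even N) {B : Finset (Fin N → A)} (hXB : ∀ w ∈ B, X ≤ cfMatrix w 1 1)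
    (hBY : ∀ w ∈ B, 2 * cfMatrix w 1 1 ≤ X * Y) (hY : 2 ≤ Y) (hYX : Y ≤ X)
    (hcard : X * Y ^ 10 ≤ B.card) :
    IsSeparatedSystem (fun w : B ↦ cfMatrix w.1) X Y (1 / ((K : ℝ) + 1))
      ((1 / ((K : ℝ) + 1)) ^ (2 * N + 1)) where
  continuant w := isContinuant_cfMatrix hA w.1
  det_eq_one w := by rw [det_cfMatrix, hN_even.neg_one_pow]
  le_denom w := hXB w w.2
  denom_le w := hBY w w.2
  two_le := hY
  le := hYX
  le_card := by rwa [Fintype.card_coe]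
  c_pos := by positivity
  l_le_one := (div_le_one (by positivity)).2 (by simp)
  l_le w s hs hs1 := one_div_le_moebius_transpose_cfMatrix hA hK hN w.1 ⟨hs, hs1⟩
  separated v w s s' hvw hs hs1 hs' hs1' hss' := pow_le_abs_moebius_transpose_cfMatrix_sub hA hK
    (Subtype.coe_ne_coe.2 hvw) ⟨hs, hs1⟩ ⟨hs', hs1'⟩ hss'
  disjoint v w y y' hvw hy hy1 hy' hy1' h :=
    hvw (Subtype.ext (eq_of_moebius_cfMatrix_eq hA v.1 w.1 ⟨hy, hy1⟩ ⟨hy', hy1'⟩ h))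

lemma infinite_setOf_isNormal_of_mul_pow_le_card (hA : ∀ a ∈ A, 1 ≤ a) (hN : 2 ≤ N)
    (hN_even : Even N) {B : Finset (Fin N → A)} (hXB : ∀ w ∈ B, X ≤ cfMatrix w 1 1)
    (hBY : ∀ w ∈ B, 2 * cfMatrix w 1 1 ≤ X * Y) (hY : 2 ≤ Y) (hYX : Y ≤ X)
    (hcard : X * Y ^ 10 ≤ B.card) :
    {x : ℝ | x ∈ cfRestricted (A : Set ℕ) ∧ ∀ q : ℕ, 2 ≤ q → IsNormal q x}.Infinite := by
  have hK (a : ℕ) (ha : a ∈ A) : a ≤ A.sup id := Finset.le_sup (f := id) ha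
  exact (isSeparatedSystem_cfMatrix hA hK (by omega) hN_even hXB hBY hY hYX
    hcard).infinite_setOf_isNormal (fun w ↦ mapsTo_moebius_cfMatrix hA hN w.1)
    fun w n y h ↦ (h.moebius_cfMatrix hA w.1).mono (by omega)

end SeparatedWords

/-- The sum of `q ^ (-s)` over the denominators `q` of the fractions `[0; w 0, …, w (N - 1)]` with
digits in `A`, which governs the Hausdorff dimension of `cfRestricted A`. -/
noncomputable def denomSum (A : Finset ℕ) (N : ℕ) (s : ℝ) : ℝ :=
  ∑ w : Fin N → A, cfMatrix w 1 1 ^ (-s)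

lemma infinite_setOf_isNormal_of_le_denomSum {A : Finset ℕ} (hA : ∀ a ∈ A, 1 ≤ a) {σ c : ℝ}
    (hσ : 0 < σ) (hc : 0 < c) (h : ∀ᶠ m : ℕ in atTop, c ≤ denomSum A (2 * m) (1 + σ)) :
    {x : ℝ | x ∈ cfRestricted (A : Set ℕ) ∧ ∀ q : ℕ, 2 ≤ q → IsNormal q x}.Infinite := by
  set K := A.sup id
  have hK (a : ℕ) (ha : a ∈ A) : a ≤ K := Finset.le_sup (f := id) ha
  obtain ⟨r, hr⟩ := exists_nat_ge (max 2 (11 / σ))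
  have two_le_r : 2 ≤ r := by
    have : (2 : ℝ) ≤ r := (le_max_left _ _).trans hr
    exact_mod_cast this
  have hrσ : 11 ≤ r * σ := (div_le_iff₀ hσ).1 ((le_max_right _ _).trans hr)
  set L := 2 * r * K
  have tendsto_mul : Tendsto (fun n : ℕ ↦ r * n) atTop atTop :=
    tendsto_id.const_mul_atTop' (by omega)
  have tendsto_two_pow : Tendsto (fun n : ℕ ↦ c * 2 ^ n) atTop atTop :=
    (tendsto_pow_atTop_atTop_of_one_lt one_lt_two).const_mul_atTop hc
  obtain ⟨n, hn, hsum, hnL⟩ := ((eventually_ge_atTop 1).and ((tendsto_mul.eventually h).and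
    (tendsto_two_pow.eventually_ge_atTop (2 ^ 10 * ((L : ℝ) + 1))))).exists
  have hn_mul : n ≤ r * n := Nat.le_mul_of_pos_left n (by omega)
  have hR : (2 : ℝ) ≤ 2 ^ n := by simpa using pow_le_pow_right₀ (one_le_two (α := ℝ)) hn
  obtain ⟨j, hrj, B, hB, hcard⟩ := exists_finset_mul_pow_le_card
    (q := fun w : Fin (2 * (r * n)) → A ↦ cfMatrix w 1 1) (by linarith) hσ hrσ hc hnL
    (fun w ↦ by
      rw [← pow_mul, mul_comm n r]
      exact two_pow_le_cfMatrix_one_one hA w)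
    (fun w ↦ (cfMatrix_one_one_le_pow hA hK w).trans_eq (by
      rw [← pow_mul, ← pow_mul]
      congr 1
      ring)) hsum
  refine infinite_setOf_isNormal_of_mul_pow_le_card hA (by omega) (even_two_mul _)
    (fun w hw ↦ (hB w hw).1) (fun w hw ↦ ?_) (by linarith) ?_ hcard
  · have := (hB w hw).2
    rw [pow_succ] at this
    linarith
  · calc 2 * (2 : ℝ) ^ n ≤ 2 ^ n * 2 ^ n := by gcongr
      _ = (2 ^ n) ^ 2 := (sq _).symm
      _ ≤ (2 ^ n) ^ j := pow_le_pow_right₀ (by linarith) (two_le_r.trans hrj)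

/-! ### Lower bounds for the sums over denominators -/

section Transfer
variable {A : Finset ℕ} {N : ℕ} {s x : ℝ} {f : ℝ → ℝ}

lemma one_div_natCast_add_mem_Icc {a : ℕ} (ha : 1 ≤ a) (hx : 0 ≤ x) :
    1 / (a + x) ∈ Set.Icc (0 : ℝ) 1 := by
  have : (1 : ℝ) ≤ a := mod_cast ha
  exact ⟨by positivity, (div_le_one (by linarith)).2 (by linarith)⟩

lemma cfMatrix_snoc_denom (hA : ∀ a ∈ A, 1 ≤ a) (w : Fin N → A) (a : A) (hx : 0 ≤ x) :
    cfMatrix (Fin.snoc w a : Fin (N + 1) → A) 1 0 * x +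
        cfMatrix (Fin.snoc w a : Fin (N + 1) → A) 1 1 =
      ((a : ℕ) + x) * (cfMatrix w 1 0 * (1 / ((a : ℕ) + x)) + cfMatrix w 1 1) := by
  have : (1 : ℝ) ≤ (a : ℕ) := mod_cast hA a a.2
  have : (a : ℕ) + x ≠ 0 := by positivity
  rw [cfMatrix_snoc]
  simp only [digitMatrix, Matrix.mul_apply, Fin.sum_univ_two, Matrix.of_apply, Matrix.cons_val]
  field_simp
  ring

lemma le_sum_rpow_mul_moebius_cfMatrix (hA : ∀ a ∈ A, 1 ≤ a)
    (hf : ∀ x ∈ Set.Icc (0 : ℝ) 1,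
      f x ≤ ∑ a : A, ((a : ℕ) + x) ^ (-s) * f (1 / ((a : ℕ) + x)))
    (N : ℕ) (hx : x ∈ Set.Icc (0 : ℝ) 1) :
    f x ≤ ∑ w : Fin N → A,
      (cfMatrix w 1 0 * x + cfMatrix w 1 1) ^ (-s) * f (moebius (cfMatrix w) x) := by
  induction N generalizing x with
  | zero => simp
  | succ N ih =>
    rw [sum_word_snoc]
    refine (hf x hx).trans (Finset.sum_le_sum fun a _ ↦ ?_)
    have hax : 0 ≤ (a : ℕ) + x := add_nonneg (Nat.cast_nonneg _) hx.1
    have hy := one_div_natCast_add_mem_Icc (hA a a.2) hx.1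
    refine (mul_le_mul_of_nonneg_left (ih hy) (Real.rpow_nonneg hax (-s))).trans_eq ?_
    rw [Finset.mul_sum]
    refine Finset.sum_congr rfl fun w _ ↦ ?_
    rw [cfMatrix_snoc_denom hA w a hx.1, moebius_cfMatrix_snoc hA w a hx.1,
      Real.mul_rpow hax ((isContinuant_cfMatrix hA w).denom_pos hy.1).le, mul_assoc]

lemma one_le_denomSum_of_antitoneOn (hA : ∀ a ∈ A, 1 ≤ a) (hf_zero : 0 < f 0)
    (hf_anti : AntitoneOn f (Set.Ici 0))
    (hf : ∀ x ∈ Set.Icc (0 : ℝ) 1,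
      f x ≤ ∑ a : A, ((a : ℕ) + x) ^ (-s) * f (1 / ((a : ℕ) + x)))
    (N : ℕ) : 1 ≤ denomSum A N s := by
  refine (le_mul_iff_one_le_left hf_zero).1
    ((le_sum_rpow_mul_moebius_cfMatrix hA hf N ⟨le_rfl, zero_le_one⟩).trans ?_)
  rw [denomSum, Finset.sum_mul]
  refine Finset.sum_le_sum fun w _ ↦ ?_
  have hw := isContinuant_cfMatrix hA w
  have moebius_nonneg := hw.moebius_nonneg le_rfl
  rw [mul_zero, zero_add]
  exact mul_le_mul_of_nonneg_left
    (hf_anti Set.self_mem_Ici (Set.mem_Ici.2 moebius_nonneg) moebius_nonneg)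
    (Real.rpow_nonneg hw.pos₁₁.le _)

end Transfer

lemma three_rpow_one_div_fifty_le : (3 : ℝ) ^ (1 / 50 : ℝ) ≤ 1.03 := by
  rw [one_div, Real.rpow_inv_le_iff_of_pos (by norm_num) (by norm_num) (by norm_num)]
  norm_num

lemma one_div_mul_le_rpow_neg_mul {z : ℝ} (hz : 0 < z) (hz3 : z ≤ 3) :
    1 / (1.03 * (1 + 1.8 * z)) ≤ z ^ (-(1 + 1 / 50) : ℝ) * (1 / (1 / z + 1.8)) := by
  have hz_rpow : z ^ (1 / 50 : ℝ) ≤ 1.03 :=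
    (Real.rpow_le_rpow hz.le hz3 (by norm_num)).trans three_rpow_one_div_fifty_le
  have := Real.rpow_pos_of_pos hz (1 / 50)
  calc 1 / (1.03 * (1 + 1.8 * z)) ≤ 1 / (z ^ (1 / 50 : ℝ) * (1 + 1.8 * z)) := by gcongr
    _ = z ^ (-(1 + 1 / 50) : ℝ) * (1 / (1 / z + 1.8)) := by
      rw [Real.rpow_neg hz.le, Real.rpow_add hz, Real.rpow_one]
      field_simp

/- At exponent `1` the transfer operator of the digits `1, 2` sends `f x = 1 / (x + c)` to
`1 / (1 + c (1 + x)) + 1 / (1 + c (2 + x))`; with `c = 1.8` this exceeds `f` on `[0, 1]` by a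
factor greater than `3 ^ (1 / 50)`, which pays for raising the exponent by `1 / 50`. -/
lemma one_le_denomSum_one_two (N : ℕ) : 1 ≤ denomSum {1, 2} N (1 + 1 / 50) := by
  refine one_le_denomSum_of_antitoneOn (f := fun x ↦ 1 / (x + 1.8)) (by decide) (by norm_num)
    (fun x hx y _ hxy ↦ ?_) (fun x hx ↦ ?_) N
  · rw [Set.mem_Ici] at hx
    exact one_div_le_one_div_of_le (by positivity) (by gcongr)
  · obtain ⟨hx0, hx1⟩ := hx
    rw [Finset.sum_coe_sort {1, 2} fun a : ℕ ↦
      ((a : ℝ) + x) ^ (-(1 + 1 / 50) : ℝ) * (1 / (1 / ((a : ℝ) + x) + 1.8)),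
      Finset.sum_pair (by norm_num)]
    refine le_trans ?_ (add_le_add
      (one_div_mul_le_rpow_neg_mul (by push_cast; linarith) (by push_cast; linarith))
      (one_div_mul_le_rpow_neg_mul (by push_cast; linarith) (by push_cast; linarith)))
    push_cast
    rw [div_add_div _ _ (by positivity) (by positivity), div_le_div_iff₀ (by positivity)
      (by positivity)]
    nlinarith

lemma exists_eq_one_div_add_of_mem_cfRestricted {A : Set ℕ} {x : ℝ} (hx : x ∈ cfRestricted A) :
    ∃ a ∈ A, ∃ y ∈ cfRestricted A, x = 1 / (a + y) := by
  obtain ⟨⟨x_pos, -⟩, hirr, hcfa⟩ := hx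
  have gaussMap_irrational : Irrational (gaussMap x) := hirr.inv.sub_intCast _
  have gaussMap_mem : gaussMap x ∈ Set.Ioo (0 : ℝ) 1 :=
    ⟨(Int.fract_nonneg _).lt_of_ne' gaussMap_irrational.ne_zero, Int.fract_lt_one _⟩
  refine ⟨cfa 0 x, hcfa 0, gaussMap x,
    ⟨gaussMap_mem, gaussMap_irrational, fun i ↦ hcfa (i + 1)⟩, ?_⟩
  have cfa_add_gaussMap : (cfa 0 x : ℝ) + gaussMap x = x⁻¹ := by
    rw [cfa, gaussMap, natCast_floor_eq_intCast_floor (by positivity)]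
    exact Int.floor_add_fract _
  rw [cfa_add_gaussMap, one_div, inv_inv]

section Dimension
variable {A : Finset ℕ} {N : ℕ}

lemma exists_eq_moebius_cfMatrix_of_mem_cfRestricted (hA : ∀ a ∈ A, 1 ≤ a) (N : ℕ) {x : ℝ}
    (hx : x ∈ cfRestricted (A : Set ℕ)) :
    ∃ w : Fin N → A, ∃ y ∈ cfRestricted (A : Set ℕ), x = moebius (cfMatrix w) y := by
  induction N generalizing x with
  | zero => exact ⟨Fin.elim0, x, hx, by simp⟩
  | succ N ih =>
    obtain ⟨a, ha, y, hy, rfl⟩ := exists_eq_one_div_add_of_mem_cfRestricted hx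
    obtain ⟨w, z, hz, rfl⟩ := ih hy
    exact ⟨Fin.cons ⟨a, ha⟩ w, z, hz, (moebius_cfMatrix_cons hA ⟨a, ha⟩ w hz.1.1.le).symm⟩

lemma ediam_moebius_cfMatrix_image_le (hA : ∀ a ∈ A, 1 ≤ a) (w : Fin N → A) :
    Metric.ediam (moebius (cfMatrix w) '' Set.Icc 0 1) ≤
      ENNReal.ofReal (cfMatrix w 1 1 ^ (-2 : ℝ)) := by
  refine Metric.ediam_le ?_
  rintro _ ⟨y, hy, rfl⟩ _ ⟨z, hz, rfl⟩
  rw [edist_dist, Real.dist_eq]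
  refine ENNReal.ofReal_le_ofReal ?_
  have hw := isContinuant_cfMatrix hA w
  have hw_pos := hw.pos₁₁
  have hyz : |y - z| ≤ 1 := by
    rw [abs_le]
    constructor <;> linarith [hy.1, hy.2, hz.1, hz.2]
  rw [hw.moebius_sub hy.1 hz.1, abs_div, abs_mul, det_cfMatrix, abs_neg_one_pow, one_mul,
    abs_of_pos (mul_pos (hw.denom_pos hy.1) (hw.denom_pos hz.1)), Real.rpow_neg hw_pos.le,
    Real.rpow_two, sq, ← one_div]
  have := (hw.denom_pos hy.1).le
  gcongr
  · exact hw.le_denom hy.1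
  · exact hw.le_denom hz.1

lemma cfMatrix_one_one_rpow_neg_two_le (hA : ∀ a ∈ A, 1 ≤ a) {m : ℕ} (w : Fin (2 * m) → A) :
    cfMatrix w 1 1 ^ (-2 : ℝ) ≤ (1 / 4) ^ m := by
  have two_pow_le := two_pow_le_cfMatrix_one_one hA w
  rw [Real.rpow_neg (isContinuant_cfMatrix hA w).pos₁₁.le, Real.rpow_two, one_div, inv_pow]
  gcongr
  calc (4 : ℝ) ^ m = (2 ^ m) ^ 2 := by rw [← pow_mul, mul_comm, pow_mul]; norm_num
    _ ≤ cfMatrix w 1 1 ^ 2 := by gcongr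

lemma hausdorffMeasure_cfRestricted_le (hA : ∀ a ∈ A, 1 ≤ a) {d : ℝ} (hd : 0 ≤ d) :
    Measure.hausdorffMeasure d (cfRestricted (A : Set ℕ)) ≤
      liminf (fun m : ℕ ↦ ENNReal.ofReal (denomSum A (2 * m) (2 * d))) atTop := by
  have tendsto_mesh : Tendsto (fun m : ℕ ↦ ENNReal.ofReal ((1 / 4) ^ m)) atTop (𝓝 0) := by
    rw [← ENNReal.ofReal_zero]
    exact ENNReal.tendsto_ofReal
      (tendsto_pow_atTop_nhds_zero_of_lt_one (by norm_num) (by norm_num))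
  refine (Measure.hausdorffMeasure_le_liminf_sum d _ _ tendsto_mesh
    (fun m (w : Fin (2 * m) → A) ↦ moebius (cfMatrix w) '' Set.Icc 0 1)
    (Eventually.of_forall fun m w ↦ (ediam_moebius_cfMatrix_image_le hA w).trans
      (ENNReal.ofReal_le_ofReal (cfMatrix_one_one_rpow_neg_two_le hA w)))
    (Eventually.of_forall fun m x hx ↦ ?_)).trans
    (liminf_le_liminf (Eventually.of_forall fun m ↦ ?_))
  · obtain ⟨w, y, hy, rfl⟩ := exists_eq_moebius_cfMatrix_of_mem_cfRestricted hA (2 * m) hx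
    exact Set.mem_iUnion.2 ⟨w, y, Set.Ioo_subset_Icc_self hy.1, rfl⟩
  · have pos (w : Fin (2 * m) → A) : 0 < cfMatrix w 1 1 := (isContinuant_cfMatrix hA w).pos₁₁
    rw [denomSum, ENNReal.ofReal_sum_of_nonneg fun w _ ↦ Real.rpow_nonneg (pos w).le _]
    refine Finset.sum_le_sum fun w _ ↦
      (ENNReal.rpow_le_rpow (ediam_moebius_cfMatrix_image_le hA w) hd).trans_eq ?_
    rw [ENNReal.ofReal_rpow_of_pos (Real.rpow_pos_of_pos (pos w) _), ← Real.rpow_mul (pos w).le,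
      neg_mul]

lemma exists_eventually_one_le_denomSum (hA : ∀ a ∈ A, 1 ≤ a)
    (hdim : (1 / 2 : ℝ≥0∞) < dimH (cfRestricted (A : Set ℕ))) :
    ∃ σ : ℝ, 0 < σ ∧ ∀ᶠ m : ℕ in atTop, 1 ≤ denomSum A (2 * m) (1 + σ) := by
  obtain ⟨d, hd_half, hd⟩ := ENNReal.lt_iff_exists_nnreal_btwn.1 hdim
  have half_lt : (1 / 2 : ℝ) < d := by
    simpa using (ENNReal.toReal_lt_toReal (by simp) (by simp)).2 hd_half
  have liminf_eq_top := (hausdorffMeasure_of_lt_dimH hd).symm.trans_le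
    (hausdorffMeasure_cfRestricted_le hA d.coe_nonneg)
  refine ⟨2 * d - 1, by linarith, ?_⟩
  filter_upwards [eventually_lt_of_lt_liminf (ENNReal.one_lt_top.trans_le liminf_eq_top)] with m hm
  rw [add_sub_cancel]
  exact ENNReal.one_le_ofReal.1 hm.le

end Dimension

/-- If `𝒜` is a finite set of positive integers with `|𝒜| ≥ 2` and `dim_H F(𝒜) > 1/2`, then
`F(𝒜)` contains infinitely many numbers normal to every base `q ≥ 2`; in particular there are
infinitely many absolutely normal numbers whose partial quotients all lie in `{1, 2}`. -/
theorem normal_numbers_with_restricted_partial_quotients :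
    (∀ A : Finset ℕ, (∀ a ∈ A, 1 ≤ a) → 2 ≤ A.card →
      (1 / 2 : ℝ≥0∞) < dimH (cfRestricted (A : Set ℕ)) →
      {x : ℝ | x ∈ cfRestricted (A : Set ℕ) ∧ ∀ q : ℕ, 2 ≤ q → IsNormal q x}.Infinite) ∧
    {x : ℝ | x ∈ cfRestricted {1, 2} ∧ ∀ q : ℕ, 2 ≤ q → IsNormal q x}.Infinite := by
  constructor
  · intro A hA _ hdim
    obtain ⟨σ, hσ, hsum⟩ := exists_eventually_one_le_denomSum hA hdim
    exact infinite_setOf_isNormal_of_le_denomSum hA hσ one_pos hsum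
  · have hsum : ∀ᶠ m : ℕ in atTop, 1 ≤ denomSum {1, 2} (2 * m) (1 + 1 / 50) :=
      Eventually.of_forall fun m ↦ one_le_denomSum_one_two (2 * m)
    simpa using infinite_setOf_isNormal_of_le_denomSum (by decide) (by norm_num) one_pos hsum
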